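/- arXiv:1101.0182 — 2 statements merged into one kernel-verified Lean document; each statement's English description precedes it below -/
import Mathlib

section
/- There exists an absolute constant K such that the following holds. If p = p(n) > K·log(n)/n, then as n → ∞ through even integers, the randomly colored random graph G_{n,p,n} (with exactly n colors) contains a rainbow Hamilton cycle with high probability. -/
open MeasureTheory Filter

/-- The Bernoulli measure on `Bool` with success probability `p` (clamped into `[0,1]`;
for `0 ≤ p ≤ 1` this is the genuine Bernoulli measure). -/
noncomputable def bernoulliM (p : ℝ) : Measure Bool :=
  (PMF.bernoulli (min (Real.toNNReal p) 1) (min_le_right _ _)).toMeasure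

instance (p : ℝ) : IsProbabilityMeasure (bernoulliM p) := by
  unfold bernoulliM; infer_instance

/-- The uniform probability measure on a finite set (zero measure if the set is empty). -/
noncomputable def uniformOn {α : Type*} [MeasurableSpace α] (s : Finset α) : Measure α :=
  if h : s.Nonempty then (PMF.uniformOfFinset s h).toMeasure else 0

instance {α : Type*} [MeasurableSpace α] (s : Finset α) : SigmaFinite (uniformOn s) := by
  unfold uniformOn
  split
  · infer_instance
  · infer_instance

/-- The Erdős–Rényi random graph `G_{n,p}`: each unordered pair of vertices of `Fin n`
is independently present with probability `p`. -/
noncomputable def gnp (n : ℕ) (p : ℝ) : Measure (Sym2 (Fin n) → Bool) :=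
  Measure.pi fun _ => bernoulliM p

/-- Independent uniformly random colors from `Fin κ` on each potential edge. -/
noncomputable def colorM (n κ : ℕ) : Measure (Sym2 (Fin n) → Fin κ) :=
  Measure.pi fun _ => uniformOn (Finset.univ : Finset (Fin κ))

/-- The randomly colored random graph `G_{n,p,κ}`. -/
noncomputable def coloredGnp (n κ : ℕ) (p : ℝ) :
    Measure ((Sym2 (Fin n) → Bool) × (Sym2 (Fin n) → Fin κ)) :=
  (gnp n p).prod (colorM n κ)

/-- `ω, c` admit a rainbow Hamilton cycle: a cyclic ordering `f` of all `n` vertices such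
that each consecutive edge is present in `ω` and the colors of the `n` cycle edges are
pairwise distinct. -/
def IsRainbowHamCycle {n κ : ℕ} (ω : Sym2 (Fin n) → Bool) (c : Sym2 (Fin n) → Fin κ) : Prop :=
  ∃ f : ZMod n → Fin n, Function.Bijective f ∧
    (∀ i : ZMod n, ω s(f i, f (i + 1)) = true) ∧
    Function.Injective fun i : ZMod n => c s(f i, f (i + 1))


/-! ### Binomial random subsets -/

section Binom
variable {X : Type*} [DecidableEq X]

/-- expectation of `f` over a `w`-random subset of `s`. -/
noncomputable def rhE (s : Finset X) (w : ℝ) (f : Finset X → ℝ) : ℝ :=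
  ∑ W ∈ s.powerset, w ^ W.card * (1 - w) ^ (s \ W).card * f W

lemma rhE_empty (w : ℝ) (f : Finset X → ℝ) : rhE ∅ w f = f ∅ := by
  simp [rhE]

lemma rhE_insert {x : X} {s : Finset X} (hx : x ∉ s) (w : ℝ) (f : Finset X → ℝ) :
    rhE (insert x s) w f = (1 - w) * rhE s w f + w * rhE s w (fun W => f (insert x W)) := by
  unfold rhE
  rw [Finset.sum_powerset_insert hx, Finset.mul_sum, Finset.mul_sum]
  congr 1
  · apply Finset.sum_congr rfl
    intro W hW
    rw [Finset.mem_powerset] at hW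
    have hxW : x ∉ W := fun h => hx (hW h)
    rw [Finset.insert_sdiff_of_notMem _ hxW, Finset.card_insert_of_notMem (by simp [hx])]
    ring
  · apply Finset.sum_congr rfl
    intro W hW
    rw [Finset.mem_powerset] at hW
    have hxW : x ∉ W := fun h => hx (hW h)
    rw [Finset.card_insert_of_notMem hxW]
    have : insert x s \ insert x W = s \ W := by
      ext y; simp only [Finset.mem_sdiff, Finset.mem_insert]
      constructor
      · rintro ⟨h1, h2⟩; tauto
      · rintro ⟨h1, h2⟩
        refine ⟨Or.inr h1, ?_⟩
        rintro (rfl | h)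
        · exact hx h1
        · exact h2 h
    rw [this]; ring

lemma rhE_add (s : Finset X) (w : ℝ) (f g : Finset X → ℝ) :
    rhE s w (fun W => f W + g W) = rhE s w f + rhE s w g := by
  simp [rhE, mul_add, Finset.sum_add_distrib]

lemma rhE_smul (s : Finset X) (w c : ℝ) (f : Finset X → ℝ) :
    rhE s w (fun W => c * f W) = c * rhE s w f := by
  simp only [rhE, Finset.mul_sum]
  apply Finset.sum_congr rfl
  intros; ring

lemma rhE_sum {ι : Type*} (t : Finset ι) (s : Finset X) (w : ℝ) (f : ι → Finset X → ℝ) :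
    rhE s w (fun W => ∑ i ∈ t, f i W) = ∑ i ∈ t, rhE s w (f i) := by
  simp only [rhE, Finset.mul_sum]
  rw [Finset.sum_comm]

lemma rhE_mono (s : Finset X) {w : ℝ} (h0 : 0 ≤ w) (h1 : w ≤ 1) {f g : Finset X → ℝ}
    (h : ∀ W, f W ≤ g W) : rhE s w f ≤ rhE s w g := by
  unfold rhE
  apply Finset.sum_le_sum
  intro W _
  have : 0 ≤ 1 - w := by linarith
  exact mul_le_mul_of_nonneg_left (h W) (by positivity)

lemma rhE_const (s : Finset X) (w c : ℝ) : rhE s w (fun _ => c) = c := by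
  induction s using Finset.induction_on with
  | empty => simp [rhE_empty]
  | insert x s hx ih => rw [rhE_insert hx, ih]; ring

lemma rhE_union (s : Finset X) (w v : ℝ) (f : Finset X → ℝ) :
    rhE s w (fun W => rhE s v (fun V => f (W ∪ V))) = rhE s (w + v - w * v) f := by
  induction s using Finset.induction_on generalizing f with
  | empty => simp [rhE_empty]
  | insert x s hx ih =>
    rw [rhE_insert hx, rhE_insert hx]
    simp only [rhE_insert hx]
    rw [rhE_add, rhE_add, rhE_smul, rhE_smul, rhE_smul, rhE_smul]
    have h1 := ih f
    have h2 := ih (fun W => f (insert x W))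
    simp only [Finset.union_insert, Finset.insert_union, Finset.insert_idem]
    rw [h1, h2]
    ring

lemma rhE_mono_w (s : Finset X) {w w' : ℝ} (h0 : 0 ≤ w) (h1 : w ≤ w') (h2 : w' ≤ 1)
    {f : Finset X → ℝ} (hf : Monotone f) : rhE s w f ≤ rhE s w' f := by
  rcases eq_or_lt_of_le (h1.trans h2) with h | h
  · have : w = w' := by linarith
    rw [this]
  · have hpos : 0 < 1 - w := by linarith
    have hv : w' = w + (w' - w) / (1 - w) - w * ((w' - w) / (1 - w)) := by
      field_simp; ring
    rw [hv, ← rhE_union]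
    apply rhE_mono s h0 h.le
    intro W
    calc f W = rhE s ((w' - w) / (1 - w)) (fun _ => f W) := (rhE_const _ _ _).symm
      _ ≤ _ := by
        apply rhE_mono
        · apply div_nonneg <;> linarith
        · rw [div_le_one hpos]; linarith
        · intro V; exact hf Finset.subset_union_left

lemma rhE_disjUnion {s t : Finset X} (h : Disjoint s t) (w : ℝ) (f : Finset X → ℝ) :
    rhE (s ∪ t) w f = rhE t w (fun W => rhE s w (fun V => f (W ∪ V))) := by
  induction t using Finset.induction_on generalizing f with
  | empty => simp [rhE_empty]
  | insert x t hx ih =>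
    rw [Finset.disjoint_insert_right] at h
    rw [Finset.union_insert, rhE_insert (by simp [hx, h.1]), rhE_insert hx, ih h.2, ih h.2]
    simp [Finset.insert_union]

end Binom

/-! ### The Park–Pham argument -/

section PP
variable {X : Type*} [DecidableEq X] [Fintype X]

open Classical in
/-- indicator that `W` contains a member of `H` -/
noncomputable def rhInd (H : Finset (Finset X)) (W : Finset X) : ℝ :=
  if ∃ S ∈ H, S ⊆ W then 1 else 0

lemma rhInd_mono (H : Finset (Finset X)) : Monotone (rhInd H) := by
  intro A B hAB
  unfold rhInd
  split_ifs with h1 h2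
  · exact le_rfl
  · obtain ⟨S, hS, hSA⟩ := h1
    exact absurd ⟨S, hS, hSA.trans hAB⟩ h2
  · norm_num
  · exact le_rfl

lemma rhInd_nonneg (H : Finset (Finset X)) (W : Finset X) : 0 ≤ rhInd H W := by
  unfold rhInd; split_ifs <;> norm_num

/-- every cover of `H` has cost at least `a` -/
def rhCostly (q : ℝ) (H : Finset (Finset X)) (a : ℝ) : Prop :=
  ∀ 𝒢 : Finset (Finset X), (∀ S ∈ H, ∃ T ∈ 𝒢, T ⊆ S) → a ≤ ∑ T ∈ 𝒢, q ^ T.card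

def rhGood (X : Type*) [DecidableEq X] [Fintype X] (q : ℝ) (l : ℕ) (w err : ℝ) : Prop :=
  ∀ (H : Finset (Finset X)), (∀ S ∈ H, S.card ≤ l) → ∀ a, rhCostly q H a →
    a - err ≤ rhE Finset.univ w (rhInd H)

lemma rhGood_zero (q w : ℝ) (h0 : 0 ≤ w) (h1 : w ≤ 1) : rhGood X q 0 w 0 := by
  intro H hH a ha
  by_cases hne : H.Nonempty
  · obtain ⟨S, hS⟩ := hne
    have hS0 : S = ∅ := by simpa using hH S hS
    have h := ha {∅} (fun S _ => ⟨∅, by simp, by simp⟩)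
    have : rhInd H = fun _ => 1 := by
      funext W
      unfold rhInd
      rw [if_pos ⟨S, hS, by simp [hS0]⟩]
    rw [this, rhE_const]
    simpa using h
  · rw [Finset.not_nonempty_iff_eq_empty] at hne
    have h := ha ∅ (by simp [hne])
    have h2 : rhE (Finset.univ : Finset X) w (fun _ => 0) ≤ rhE Finset.univ w (rhInd H) :=
      rhE_mono _ h0 h1 (rhInd_nonneg H)
    rw [rhE_const] at h2
    simp at h
    linarith

lemma rhGood_mono {q : ℝ} {l : ℕ} {w w' err err' : ℝ} (h : rhGood X q l w err) (h0 : 0 ≤ w)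
    (h1 : w ≤ w') (h2 : w' ≤ 1) (he : err ≤ err') : rhGood X q l w' err' := by
  intro H hH a ha
  have := h H hH a ha
  have := rhE_mono_w (Finset.univ : Finset X) h0 h1 h2 (rhInd_mono H)
  linarith

open Classical in
/-- inclusion minimal members of `{S \ W : S ∈ H}` -/
noncomputable def rhMin (H : Finset (Finset X)) (W : Finset X) : Finset (Finset X) :=
  Finset.univ.filter (fun T => (∃ S ∈ H, S \ W = T) ∧ ∀ S ∈ H, S \ W ⊆ T → S \ W = T)

lemma rhMin_exists (H : Finset (Finset X)) (W S : Finset X) (hS : S ∈ H) :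
    ∃ T ∈ rhMin H W, T ⊆ S := by
  classical
  obtain ⟨T, hT, hmin⟩ := Finset.exists_min_image
    ((H.image (fun S => S \ W)).filter (fun T => T ⊆ S)) Finset.card
    ⟨S \ W, by
      simp only [Finset.mem_filter, Finset.mem_image]
      exact ⟨⟨S, hS, rfl⟩, Finset.sdiff_subset⟩⟩
  simp only [Finset.mem_filter, Finset.mem_image] at hT
  obtain ⟨⟨S', hS', rfl⟩, hTS⟩ := hT
  refine ⟨S' \ W, ?_, hTS⟩
  simp only [rhMin, Finset.mem_filter, Finset.mem_univ, true_and]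
  refine ⟨⟨S', hS', rfl⟩, ?_⟩
  intro S'' hS'' hsub
  apply Finset.eq_of_subset_of_card_le hsub
  apply hmin
  simp only [Finset.mem_filter, Finset.mem_image]
  exact ⟨⟨S'', hS'', rfl⟩, hsub.trans hTS⟩

open Classical in
/-- a chosen member of `H` inside `Z` (or `∅`) -/
noncomputable def rhSel (H : Finset (Finset X)) (Z : Finset X) : Finset X :=
  if h : ∃ S ∈ H, S ⊆ Z then h.choose else ∅

lemma rhSel_card (H : Finset (Finset X)) {l : ℕ} (hH : ∀ S ∈ H, S.card ≤ l) (Z : Finset X) :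
    (rhSel H Z).card ≤ l := by
  unfold rhSel
  split_ifs with h
  · exact hH _ h.choose_spec.1
  · simp

lemma rhMin_sub_sel (H : Finset (Finset X)) (W T : Finset X) (hT : T ∈ rhMin H W) :
    Disjoint W T ∧ T ⊆ rhSel H (W ∪ T) ∧ ∃ S ∈ H, S \ W = T := by
  classical
  simp only [rhMin, Finset.mem_filter, Finset.mem_univ, true_and] at hT
  obtain ⟨⟨S, hS, hST⟩, hmin⟩ := hT
  refine ⟨?_, ?_, S, hS, hST⟩
  · rw [← hST]; exact Finset.disjoint_sdiff
  · have h : ∃ S ∈ H, S ⊆ W ∪ T := by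
      refine ⟨S, hS, ?_⟩
      rw [← hST]
      intro x hx
      by_cases hxW : x ∈ W <;> simp [hx, hxW]
    have hsel : rhSel H (W ∪ T) = h.choose := by unfold rhSel; rw [dif_pos h]
    rw [hsel]
    have h1 := h.choose_spec.1
    have h2 := h.choose_spec.2
    have h3 : h.choose \ W = T := by
      apply hmin _ h1
      intro x hx
      rw [Finset.mem_sdiff] at hx
      have := h2 hx.1
      rw [Finset.mem_union] at this
      tauto
    calc T = h.choose \ W := h3.symm
      _ ⊆ _ := Finset.sdiff_subset

lemma rh_cost_bound (H : Finset (Finset X)) {l s : ℕ} (hH : ∀ S ∈ H, S.card ≤ l)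
    {q w B : ℝ} (hq : 0 ≤ q) (hw : 0 < w) (hw1 : w ≤ 1)
    (hB : ∀ S : Finset X, S.card ≤ l →
      ∑ T ∈ S.powerset with s < T.card, (q / w) ^ T.card ≤ B) :
    rhE Finset.univ w (fun W => ∑ T ∈ rhMin H W with s < T.card, q ^ T.card) ≤ B := by
  classical
  have h1w : 0 ≤ 1 - w := by linarith
  calc rhE Finset.univ w (fun W => ∑ T ∈ rhMin H W with s < T.card, q ^ T.card)
      = ∑ P ∈ (Finset.univ : Finset (Finset X)).sigma
          (fun W => (rhMin H W).filter (fun T => s < T.card)),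
          w ^ P.1.card * (1 - w) ^ (Finset.univ \ P.1).card * q ^ P.2.card := by
        rw [Finset.sum_sigma, rhE, Finset.powerset_univ]
        simp only [Finset.mul_sum]
    _ ≤ ∑ P ∈ (Finset.univ : Finset (Finset X)).sigma
          (fun W => (rhMin H W).filter (fun T => s < T.card)),
          w ^ (P.1 ∪ P.2).card * (1 - w) ^ (Finset.univ \ (P.1 ∪ P.2)).card
            * (q / w) ^ P.2.card := by
        apply Finset.sum_le_sum
        rintro ⟨W, T⟩ hP
        simp only [Finset.mem_sigma, Finset.mem_univ, true_and, Finset.mem_filter] at hP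
        obtain ⟨hT, _⟩ := hP
        have hd := (rhMin_sub_sel H W T hT).1
        dsimp only
        have e1 : (Finset.univ \ W).card = (Finset.univ \ (W ∪ T)).card + T.card := by
          rw [← Finset.card_union_of_disjoint]
          · congr 1
            ext x
            have : x ∈ T → x ∉ W := fun h h' => (Finset.disjoint_left.1 hd h') h
            simp only [Finset.mem_sdiff, Finset.mem_univ, true_and, Finset.mem_union]
            tauto
          · rw [Finset.disjoint_left]; intro x; simp +contextual
        rw [Finset.card_union_of_disjoint hd, e1, pow_add, pow_add, div_pow]
        have h3 : (1 - w) ^ T.card ≤ 1 := pow_le_one₀ h1w (by linarith)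
        have h4 : w ^ W.card * w ^ T.card * (1 - w) ^ (Finset.univ \ (W ∪ T)).card
            * (q ^ T.card / w ^ T.card)
            = (w ^ W.card * (1 - w) ^ (Finset.univ \ (W ∪ T)).card * q ^ T.card) * 1 := by
          field_simp
        rw [h4]
        calc _ = (w ^ W.card * (1 - w) ^ (Finset.univ \ (W ∪ T)).card * q ^ T.card)
                * (1 - w) ^ T.card := by ring
          _ ≤ _ := mul_le_mul_of_nonneg_left h3 (by positivity)
    _ ≤ ∑ P ∈ (Finset.univ : Finset (Finset X)).sigma
          (fun Z => ((rhSel H Z).powerset).filter (fun T => s < T.card)),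
          w ^ P.1.card * (1 - w) ^ (Finset.univ \ P.1).card * (q / w) ^ P.2.card := by
        have hinj : Set.InjOn (fun P : (Σ _ : Finset X, Finset X) =>
            (⟨P.1 ∪ P.2, P.2⟩ : (Σ _ : Finset X, Finset X)))
            ((Finset.univ : Finset (Finset X)).sigma
          (fun W => (rhMin H W).filter (fun T => s < T.card)) : Finset _) := by
          rintro ⟨W, T⟩ hP ⟨W', T'⟩ hP' heq
          simp only [Finset.coe_sigma, Set.mem_sigma_iff, Finset.coe_univ, Set.mem_univ,
            true_and, Finset.mem_coe, Finset.mem_filter] at hP hP'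
          have hd := (rhMin_sub_sel H W T hP.1).1
          have hd' := (rhMin_sub_sel H W' T' hP'.1).1
          simp only [Sigma.mk.injEq, heq_eq_eq] at heq
          obtain ⟨h1, rfl⟩ := heq
          have : W = W' := by
            rw [← Finset.union_sdiff_cancel_right hd, h1, Finset.union_sdiff_cancel_right hd']
          rw [this]
        rw [← Finset.sum_image (g := fun P : (Σ _ : Finset X, Finset X) =>
            (⟨P.1 ∪ P.2, P.2⟩ : (Σ _ : Finset X, Finset X)))
          (f := fun P => w ^ P.1.card * (1 - w) ^ (Finset.univ \ P.1).card * (q / w) ^ P.2.card)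
          hinj]
        apply Finset.sum_le_sum_of_subset_of_nonneg
        · intro P hP
          rw [Finset.mem_image] at hP
          obtain ⟨⟨W, T⟩, hP, rfl⟩ := hP
          simp only [Finset.mem_sigma, Finset.mem_univ, true_and, Finset.mem_filter,
            Finset.mem_powerset] at hP ⊢
          exact ⟨(rhMin_sub_sel H W T hP.1).2.1, hP.2⟩
        · intro P _ _
          have : 0 ≤ q / w := by positivity
          positivity
    _ = rhE Finset.univ w (fun Z => ∑ T ∈ (rhSel H Z).powerset with s < T.card,
          (q / w) ^ T.card) := by
        rw [Finset.sum_sigma, rhE, Finset.powerset_univ]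
        simp only [Finset.mul_sum]
    _ ≤ rhE Finset.univ w (fun _ => B) := by
        apply rhE_mono _ hw.le hw1
        intro Z
        exact hB _ (rhSel_card H hH Z)
    _ = B := rhE_const _ _ _

lemma rhGood_step {l s : ℕ} {q w v B err : ℝ} (hq : 0 ≤ q) (hw : 0 < w) (hw1 : w ≤ 1)
    (hB : ∀ S : Finset X, S.card ≤ l →
      ∑ T ∈ S.powerset with s < T.card, (q / w) ^ T.card ≤ B)
    (h : rhGood X q s v err) (hv0 : 0 ≤ v) (hv1 : v ≤ 1) :
    rhGood X q l (w + v - w * v) (err + B) := by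
  classical
  intro H hH a ha
  rw [← rhE_union]
  have key : ∀ W : Finset X,
      (a - err) + (-1) * (∑ T ∈ rhMin H W with s < T.card, q ^ T.card) ≤
        rhE Finset.univ v (fun V => rhInd H (W ∪ V)) := by
    intro W
    have h1 : rhCostly q ((rhMin H W).filter (fun T => T.card ≤ s))
        (a - ∑ T ∈ rhMin H W with s < T.card, q ^ T.card) := by
      intro 𝒢 h𝒢
      have h2 := ha (((rhMin H W).filter (fun T => s < T.card)) ∪ 𝒢) (by
        intro S hS
        obtain ⟨T, hT, hTS⟩ := rhMin_exists H W S hS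
        by_cases hc : T.card ≤ s
        · obtain ⟨T', hT', hTT⟩ := h𝒢 T (by simp [hT, hc])
          exact ⟨T', by simp [hT'], hTT.trans hTS⟩
        · exact ⟨T, by simp [hT]; left; omega, hTS⟩)
      have h3 := Finset.sum_union_inter (s₁ := (rhMin H W).filter (fun T => s < T.card))
        (s₂ := 𝒢) (f := fun T => q ^ T.card)
      have h4 : 0 ≤ ∑ T ∈ (rhMin H W).filter (fun T => s < T.card) ∩ 𝒢, q ^ T.card :=
        Finset.sum_nonneg (fun _ _ => by positivity)
      linarith
    have h5 := h _ (by intro S hS; simp at hS; exact hS.2) _ h1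
    have h6 : rhE Finset.univ v (rhInd ((rhMin H W).filter (fun T => T.card ≤ s))) ≤
        rhE Finset.univ v (fun V => rhInd H (W ∪ V)) := by
      apply rhE_mono _ hv0 hv1
      intro V
      by_cases hV : ∃ S ∈ (rhMin H W).filter (fun T => T.card ≤ s), S ⊆ V
      · have : ∃ S ∈ H, S ⊆ W ∪ V := by
          obtain ⟨T, hT, hTV⟩ := hV
          obtain ⟨S, hS, hST⟩ := (rhMin_sub_sel H W T (Finset.mem_filter.1 hT).1).2.2
          refine ⟨S, hS, ?_⟩
          intro x hx
          by_cases hxW : x ∈ W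
          · simp [hxW]
          · rw [Finset.mem_union]; right; apply hTV; rw [← hST]; simp [hx, hxW]
        unfold rhInd
        rw [if_pos hV, if_pos this]
      · have h0 : rhInd ((rhMin H W).filter (fun T => T.card ≤ s)) V = 0 := by
          unfold rhInd; rw [if_neg hV]
        rw [h0]; exact rhInd_nonneg _ _
    linarith
  have := rhE_mono Finset.univ hw.le hw1 key
  rw [rhE_add, rhE_const, rhE_smul] at this
  have := rh_cost_bound H hH hq hw hw1 hB
  linarith

lemma rh_pow_sum (S : Finset X) (r : ℝ) :
    ∑ T ∈ S.powerset with 0 < T.card, r ^ T.card = (1 + r) ^ S.card - 1 := by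
  have h := Finset.sum_pow_mul_eq_add_pow r 1 S
  have h2 := Finset.sum_filter_add_sum_filter_not S.powerset (fun T => 0 < T.card)
    (fun T => r ^ T.card)
  have h3 : S.powerset.filter (fun T => ¬ 0 < T.card) = {∅} := by
    ext T; simp; rintro rfl; simp
  rw [h3] at h2
  simp at h h2 ⊢
  rw [add_comm 1 r]
  linarith

lemma rhGood_base {q : ℝ} (hq : 0 < q) {k : ℕ} (hk : 0 < k) (m : ℕ) (hkq : k * q ≤ 1) :
    rhGood X q m (k * q) ((1 + 1 / (k : ℝ)) ^ m - 1) := by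
  have hk' : (0 : ℝ) < k := by exact_mod_cast hk
  have h := rhGood_step (X := X) (l := m) (s := 0) (q := q) (w := k * q) (v := 0)
    (B := (1 + 1 / (k : ℝ)) ^ m - 1) (err := 0) hq.le (by positivity) hkq
    (by
      intro S hS
      rw [rh_pow_sum]
      have : q / (k * q) = 1 / (k : ℝ) := by field_simp
      rw [this]
      have : (1 + 1 / (k : ℝ)) ^ S.card ≤ (1 + 1 / (k : ℝ)) ^ m := by
        apply pow_le_pow_right₀ _ hS
        have : 0 < 1 / (k : ℝ) := by positivity
        linarith
      linarith)
    (rhGood_zero q 0 le_rfl zero_le_one) le_rfl zero_le_one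
  simpa using h

lemma rhGood_iter {q : ℝ} (hq : 0 < q) {k m : ℕ} (hk : 0 < k) (j : ℕ)
    (hkq : k * q + 16 * j * q ≤ 1) :
    rhGood X q (m * 2 ^ j) (k * q + 16 * j * q)
      ((1 + 1 / (k : ℝ)) ^ m - 1 + j * (1 / 2) ^ m) := by
  induction j with
  | zero => simpa using rhGood_base hq hk m (by simpa using hkq)
  | succ j ih =>
    push_cast at hkq
    have hj : (0 : ℝ) ≤ j := by positivity
    have hkk : (0 : ℝ) ≤ k := by positivity
    have hle : k * q + 16 * j * q ≤ 1 := by nlinarith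
    have h0 : 0 ≤ k * q + 16 * j * q := by positivity
    have h1 := mul_nonneg hkk hq.le
    have h2 := mul_nonneg hj hq.le
    have h16 : 16 * q ≤ 1 := by nlinarith
    have h := rhGood_step (X := X) (l := m * 2 ^ (j + 1)) (s := m * 2 ^ j) (q := q)
      (w := 16 * q) (v := k * q + 16 * j * q)
      (B := (1 / 2) ^ m) hq.le (by positivity) h16
      (by
        intro S hS
        have hr : q / (16 * q) = 1 / 16 := by field_simp
        rw [hr]
        have h5 : m ≤ m * 2 ^ j := Nat.le_mul_of_pos_right _ (by positivity)
        have h6 : m * 2 ^ (j + 1) = 2 * (m * 2 ^ j) := by ring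
        calc ∑ T ∈ S.powerset with m * 2 ^ j < T.card, (1 / 16 : ℝ) ^ T.card
            ≤ ∑ T ∈ S.powerset with m * 2 ^ j < T.card, (1 / 16 : ℝ) ^ (m * 2 ^ j) := by
              apply Finset.sum_le_sum
              intro T hT
              rw [Finset.mem_filter] at hT
              exact pow_le_pow_of_le_one (by norm_num) (by norm_num) hT.2.le
          _ ≤ ∑ T ∈ S.powerset, (1 / 16 : ℝ) ^ (m * 2 ^ j) := by
              apply Finset.sum_le_sum_of_subset_of_nonneg (Finset.filter_subset _ _)
              intros; positivity
          _ = 2 ^ S.card * (1 / 16 : ℝ) ^ (m * 2 ^ j) := by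
              rw [Finset.sum_const, Finset.card_powerset]; simp
          _ ≤ 2 ^ (2 * (m * 2 ^ j)) * (1 / 16 : ℝ) ^ (m * 2 ^ j) := by
              apply mul_le_mul_of_nonneg_right _ (by positivity)
              apply pow_le_pow_right₀ (by norm_num)
              omega
          _ = (1 / 4) ^ (m * 2 ^ j) := by
              rw [pow_mul, ← mul_pow]; norm_num
          _ ≤ (1 / 2) ^ (m * 2 ^ j) := by
              apply pow_le_pow_left₀ <;> norm_num
          _ ≤ (1 / 2) ^ m := pow_le_pow_of_le_one (by norm_num) (by norm_num) h5)
      (ih hle) h0 hle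
    apply rhGood_mono h
    · nlinarith
    · push_cast
      have : 0 ≤ 16 * q * (k * q + 16 * j * q) := by positivity
      nlinarith
    · push_cast; exact hkq
    · push_cast; linarith

end PP

/-! ### Counting -/

lemma rh_list_inj {V : Type*} [DecidableEq V] (R : Finset (V × V))
    (hR : ∀ a b b', (a, b) ∈ R → (a, b') ∈ R → b = b') (l l' : List V)
    (hl : l.IsChain (fun x y => (x, y) ∈ R ∨ (y ∉ R.image Prod.snd ∧ x ∉ R.image Prod.fst)))
    (hl' : l'.IsChain (fun x y => (x, y) ∈ R ∨ (y ∉ R.image Prod.snd ∧ x ∉ R.image Prod.fst)))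
    (hlen : l.length = l'.length) (hhead : l.head? = l'.head?)
    (hf : l.filter (fun x => x ∉ R.image Prod.snd) = l'.filter (fun x => x ∉ R.image Prod.snd)) :
    l = l' := by
  induction l generalizing l' with
  | nil => simpa using (List.length_eq_zero_iff.1 (by simpa using hlen.symm)).symm
  | cons x t ih =>
    cases l' with
    | nil => simp at hlen
    | cons x' t' =>
      have hx : x = x' := by simpa using hhead
      subst hx
      have hlen' : t.length = t'.length := by simpa using hlen
      have hf' : t.filter (fun x => x ∉ R.image Prod.snd)
          = t'.filter (fun x => x ∉ R.image Prod.snd) := by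
        rw [List.filter_cons, List.filter_cons] at hf
        split_ifs at hf
        · simpa using hf
        · exact hf
      congr 1
      apply ih t' hl.tail hl'.tail hlen' _ hf'
      cases t with
      | nil =>
        have : t' = [] := List.length_eq_zero_iff.1 (by simpa using hlen'.symm)
        rw [this]
      | cons y s =>
        cases t' with
        | nil => simp at hlen'
        | cons y' s' =>
          rw [List.isChain_cons_cons] at hl hl'
          simp only [List.head?_cons, Option.some.injEq]
          rcases hl.1 with h1 | h1 <;> rcases hl'.1 with h2 | h2
          · exact hR _ _ _ h1 h2
          · exact absurd (Finset.mem_image_of_mem Prod.fst h1) h2.2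
          · exact absurd (Finset.mem_image_of_mem Prod.fst h2) h1.2
          · rw [List.filter_cons_of_pos (by simpa using h1.1),
              List.filter_cons_of_pos (by simpa using h2.1)] at hf'
            exact (List.cons.inj hf').1

lemma rh_count_oriented {N : ℕ} (R : Finset (Fin (N + 1) × Fin (N + 1))) :
    (Finset.univ.filter (fun σ : Equiv.Perm (Fin (N + 1)) =>
      ∀ e ∈ R, ∃ i, σ i = e.1 ∧ σ (i + 1) = e.2)).card
      ≤ (R.card + 1) * (N + 1 - R.card).factorial := by
  classical
  set F := Finset.univ.filter (fun σ : Equiv.Perm (Fin (N + 1)) =>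
      ∀ e ∈ R, ∃ i, σ i = e.1 ∧ σ (i + 1) = e.2) with hF
  rcases F.eq_empty_or_nonempty with h | ⟨σ₀, hσ₀⟩
  · rw [h]; simp
  have hfun : ∀ a b b', (a, b) ∈ R → (a, b') ∈ R → b = b' := by
    intro a b b' h1 h2
    simp only [hF, Finset.mem_filter, Finset.mem_univ, true_and] at hσ₀
    obtain ⟨i, hi1, hi2⟩ := hσ₀ _ h1
    obtain ⟨j, hj1, hj2⟩ := hσ₀ _ h2
    dsimp only at *
    have : i = j := σ₀.injective (hi1.trans hj1.symm)
    rw [← hi2, ← hj2, this]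
  set B := R.image Prod.snd with hB
  have hBc : B.card = R.card := by
    apply Finset.card_image_of_injOn
    rintro ⟨a, b⟩ h1 ⟨a', b'⟩ h2 h
    dsimp only at h
    subst h
    simp only [hF, Finset.mem_filter, Finset.mem_univ, true_and] at hσ₀
    obtain ⟨i, hi1, hi2⟩ := hσ₀ _ h1
    obtain ⟨j, hj1, hj2⟩ := hσ₀ _ h2
    dsimp only at *
    have : i + 1 = j + 1 := σ₀.injective (hi2.trans hj2.symm)
    have : i = j := add_right_cancel this
    rw [← hi1, ← hj1, this]
  have hchain : ∀ σ ∈ F, (List.ofFn σ).IsChain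
      (fun x y => (x, y) ∈ R ∨ (y ∉ R.image Prod.snd ∧ x ∉ R.image Prod.fst)) := by
    intro σ hσ
    simp only [hF, Finset.mem_filter, Finset.mem_univ, true_and] at hσ
    rw [List.isChain_iff_getElem]
    intro i hi
    simp only [List.length_ofFn] at hi
    simp only [List.getElem_ofFn]
    have hsucc : (⟨i + 1, hi⟩ : Fin (N + 1)) = ⟨i, by omega⟩ + 1 := by
      apply Fin.ext
      rw [Fin.val_add_one_of_lt]
      rw [Fin.lt_def]; simp; omega
    rw [hsucc]
    generalize (⟨i, _⟩ : Fin (N + 1)) = z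
    by_cases hy : σ (z + 1) ∈ R.image Prod.snd
    · left
      rw [Finset.mem_image] at hy
      obtain ⟨⟨a, b⟩, hab, hb⟩ := hy
      obtain ⟨j, hj1, hj2⟩ := hσ _ hab
      dsimp only at *
      have : j + 1 = z + 1 := σ.injective (hj2.trans hb)
      have : j = z := add_right_cancel this
      subst this
      rw [hj1, hj2]; exact hab
    · right
      refine ⟨hy, ?_⟩
      intro hx
      rw [Finset.mem_image] at hx
      obtain ⟨⟨a, b⟩, hab, hb⟩ := hx
      obtain ⟨j, hj1, hj2⟩ := hσ _ hab
      dsimp only at *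
      have : j = z := σ.injective (hj1.trans hb)
      subst this
      exact hy (Finset.mem_image.2 ⟨_, hab, hj2.symm⟩)
  let code : Equiv.Perm (Fin (N + 1)) → Option (Fin (N + 1)) × List (Fin (N + 1)) := fun σ =>
    (if σ 0 ∈ B then some (σ 0) else none, (List.ofFn σ).filter (fun x => x ∉ B))
  have hmaps : ∀ σ ∈ F, code σ ∈
      (Finset.insertNone B) ×ˢ ((Bᶜ).toList.permutations.toFinset) := by
    intro σ hσ
    rw [Finset.mem_product]
    constructor
    · simp only [code]
      split_ifs with h
      · simpa using h
      · simp
    · simp only [code, List.mem_toFinset, List.mem_permutations]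
      rw [List.perm_ext_iff_of_nodup]
      · intro a
        simp only [List.mem_filter, List.mem_ofFn, Finset.mem_toList, Finset.mem_compl,
          decide_eq_true_eq]
        constructor
        · exact fun h => h.2
        · exact fun h => ⟨⟨σ.symm a, by simp⟩, h⟩
      · exact (List.nodup_ofFn.2 σ.injective).filter _
      · exact Finset.nodup_toList _
  have hinj : Set.InjOn code F := by
    intro σ hσ σ' hσ' heq
    simp only [code, Prod.mk.injEq] at heq
    obtain ⟨h1, h2⟩ := heq
    have hof : List.ofFn σ = List.ofFn σ' := by
      apply rh_list_inj R hfun _ _ (hchain σ hσ) (hchain σ' hσ') (by simp) _ h2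
      have hd : σ 0 = σ' 0 := by
        split_ifs at h1 with ha hb
        · simpa using h1
        · rename_i hb
          rw [List.ofFn_succ, List.ofFn_succ, List.filter_cons_of_pos (by simpa using ha),
            List.filter_cons_of_pos (by simpa using hb)] at h2
          exact (List.cons.inj h2).1
      rw [List.ofFn_succ, List.ofFn_succ]
      simp [hd]
    have := List.ofFn_injective hof
    exact Equiv.coe_fn_injective this
  calc F.card ≤ ((Finset.insertNone B) ×ˢ ((Bᶜ).toList.permutations.toFinset)).card :=
        Finset.card_le_card_of_injOn code hmaps hinj
    _ ≤ (R.card + 1) * (N + 1 - R.card).factorial := by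
        rw [Finset.card_product, Finset.card_insertNone, hBc]
        apply Nat.mul_le_mul_left
        refine (List.toFinset_card_le _).trans ?_
        rw [List.length_permutations, Finset.length_toList, Finset.card_compl, hBc]
        simp

lemma rh_count_unoriented {N : ℕ} (E : Finset (Sym2 (Fin (N + 1)))) :
    (Finset.univ.filter (fun σ : Equiv.Perm (Fin (N + 1)) =>
      ∀ e ∈ E, ∃ i, s(σ i, σ (i + 1)) = e)).card
      ≤ 2 ^ E.card * ((E.card + 1) * (N + 1 - E.card).factorial) := by
  classical
  let rep : Sym2 (Fin (N + 1)) → Fin (N + 1) × Fin (N + 1) := fun e => Quot.out e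
  have hrep : ∀ e, s((rep e).1, (rep e).2) = e := fun e => Quot.out_eq e
  let ori : Finset (Sym2 (Fin (N + 1))) → Sym2 (Fin (N + 1)) → Fin (N + 1) × Fin (N + 1) :=
    fun D e => if e ∈ D then rep e else (rep e).swap
  have hori : ∀ D e, s((ori D e).1, (ori D e).2) = e := by
    intro D e
    simp only [ori]
    split_ifs
    · exact hrep e
    · rw [Sym2.eq_swap]; exact hrep e
  have hcard : ∀ D, (E.image (ori D)).card = E.card := by
    intro D
    apply Finset.card_image_of_injective
    intro e e' h
    rw [← hori D e, ← hori D e', h]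
  have hsub : (Finset.univ.filter (fun σ : Equiv.Perm (Fin (N + 1)) =>
      ∀ e ∈ E, ∃ i, s(σ i, σ (i + 1)) = e)) ⊆
      E.powerset.biUnion (fun D => Finset.univ.filter (fun σ : Equiv.Perm (Fin (N + 1)) =>
      ∀ e ∈ E.image (ori D), ∃ i, σ i = e.1 ∧ σ (i + 1) = e.2)) := by
    intro σ hσ
    simp only [Finset.mem_filter, Finset.mem_univ, true_and] at hσ
    simp only [Finset.mem_biUnion, Finset.mem_filter, Finset.mem_univ, true_and,
      Finset.mem_powerset]
    refine ⟨E.filter (fun e => ∃ i, σ i = (rep e).1 ∧ σ (i + 1) = (rep e).2),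
      Finset.filter_subset _ _, ?_⟩
    intro x hx
    rw [Finset.mem_image] at hx
    obtain ⟨e, he, rfl⟩ := hx
    simp only [ori]
    split_ifs with h
    · exact (Finset.mem_filter.1 h).2
    · obtain ⟨i, hi⟩ := hσ e he
      have h2 : s(σ i, σ (i + 1)) = s((rep e).1, (rep e).2) := by rw [hi, hrep]
      rw [Sym2.eq_iff] at h2
      rcases h2 with h2 | h2
      · exact absurd (Finset.mem_filter.2 ⟨he, i, h2⟩) h
      · exact ⟨i, h2⟩
  refine (Finset.card_le_card hsub).trans ?_
  refine Finset.card_biUnion_le.trans ?_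
  calc _ ≤ ∑ D ∈ E.powerset, ((E.card + 1) * (N + 1 - E.card).factorial) := by
        apply Finset.sum_le_sum
        intro D _
        have := rh_count_oriented (E.image (ori D))
        rwa [hcard] at this
    _ = _ := by rw [Finset.sum_const, Finset.card_powerset]; simp

/-- permutations with prescribed values -/
lemma rh_count_perm {n : ℕ} {ι : Type*} (G : Finset ι) (pos val : ι → Fin n)
    (hpos : Set.InjOn pos G) :
    (Finset.univ.filter (fun τ : Equiv.Perm (Fin n) => ∀ g ∈ G, τ (pos g) = val g)).card
      ≤ (n - G.card).factorial := by
  classical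
  set F := Finset.univ.filter (fun τ : Equiv.Perm (Fin n) => ∀ g ∈ G, τ (pos g) = val g) with hF
  rcases F.eq_empty_or_nonempty with h | ⟨τ₀, hτ₀⟩
  · rw [h]; simp
  simp only [hF, Finset.mem_filter, Finset.mem_univ, true_and] at hτ₀
  let I := G.image pos
  have hI : I.card = G.card := Finset.card_image_of_injOn hpos
  let J := G.image val
  have hJ : J.card = G.card := by
    apply Finset.card_image_of_injOn
    intro g hg g' hg' h
    apply hpos hg hg'
    apply τ₀.injective
    rw [hτ₀ g hg, hτ₀ g' hg', h]
  have hmem : ∀ τ ∈ F, ∀ x : {x // x ∉ I}, τ x ∉ J := by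
    intro τ hτ x hx
    simp only [hF, Finset.mem_filter, Finset.mem_univ, true_and] at hτ
    rw [Finset.mem_image] at hx
    obtain ⟨g, hg, hgx⟩ := hx
    rw [← hτ g hg] at hgx
    apply x.2
    rw [← τ.injective hgx]
    exact Finset.mem_image_of_mem _ hg
  let code : F → ({x // x ∉ I} ↪ {x // x ∉ J}) := fun τ =>
    ⟨fun x => ⟨τ.1 x, hmem τ.1 τ.2 x⟩, fun x y h => by
      apply Subtype.ext
      exact τ.1.injective (congrArg Subtype.val h)⟩
  have hinj : Function.Injective code := by
    intro τ τ' h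
    apply Subtype.ext
    apply Equiv.ext
    intro x
    by_cases hx : x ∈ I
    · rw [Finset.mem_image] at hx
      obtain ⟨g, hg, rfl⟩ := hx
      have h1 := τ.2
      have h2 := τ'.2
      simp only [hF, Finset.mem_filter, Finset.mem_univ, true_and] at h1 h2
      rw [h1 g hg, h2 g hg]
    · have := congrArg (fun (c : {x // x ∉ I} ↪ {x // x ∉ J}) => (c ⟨x, hx⟩).1) h
      exact this
  have h := Fintype.card_le_of_injective code hinj
  rw [Fintype.card_coe, Fintype.card_embedding_eq] at h
  have c1 : Fintype.card {x // x ∉ I} = n - G.card := by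
    rw [Fintype.card_subtype_compl]; simp [hI]
  have c2 : Fintype.card {x // x ∉ J} = n - G.card := by
    rw [Fintype.card_subtype_compl]; simp [hJ]
  rw [c1, c2, Nat.descFactorial_self] at h
  exact h

/-- the rainbow cycle given by `σ, τ` as a set of coloured edges -/
def rhCyc {N : ℕ} (x : Equiv.Perm (Fin (N + 1)) × Equiv.Perm (Fin (N + 1))) :
    Finset (Sym2 (Fin (N + 1)) × Fin (N + 1)) :=
  Finset.univ.image (fun i => (s(x.1 i, x.1 (i + 1)), x.2 i))

lemma rh_edge_inj {N : ℕ} (hN : 2 ≤ N) (σ : Equiv.Perm (Fin (N + 1))) :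
    Function.Injective (fun i => s(σ i, σ (i + 1))) := by
  intro i j h
  dsimp only at h
  rw [Sym2.eq_iff] at h
  rcases h with h | h
  · exact σ.injective h.1
  · exfalso
    have h1 := σ.injective h.1
    have h2 := σ.injective h.2
    rw [h1] at h2
    have h3 : (1 : Fin (N + 1)) + 1 = 0 := by
      have : j + (1 + 1) = j + 0 := by rw [← add_assoc, h2, add_zero]
      exact add_left_cancel this
    have h4 := congrArg Fin.val h3
    rw [Fin.val_add, Fin.val_one'] at h4
    rw [Nat.mod_eq_of_lt (by omega : 1 < N + 1)] at h4
    rw [Nat.mod_eq_of_lt (by omega)] at h4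
    simp at h4

lemma rh_count {N : ℕ} (hN : 2 ≤ N) (G : Finset (Sym2 (Fin (N + 1)) × Fin (N + 1))) :
    (Finset.univ.filter (fun x => G ⊆ rhCyc (N := N) x)).card
      ≤ (2 ^ G.card * ((G.card + 1) * (N + 1 - G.card).factorial)) *
        (N + 1 - G.card).factorial := by
  classical
  rcases (Finset.univ.filter (fun x => G ⊆ rhCyc (N := N) x)).eq_empty_or_nonempty
    with h | ⟨x₀, hx₀⟩
  · rw [h]; simp
  have hspec : ∀ x : Equiv.Perm (Fin (N + 1)) × Equiv.Perm (Fin (N + 1)), G ⊆ rhCyc x →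
      ∀ g ∈ G, ∃ i, s(x.1 i, x.1 (i + 1)) = g.1 ∧ x.2 i = g.2 := by
    intro x hx g hg
    have := hx hg
    simp only [rhCyc, Finset.mem_image, Finset.mem_univ, true_and] at this
    obtain ⟨i, hi⟩ := this
    exact ⟨i, by rw [← hi], by rw [← hi]⟩
  have hGinj : Set.InjOn Prod.fst (G : Set (Sym2 (Fin (N + 1)) × Fin (N + 1))) := by
    intro g hg g' hg' h
    simp only [Finset.mem_filter, Finset.mem_univ, true_and] at hx₀
    obtain ⟨i, hi1, hi2⟩ := hspec x₀ hx₀ g hg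
    obtain ⟨j, hj1, hj2⟩ := hspec x₀ hx₀ g' hg'
    have : i = j := rh_edge_inj hN x₀.1 (by dsimp only; rw [hi1, hj1, h])
    apply Prod.ext h
    rw [← hi2, ← hj2, this]
  have hEc : (G.image Prod.fst).card = G.card := Finset.card_image_of_injOn hGinj
  set S := Finset.univ.filter (fun σ : Equiv.Perm (Fin (N + 1)) =>
      ∀ e ∈ G.image Prod.fst, ∃ i, s(σ i, σ (i + 1)) = e) with hS
  have hSc := rh_count_unoriented (G.image Prod.fst)
  rw [hEc, ← hS] at hSc
  have hsub : (Finset.univ.filter (fun x => G ⊆ rhCyc (N := N) x)) ⊆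
      S.biUnion (fun σ => (Finset.univ.filter (fun τ => G ⊆ rhCyc (σ, τ))).image
        (fun τ => (σ, τ))) := by
    rintro ⟨σ, τ⟩ hx
    simp only [Finset.mem_filter, Finset.mem_univ, true_and] at hx
    simp only [Finset.mem_biUnion, Finset.mem_image, Finset.mem_filter, Finset.mem_univ, true_and]
    refine ⟨σ, ?_, τ, hx, rfl⟩
    simp only [hS, Finset.mem_filter, Finset.mem_univ, true_and]
    intro e he
    rw [Finset.mem_image] at he
    obtain ⟨g, hg, rfl⟩ := he
    obtain ⟨i, hi, _⟩ := hspec _ hx g hg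
    exact ⟨i, hi⟩
  refine (Finset.card_le_card hsub).trans ?_
  refine (Finset.card_biUnion_le_card_mul _ _ (N + 1 - G.card).factorial ?_).trans
    (Nat.mul_le_mul_right _ hSc)
  intro σ hσ
  refine Finset.card_image_le.trans ?_
  simp only [hS, Finset.mem_filter, Finset.mem_univ, true_and] at hσ
  have hex : ∀ g : Sym2 (Fin (N + 1)) × Fin (N + 1), ∃ i, g ∈ G → s(σ i, σ (i + 1)) = g.1 := by
    intro g
    by_cases hg : g ∈ G
    · obtain ⟨i, hi⟩ := hσ g.1 (Finset.mem_image_of_mem _ hg)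
      exact ⟨i, fun _ => hi⟩
    · exact ⟨0, fun h => absurd h hg⟩
  choose pos hpos using hex
  refine le_trans (Finset.card_le_card ?_) (rh_count_perm G pos Prod.snd ?_)
  · intro τ hτ
    simp only [Finset.mem_filter, Finset.mem_univ, true_and] at hτ ⊢
    intro g hg
    obtain ⟨i, hi1, hi2⟩ := hspec _ hτ g hg
    have : pos g = i := rh_edge_inj hN σ (by dsimp only; rw [hpos g hg]; exact hi1.symm)
    rw [this]; exact hi2
  · intro g hg g' hg' h
    apply hGinj hg hg'
    rw [← hpos g hg, ← hpos g' hg', h]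

lemma rh_fact_bound (d s : ℕ) :
    ((d + s : ℕ) : ℝ) ^ s * d.factorial ≤ 3 ^ s * (d + s).factorial := by
  induction s with
  | zero => simp
  | succ s ih =>
    rcases Nat.eq_zero_or_pos (d + s) with h0 | h0
    · have hd : d = 0 := by omega
      have hs : s = 0 := by omega
      subst hd; subst hs; norm_num
    have hpos : (0 : ℝ) < ((d + s : ℕ) : ℝ) := by exact_mod_cast h0
    have h1 : (((d + s : ℕ) : ℝ) + 1) ^ s ≤ 3 * ((d + s : ℕ) : ℝ) ^ s := by
      have h2 : (1 + 1 / ((d + s : ℕ) : ℝ)) ^ s ≤ 3 := by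
        calc (1 + 1 / ((d + s : ℕ) : ℝ)) ^ s ≤ (Real.exp (1 / ((d + s : ℕ) : ℝ))) ^ s := by
              apply pow_le_pow_left₀ (by positivity)
              rw [add_comm]; exact Real.add_one_le_exp _
          _ = Real.exp (s * (1 / ((d + s : ℕ) : ℝ))) := by rw [← Real.exp_nat_mul]
          _ ≤ Real.exp 1 := by
              apply Real.exp_le_exp.2
              rw [mul_one_div, div_le_one hpos]
              push_cast
              have : (0 : ℝ) ≤ d := by positivity
              linarith
          _ ≤ 3 := by have := Real.exp_one_lt_d9; linarith
      calc (((d + s : ℕ) : ℝ) + 1) ^ s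
          = (1 + 1 / ((d + s : ℕ) : ℝ)) ^ s * ((d + s : ℕ) : ℝ) ^ s := by
            rw [← mul_pow]; congr 1; field_simp
        _ ≤ _ := mul_le_mul_of_nonneg_right h2 (by positivity)
    have e1 : d + (s + 1) = (d + s) + 1 := by ring
    rw [e1, Nat.factorial_succ]
    push_cast at *
    calc ((d : ℝ) + s + 1) ^ (s + 1) * d.factorial
        = ((d : ℝ) + s + 1) * (((d : ℝ) + s + 1) ^ s * d.factorial) := by ring
      _ ≤ ((d : ℝ) + s + 1) * ((3 * ((d : ℝ) + s) ^ s) * d.factorial) := by gcongr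
      _ = 3 * ((d : ℝ) + s + 1) * (((d : ℝ) + s) ^ s * d.factorial) := by ring
      _ ≤ 3 * ((d : ℝ) + s + 1) * (3 ^ s * (d + s).factorial) := by gcongr
      _ = _ := by ring

lemma rh_spread {N : ℕ} (hN : 2 ≤ N) (G : Finset (Sym2 (Fin (N + 1)) × Fin (N + 1))) :
    ((Finset.univ.filter (fun x => G ⊆ rhCyc (N := N) x)).card : ℝ)
      ≤ (36 / ((N : ℝ) + 1) ^ 2) ^ G.card * ((N + 1).factorial : ℝ) ^ 2 := by
  classical
  by_cases hc : G.card ≤ N + 1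
  · obtain ⟨d, hd⟩ : ∃ d, N + 1 = d + G.card := ⟨N + 1 - G.card, by omega⟩
    have h1 : ((Finset.univ.filter (fun x => G ⊆ rhCyc (N := N) x)).card : ℝ) ≤
        ((2 ^ G.card * ((G.card + 1) * (N + 1 - G.card).factorial)) *
        (N + 1 - G.card).factorial : ℕ) := by exact_mod_cast rh_count hN G
    have hd' : N + 1 - G.card = d := by omega
    rw [hd'] at h1
    refine h1.trans ?_
    have h2 := rh_fact_bound d G.card
    rw [← hd] at h2
    push_cast at h2 ⊢
    set s := G.card
    have h3 : ((s : ℝ) + 1) ≤ 2 ^ s := by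
      have : s + 1 ≤ 2 ^ s := Nat.lt_two_pow_self
      exact_mod_cast this
    have hpos : (0 : ℝ) < (N : ℝ) + 1 := by positivity
    rw [div_pow, div_mul_eq_mul_div, le_div_iff₀ (by positivity)]
    calc (2 : ℝ) ^ s * (((s : ℝ) + 1) * (d.factorial : ℝ)) * (d.factorial : ℝ) * (((N : ℝ) + 1) ^ 2) ^ s
        = (2 : ℝ) ^ s * ((s : ℝ) + 1) * (((N : ℝ) + 1) ^ s * (d.factorial : ℝ)) ^ 2 := by
          rw [← pow_mul, mul_comm 2 s, pow_mul]; ring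
      _ ≤ (2 : ℝ) ^ s * 2 ^ s * (3 ^ s * ((N + 1).factorial : ℝ)) ^ 2 := by gcongr
      _ = (36 : ℝ) ^ s * ((N + 1).factorial : ℝ) ^ 2 := by
          rw [mul_pow, ← pow_mul, mul_comm s 2, pow_mul, ← mul_assoc, ← mul_pow, ← mul_pow]
          norm_num
  · have : (Finset.univ.filter (fun x => G ⊆ rhCyc (N := N) x)) = ∅ := by
      rw [Finset.filter_eq_empty_iff]
      intro x _ hx
      have h1 := Finset.card_le_card hx
      have h2 : (rhCyc x).card ≤ N + 1 := by
        unfold rhCyc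
        refine Finset.card_image_le.trans ?_
        simp
      omega
    rw [this]
    simp only [Finset.card_empty, Nat.cast_zero]
    positivity

/-! ### Comparison with the one-colour model -/

section McD
variable {E C : Type*} [DecidableEq E] [Fintype E] [DecidableEq C] [Fintype C]

lemma rhE_congr {X : Type*} [DecidableEq X] (s : Finset X) (w : ℝ) {f g : Finset X → ℝ}
    (h : ∀ W ⊆ s, f W = g W) : rhE s w f = rhE s w g := by
  unfold rhE
  apply Finset.sum_congr rfl
  intro W hW
  rw [h W (Finset.mem_powerset.1 hW)]

lemma rhE_mono' {X : Type*} [DecidableEq X] (s : Finset X) {w : ℝ} (h0 : 0 ≤ w) (h1 : w ≤ 1)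
    {f g : Finset X → ℝ} (h : ∀ W ⊆ s, f W ≤ g W) : rhE s w f ≤ rhE s w g := by
  unfold rhE
  apply Finset.sum_le_sum
  intro W hW
  have : 0 ≤ 1 - w := by linarith
  exact mul_le_mul_of_nonneg_left (h W (Finset.mem_powerset.1 hW)) (by positivity)

lemma rhE_marg {X : Type*} [DecidableEq X] (s : Finset X) (w : ℝ) (g : X → ℝ) :
    rhE s w (fun V => ∑ v ∈ V, g v) = w * ∑ v ∈ s, g v := by
  induction s using Finset.induction_on with
  | empty => simp [rhE_empty]
  | insert x s hx ih =>
    rw [rhE_insert hx, ih]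
    have : rhE s w (fun W => ∑ v ∈ insert x W, g v)
        = rhE s w (fun W => g x + ∑ v ∈ W, g v) := by
      apply rhE_congr
      intro W hW
      rw [Finset.sum_insert (fun h => hx (hW h))]
    rw [this, rhE_add, rhE_const, ih, Finset.sum_insert hx]
    ring

/-- the coloured edges present -/
def rhSet (s : Finset E) (η : E → Bool × C) : Finset (E × C) :=
  (s.filter (fun e => (η e).1 = true)).image (fun e => (e, (η e).2))

/-- single-edge weights -/
noncomputable def rhMu (C : Type*) [Fintype C] (p : ℝ) (x : Bool × C) : ℝ :=
  (if x.1 = true then p else 1 - p) * (1 / (Fintype.card C : ℝ))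

noncomputable def rhO (s : Finset E) (p : ℝ) (f : Finset (E × C) → ℝ) : ℝ :=
  ∑ η : E → Bool × C, (∏ e, rhMu C p (η e)) * f (rhSet s η)

lemma rhMu_sum [Nonempty C] (p : ℝ) : ∑ x : Bool × C, rhMu C p x = 1 := by
  rw [Fintype.sum_prod_type]
  have : (Fintype.card C : ℝ) ≠ 0 := by exact_mod_cast Fintype.card_ne_zero
  simp [rhMu]
  field_simp
  ring

lemma rh_resample {Ω : Type*} [Fintype Ω] [DecidableEq Ω] (μ : Ω → ℝ) (hμ : ∑ x, μ x = 1) (e : E)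
    (F : (E → Ω) → ℝ) :
    ∑ η : E → Ω, (∏ i, μ (η i)) * F η
      = ∑ x, μ x * ∑ η : E → Ω, (∏ i, μ (η i)) * F (Function.update η e x) := by
  classical
  have hsplit : ∀ F : (E → Ω) → ℝ, ∑ η : E → Ω, (∏ i, μ (η i)) * F η
      = ∑ y : Ω, ∑ ζ : {j // j ≠ e} → Ω, μ y * (∏ i, μ (ζ i)) *
        F ((Equiv.funSplitAt e Ω).symm (y, ζ)) := by
    intro F
    rw [← Fintype.sum_prod_type', ← (Equiv.funSplitAt e Ω).symm.sum_comp]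
    apply Finset.sum_congr rfl
    rintro ⟨y, ζ⟩ _
    congr 1
    rw [← Fintype.prod_subtype_mul_prod_subtype (fun i => i = e)]
    congr 1
    · have hc : ∀ i : {i // i = e}, μ ((Equiv.funSplitAt e Ω).symm (y, ζ) i) = μ y := by
        rintro ⟨i, hi⟩
        simp [Equiv.funSplitAt, hi]
      rw [Finset.prod_congr rfl (fun i _ => hc i)]
      simp
    · apply Finset.prod_congr rfl
      rintro ⟨i, hi⟩ _
      simp [Equiv.funSplitAt, hi]
  rw [hsplit F]
  have h2 : ∀ x, ∑ η : E → Ω, (∏ i, μ (η i)) * F (Function.update η e x)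
      = ∑ ζ : {j // j ≠ e} → Ω, (∏ i, μ (ζ i)) * F ((Equiv.funSplitAt e Ω).symm (x, ζ)) := by
    intro x
    rw [hsplit (fun η => F (Function.update η e x))]
    have : ∀ (y : Ω) (ζ : {j // j ≠ e} → Ω),
        Function.update ((Equiv.funSplitAt e Ω).symm (y, ζ)) e x
          = (Equiv.funSplitAt e Ω).symm (x, ζ) := by
      intro y ζ
      funext i
      by_cases hi : i = e
      · subst hi; simp [Equiv.funSplitAt]
      · simp [Equiv.funSplitAt, hi]
    simp only [this]
    rw [Finset.sum_comm]
    apply Finset.sum_congr rfl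
    intro ζ _
    rw [← Finset.sum_mul, ← Finset.sum_mul, hμ, one_mul]
  simp only [h2]
  apply Finset.sum_congr rfl
  intro x _
  rw [Finset.mul_sum]
  apply Finset.sum_congr rfl
  intro ζ _
  ring

lemma rhO_insert [Nonempty C] {e : E} {s : Finset E} (he : e ∉ s) (p : ℝ)
    (f : Finset (E × C) → ℝ) :
    rhO (insert e s) p f = (1 - p) * rhO s p f
      + ∑ c : C, p / (Fintype.card C : ℝ) * rhO s p (fun Y => f (insert (e, c) Y)) := by
  have hC : (Fintype.card C : ℝ) ≠ 0 := by exact_mod_cast Fintype.card_ne_zero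
  unfold rhO
  rw [rh_resample (rhMu C p) (rhMu_sum p) e, Fintype.sum_prod_type, Fintype.sum_bool]
  have h0 : ∀ (η : E → Bool × C) (x : Bool × C), ∀ i ∈ s, Function.update η e x i = η i := by
    intro η x i hi
    rw [Function.update_of_ne]
    rintro rfl; exact he hi
  have h1 : ∀ (η : E → Bool × C) (c : C), rhSet (insert e s) (Function.update η e (true, c))
      = insert (e, c) (rhSet s η) := by
    intro η c
    unfold rhSet
    rw [Finset.filter_insert, if_pos (by simp), Finset.image_insert]
    congr 1
    · simp
    · rw [Finset.filter_congr (fun i hi => by rw [h0 η _ i hi])]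
      apply Finset.image_congr
      intro i hi
      dsimp only
      rw [h0 η _ i (Finset.mem_filter.1 hi).1]
  have h2 : ∀ (η : E → Bool × C) (c : C), rhSet (insert e s) (Function.update η e (false, c))
      = rhSet s η := by
    intro η c
    unfold rhSet
    rw [Finset.filter_insert, if_neg (by simp)]
    rw [Finset.filter_congr (fun i hi => by rw [h0 η _ i hi])]
    apply Finset.image_congr
    intro i hi
    dsimp only
    rw [h0 η _ i (Finset.mem_filter.1 hi).1]
  simp only [h1, h2]
  rw [add_comm]
  congr 1
  · simp only [rhMu, Finset.sum_const, Finset.card_univ, nsmul_eq_mul]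
    simp
    field_simp
  · apply Finset.sum_congr rfl
    intro c _
    simp [rhMu, div_eq_mul_inv]

/-- subadditivity in each edge -/
def rhSub (f : Finset (E × C) → ℝ) : Prop :=
  ∀ (e : E) (Y V : Finset (E × C)), (∀ v ∈ V, v.1 = e) →
    f (Y ∪ V) ≤ f Y + ∑ v ∈ V, (f (insert v Y) - f Y)

lemma rh_mcd [Nonempty C] (s : Finset E) {p : ℝ} (h0 : 0 ≤ p) (h1 : p ≤ 1)
    (f : Finset (E × C) → ℝ) (hf : rhSub f) :
    rhE (s ×ˢ (Finset.univ : Finset C)) (p / (Fintype.card C : ℝ)) f ≤ rhO s p f := by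
  have hC1 : (1 : ℝ) ≤ (Fintype.card C : ℝ) := by
    exact_mod_cast Fintype.card_pos
  have hC : (0 : ℝ) < (Fintype.card C : ℝ) := by linarith
  set w := p / (Fintype.card C : ℝ) with hw
  have hw0 : 0 ≤ w := by positivity
  have hw1 : w ≤ 1 := by rw [hw, div_le_one hC]; linarith
  have hwC : w * (Fintype.card C : ℝ) = p := by rw [hw]; field_simp
  induction s using Finset.induction_on generalizing f with
  | empty =>
    rw [Finset.empty_product, rhE_empty]
    unfold rhO
    have : ∀ η : E → Bool × C, rhSet (∅ : Finset E) η = ∅ := by intro η; simp [rhSet]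
    simp only [this]
    rw [← Finset.sum_mul]
    have h3 : ∑ η : E → Bool × C, ∏ e, rhMu C p (η e) = 1 := by
      have := Finset.prod_univ_sum (fun _ : E => (Finset.univ : Finset (Bool × C)))
        (fun _ x => rhMu C p x)
      rw [Fintype.piFinset_univ] at this
      rw [← this]
      simp [rhMu_sum]
    rw [h3, one_mul]
  | insert e s he ih =>
    have hset : (insert e s) ×ˢ (Finset.univ : Finset C)
        = (Finset.univ.image (fun c : C => (e, c))) ∪ s ×ˢ (Finset.univ : Finset C) := by
      ext ⟨a, b⟩
      simp only [Finset.mem_product, Finset.mem_insert, Finset.mem_univ, and_true,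
        Finset.mem_union, Finset.mem_image, true_and, Prod.mk.injEq, exists_eq_right]
      constructor
      · rintro (rfl | h) <;> tauto
      · rintro (rfl | h) <;> tauto
    have hdisj : Disjoint (Finset.univ.image (fun c : C => (e, c)))
        (s ×ˢ (Finset.univ : Finset C)) := by
      rw [Finset.disjoint_left]
      rintro ⟨a, b⟩ h h'
      simp only [Finset.mem_image, Finset.mem_univ, true_and, Prod.mk.injEq,
        exists_eq_right, Finset.mem_product, and_true] at h h'
      subst h
      exact he h'
    rw [hset, rhE_disjUnion hdisj, rhO_insert he]
    have hstep : ∀ W : Finset (E × C),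
        rhE (Finset.univ.image (fun c : C => (e, c))) w (fun V => f (W ∪ V)) ≤
          (1 - p) * f W + ∑ c : C, w * f (insert (e, c) W) := by
      intro W
      calc _ ≤ rhE (Finset.univ.image (fun c : C => (e, c))) w
            (fun V => f W + ∑ v ∈ V, (f (insert v W) - f W)) := by
            apply rhE_mono' _ hw0 hw1
            intro V hV
            apply hf e
            intro v hv
            have := hV hv
            rw [Finset.mem_image] at this
            obtain ⟨c, _, rfl⟩ := this
            rfl
        _ = _ := by
            rw [rhE_add, rhE_const, rhE_marg, Finset.sum_image (by intro a _ b _ h; simpa using h),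
              Finset.sum_sub_distrib, Finset.sum_const, Finset.card_univ, nsmul_eq_mul,
              ← Finset.mul_sum, mul_sub, ← mul_assoc, hwC]
            ring
    refine (rhE_mono _ hw0 hw1 hstep).trans ?_
    rw [rhE_add, rhE_smul, rhE_sum]
    apply add_le_add
    · exact mul_le_mul_of_nonneg_left (ih f hf) (by linarith)
    · apply Finset.sum_le_sum
      intro c _
      rw [rhE_smul]
      apply mul_le_mul_of_nonneg_left _ hw0
      apply ih
      intro e' Y V hV
      have := hf e' (insert (e, c) Y) V hV
      rw [Finset.insert_union] at this
      simp only [Finset.insert_comm (e, c)]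
      exact this

lemma rhInd_sub (H : Finset (Finset (E × C)))
    (hH : ∀ S ∈ H, ∀ x ∈ S, ∀ y ∈ S, x.1 = y.1 → x = y) : rhSub (rhInd H) := by
  intro e Y V hV
  have hnn : ∀ v ∈ V, 0 ≤ rhInd H (insert v Y) - rhInd H Y := fun v _ =>
    sub_nonneg.2 (rhInd_mono H (Finset.subset_insert v Y))
  have hs := Finset.sum_nonneg hnn
  have hY := rhInd_nonneg H Y
  by_cases h1 : ∃ S ∈ H, S ⊆ Y ∪ V
  · have e1 : rhInd H (Y ∪ V) = 1 := by unfold rhInd; rw [if_pos h1]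
    by_cases h2 : ∃ S ∈ H, S ⊆ Y
    · have e2 : rhInd H Y = 1 := by unfold rhInd; rw [if_pos h2]
      linarith
    · have e2 : rhInd H Y = 0 := by unfold rhInd; rw [if_neg h2]
      obtain ⟨S, hS, hSV⟩ := h1
      have : ∃ v ∈ S, v ∉ Y := by
        by_contra hcon
        push Not at hcon
        exact h2 ⟨S, hS, hcon⟩
      obtain ⟨v, hvS, hvY⟩ := this
      have hvV : v ∈ V := by
        have := hSV hvS
        rw [Finset.mem_union] at this
        tauto
      have e3 : rhInd H (insert v Y) = 1 := by
        unfold rhInd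
        rw [if_pos]
        refine ⟨S, hS, ?_⟩
        intro x hx
        rw [Finset.mem_insert]
        have := hSV hx
        rw [Finset.mem_union] at this
        rcases this with h | h
        · exact Or.inr h
        · left
          exact hH S hS x hx v hvS ((hV x h).trans (hV v hvV).symm)
      have := Finset.single_le_sum hnn hvV
      linarith
  · have e1 : rhInd H (Y ∪ V) = 0 := by unfold rhInd; rw [if_neg h1]
    linarith

end McD

/-! ### The measure -/

instance rh_uniform_prob (N : ℕ) :
    IsProbabilityMeasure (uniformOn (Finset.univ : Finset (Fin (N + 1)))) := by
  unfold uniformOn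
  rw [dif_pos Finset.univ_nonempty]
  infer_instance

lemma rh_measure_singleton (n N : ℕ) {p : ℝ} (h0 : 0 ≤ p) (h1 : p ≤ 1)
    (x : (Sym2 (Fin n) → Bool) × (Sym2 (Fin n) → Fin (N + 1))) :
    coloredGnp n (N + 1) p {x} = ENNReal.ofReal (∏ e, rhMu (Fin (N + 1)) p (x.1 e, x.2 e)) := by
  obtain ⟨ω, c⟩ := x
  have hnn : ∀ y : Bool × Fin (N + 1), 0 ≤ rhMu (Fin (N + 1)) p y := by
    intro y
    unfold rhMu
    have : 0 ≤ 1 - p := by linarith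
    split_ifs <;> positivity
  rw [ENNReal.ofReal_prod_of_nonneg (fun e _ => hnn _)]
  have hs : ({(ω, c)} : Set ((Sym2 (Fin n) → Bool) × (Sym2 (Fin n) → Fin (N + 1))))
      = {ω} ×ˢ {c} := by simp
  rw [hs, coloredGnp, Measure.prod_prod, gnp, colorM, Measure.pi_singleton, Measure.pi_singleton,
    ← Finset.prod_mul_distrib]
  apply Finset.prod_congr rfl
  intro e _
  have hu : uniformOn (Finset.univ : Finset (Fin (N + 1))) {c e}
      = ENNReal.ofReal (1 / (Fintype.card (Fin (N + 1)) : ℝ)) := by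
    unfold uniformOn
    rw [dif_pos Finset.univ_nonempty,
      PMF.toMeasure_apply_singleton _ _ (MeasurableSet.singleton _)]
    rw [PMF.uniformOfFinset_apply_of_mem _ (Finset.mem_univ _), one_div,
      ENNReal.ofReal_inv_of_pos (by simp; positivity)]
    simp only [Finset.card_univ]
    rw [ENNReal.ofReal_natCast]
  have hb : bernoulliM p {ω e} = ENNReal.ofReal (if ω e = true then p else 1 - p) := by
    unfold bernoulliM
    rw [PMF.toMeasure_apply_singleton _ _ (MeasurableSet.singleton _)]
    have hmin : min (Real.toNNReal p) 1 = Real.toNNReal p := by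
      apply min_eq_left
      rwa [Real.toNNReal_le_one]
    rw [PMF.bernoulli_apply]
    cases ω e
    · simp [hmin, ENNReal.ofReal_sub, h0]
      rfl
    · simp [hmin]
      rfl
  rw [hu, hb, rhMu, ENNReal.ofReal_mul]
  have : 0 ≤ 1 - p := by linarith
  split_ifs <;> linarith

lemma rh_measure_le_one (n N : ℕ) (p : ℝ)
    (S : Set ((Sym2 (Fin n) → Bool) × (Sym2 (Fin n) → Fin (N + 1)))) :
    coloredGnp n (N + 1) p S ≤ 1 := by
  have h1 : IsProbabilityMeasure (gnp n p) := by unfold gnp; infer_instance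
  have h2 : IsProbabilityMeasure (colorM n (N + 1)) := by unfold colorM; infer_instance
  have h3 : IsProbabilityMeasure (coloredGnp n (N + 1) p) := by unfold coloredGnp; infer_instance
  exact prob_le_one

lemma rh_main (N : ℕ) (hN : 2 ≤ N) {p : ℝ} (h1 : p ≤ 1) {k m : ℕ} (hk : 0 < k)
    (hm : N + 1 ≤ m * 2 ^ k)
    (hp : 17 * k * (36 / ((N : ℝ) + 1) ^ 2) ≤ p / ((N : ℝ) + 1)) :
    ENNReal.ofReal (1 - ((1 + 1 / (k : ℝ)) ^ m - 1 + k * (1 / 2) ^ m)) ≤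
      coloredGnp (N + 1) (N + 1) p {x | IsRainbowHamCycle x.1 x.2} := by
  classical
  have hNpos : (0 : ℝ) < (N : ℝ) + 1 := by positivity
  have hp0 : 0 ≤ p := by
    have : 0 ≤ p / ((N : ℝ) + 1) := le_trans (by positivity) hp
    by_contra hneg
    push Not at hneg
    have := div_neg_of_neg_of_pos hneg hNpos
    linarith
  set q : ℝ := 36 / ((N : ℝ) + 1) ^ 2 with hq
  have hq0 : 0 < q := by positivity
  set H : Finset (Finset (Sym2 (Fin (N + 1)) × Fin (N + 1))) :=
    Finset.univ.image (rhCyc (N := N)) with hH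
  have hpw : p / ((N : ℝ) + 1) ≤ 1 := by
    rw [div_le_one hNpos]; have : (0 : ℝ) ≤ N := by positivity
    linarith
  have hgood := rhGood_iter (X := Sym2 (Fin (N + 1)) × Fin (N + 1)) hq0 (m := m) hk k
    (by linarith)
  have hgood2 := rhGood_mono hgood (by positivity) (w' := p / ((N : ℝ) + 1)) (by linarith)
    hpw le_rfl
  have hcost : rhCostly q H 1 := by
    intro 𝒢 h𝒢
    have hle : (Fintype.card (Equiv.Perm (Fin (N + 1)) × Equiv.Perm (Fin (N + 1))) : ℝ) ≤
        ∑ G ∈ 𝒢, ((Finset.univ.filter (fun x => G ⊆ rhCyc (N := N) x)).card : ℝ) := by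
      have : Fintype.card (Equiv.Perm (Fin (N + 1)) × Equiv.Perm (Fin (N + 1))) ≤
        ∑ G ∈ 𝒢, (Finset.univ.filter (fun x => G ⊆ rhCyc (N := N) x)).card := by
        rw [← Finset.card_univ]
        refine le_trans (Finset.card_le_card ?_) Finset.card_biUnion_le
        intro x _
        obtain ⟨T, hT, hTx⟩ := h𝒢 (rhCyc x) (Finset.mem_image_of_mem _ (Finset.mem_univ _))
        simp only [Finset.mem_biUnion, Finset.mem_filter, Finset.mem_univ, true_and]
        exact ⟨T, hT, hTx⟩
      exact_mod_cast this
    have hle2 := hle.trans (Finset.sum_le_sum (fun G _ => rh_spread hN G))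
    rw [← Finset.sum_mul, Fintype.card_prod, Fintype.card_perm, Fintype.card_fin] at hle2
    push_cast at hle2
    have hfp : (0 : ℝ) < ((N + 1).factorial : ℝ) ^ 2 := by positivity
    rw [← sq] at hle2
    by_contra hcon
    push Not at hcon
    have := mul_lt_mul_of_pos_right hcon hfp
    linarith
  have hA := hgood2 H (by
    intro S hS
    rw [hH, Finset.mem_image] at hS
    obtain ⟨x, _, rfl⟩ := hS
    refine le_trans ?_ hm
    unfold rhCyc
    refine Finset.card_image_le.trans ?_
    simp) 1 hcost
  have hsub : rhSub (rhInd H) := by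
    apply rhInd_sub
    intro S hS x hx y hy hxy
    rw [hH, Finset.mem_image] at hS
    obtain ⟨z, _, rfl⟩ := hS
    simp only [rhCyc, Finset.mem_image, Finset.mem_univ, true_and] at hx hy
    obtain ⟨i, rfl⟩ := hx
    obtain ⟨j, rfl⟩ := hy
    have : i = j := rh_edge_inj hN z.1 hxy
    rw [this]
  have hmcd := rh_mcd (Finset.univ : Finset (Sym2 (Fin (N + 1)))) hp0 h1 (rhInd H) hsub
  rw [Finset.univ_product_univ, Fintype.card_fin] at hmcd
  push_cast at hmcd
  have hB := hA.trans hmcd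
  refine (ENNReal.ofReal_le_ofReal hB).trans ?_
  have hnn : ∀ y : Bool × Fin (N + 1), 0 ≤ rhMu (Fin (N + 1)) p y := by
    intro y
    unfold rhMu
    have : 0 ≤ 1 - p := by linarith
    split_ifs <;> positivity
  unfold rhO
  rw [ENNReal.ofReal_sum_of_nonneg (fun η _ => mul_nonneg
    (Finset.prod_nonneg fun e _ => hnn _) (rhInd_nonneg _ _))]
  rw [← (Equiv.arrowProdEquivProdArrow (Sym2 (Fin (N + 1))) (fun _ => Bool)
    (fun _ => Fin (N + 1))).symm.sum_comp]
  set Ev : Set ((Sym2 (Fin (N + 1)) → Bool) × (Sym2 (Fin (N + 1)) → Fin (N + 1))) :=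
    {x | IsRainbowHamCycle x.1 x.2} with hEv
  calc _ ≤ ∑ x : (Sym2 (Fin (N + 1)) → Bool) × (Sym2 (Fin (N + 1)) → Fin (N + 1)),
          if x ∈ Ev then coloredGnp (N + 1) (N + 1) p {x} else 0 := by
        apply Finset.sum_le_sum
        rintro ⟨ω, c⟩ _
        by_cases hI : ∃ S ∈ H, S ⊆ rhSet Finset.univ
            ((Equiv.arrowProdEquivProdArrow (Sym2 (Fin (N + 1))) (fun _ => Bool)
              (fun _ => Fin (N + 1))).symm (ω, c))
        · have hmem : (ω, c) ∈ Ev := by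
            obtain ⟨S, hS, hsubS⟩ := hI
            rw [hH, Finset.mem_image] at hS
            obtain ⟨⟨σ, τ⟩, _, rfl⟩ := hS
            have hi : ∀ i : Fin (N + 1), ω s(σ i, σ (i + 1)) = true ∧
                c s(σ i, σ (i + 1)) = τ i := by
              intro i
              have : (s(σ i, σ (i + 1)), τ i) ∈ rhCyc (σ, τ) := by
                simp only [rhCyc, Finset.mem_image, Finset.mem_univ, true_and]
                exact ⟨i, rfl⟩
              have := hsubS this
              simp only [rhSet, Finset.mem_image, Finset.mem_filter, Finset.mem_univ, true_and,
                Prod.mk.injEq] at this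
              obtain ⟨e, he1, he2, he3⟩ := this
              subst he2
              exact ⟨he1, he3⟩
            show IsRainbowHamCycle ω c
            refine ⟨(σ : Fin (N + 1) → Fin (N + 1)), σ.bijective, fun i => (hi i).1, ?_⟩
            intro (i : Fin (N + 1)) (j : Fin (N + 1)) hij
            have hij' : c s(σ i, σ (i + 1)) = c s(σ j, σ (j + 1)) := hij
            have h3 := (hi i).2
            have h4 := (hi j).2
            exact τ.injective (h3.symm.trans (hij'.trans h4))
          rw [if_pos hmem, rh_measure_singleton (N + 1) N hp0 h1]
          apply ENNReal.ofReal_le_ofReal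
          unfold rhInd
          rw [if_pos hI, mul_one]
          exact le_rfl
        · have : rhInd H (rhSet Finset.univ
            ((Equiv.arrowProdEquivProdArrow (Sym2 (Fin (N + 1))) (fun _ => Bool)
              (fun _ => Fin (N + 1))).symm (ω, c))) = 0 := by
            unfold rhInd; rw [if_neg hI]
          rw [this]
          simp
    _ = coloredGnp (N + 1) (N + 1) p Ev := by
        rw [← Finset.sum_filter, sum_measure_singleton]
        congr 1
        ext x; simp

/-! ### Asymptotics -/

lemma rh_clog_le {n : ℕ} (hn : 3 ≤ n) : (Nat.clog 2 n : ℝ) ≤ 3 * Real.log n := by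
  have hlog3 : 1 ≤ Real.log n := by
    rw [Real.le_log_iff_exp_le (by positivity)]
    have := Real.exp_one_lt_d9
    have : (3 : ℝ) ≤ n := by exact_mod_cast hn
    linarith
  have h1 : 2 ^ (Nat.clog 2 n - 1) < n := Nat.pow_pred_clog_lt_self (by norm_num) (by omega)
  have hpos : 0 < Nat.clog 2 n := Nat.clog_pos (by norm_num) (by omega)
  obtain ⟨j, hj⟩ : ∃ j, Nat.clog 2 n = j + 1 := ⟨Nat.clog 2 n - 1, by omega⟩
  rw [hj] at h1 ⊢
  have h2 : ((2 : ℝ) ^ j) ≤ n := by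
    have : 2 ^ j < n := by simpa using h1
    exact_mod_cast this.le
  have h3 := Real.log_le_log (by positivity) h2
  rw [Real.log_pow] at h3
  have := Real.log_two_gt_d9
  have hj0 : (0 : ℝ) ≤ j := by positivity
  push_cast
  nlinarith

lemma rh_err_tendsto : Tendsto (fun m : ℕ => Real.exp (1 / (m : ℝ)) - 1
    + ((m : ℝ) + 1) ^ 2 * (1 / 2) ^ m) atTop (nhds 0) := by
  have h1 : Tendsto (fun m : ℕ => Real.exp (1 / (m : ℝ)) - 1) atTop (nhds 0) := by
    have := (Real.continuous_exp.tendsto 0).comp (tendsto_one_div_atTop_nhds_zero_nat (𝕜 := ℝ))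
    have := this.sub_const 1
    simpa using this
  have h2 : Tendsto (fun m : ℕ => ((m : ℝ) + 1) ^ 2 * (1 / 2) ^ m) atTop (nhds 0) := by
    have h := fun k => tendsto_pow_const_mul_const_pow_of_lt_one k
      (r := (1 / 2 : ℝ)) (by norm_num) (by norm_num)
    have := ((h 2).add ((h 1).const_mul 2)).add (h 0)
    simp only [mul_zero, add_zero] at this
    refine this.congr ?_
    intro m; ring
  simpa using h1.add h2

lemma rh_err_le {k : ℕ} (hk : 0 < k) :
    (1 + 1 / (k : ℝ)) ^ (Nat.sqrt k) - 1 + k * (1 / 2) ^ (Nat.sqrt k) ≤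
      Real.exp (1 / (Nat.sqrt k : ℝ)) - 1 + ((Nat.sqrt k : ℝ) + 1) ^ 2 * (1 / 2) ^ Nat.sqrt k := by
  have hm : 0 < Nat.sqrt k := Nat.sqrt_pos.2 hk
  have h1 : Nat.sqrt k * Nat.sqrt k ≤ k := Nat.sqrt_le k
  have h2 : k < (Nat.sqrt k + 1) * (Nat.sqrt k + 1) := Nat.lt_succ_sqrt k
  set m := Nat.sqrt k
  have hmR : (0 : ℝ) < m := by exact_mod_cast hm
  have hkR : (0 : ℝ) < k := by exact_mod_cast hk
  have h1R : (m : ℝ) * m ≤ k := by exact_mod_cast h1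
  have h2R : (k : ℝ) ≤ (m + 1) * (m + 1) := by exact_mod_cast h2.le
  have h3 : (1 + 1 / (k : ℝ)) ^ m ≤ Real.exp (1 / (m : ℝ)) := by
    calc (1 + 1 / (k : ℝ)) ^ m ≤ (Real.exp (1 / (k : ℝ))) ^ m := by
          apply pow_le_pow_left₀ (by positivity)
          rw [add_comm]; exact Real.add_one_le_exp _
      _ = Real.exp (m * (1 / (k : ℝ))) := by rw [← Real.exp_nat_mul]
      _ ≤ _ := by
          apply Real.exp_le_exp.2
          rw [mul_one_div, div_le_div_iff₀ hkR hmR]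
          linarith
  have h4 : (k : ℝ) * (1 / 2) ^ m ≤ ((m : ℝ) + 1) ^ 2 * (1 / 2) ^ m := by
    apply mul_le_mul_of_nonneg_right _ (by positivity)
    rw [sq]; exact h2R
  linarith

/-- There is an absolute constant `K` such that if `p = p(n) > K·log n / n`,
then, as `n → ∞` through even integers, `G_{n,p,n}` (with exactly `n` colors) contains a
rainbow Hamilton cycle with high probability. -/
theorem rainbow_ham_n_colors_even :
    ∃ K : ℝ, 0 < K ∧ ∀ p : ℕ → ℝ,
      (∀ᶠ n : ℕ in atTop, K * Real.log n / n < p n ∧ p n ≤ 1) →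
      Tendsto
        (fun m : ℕ =>
          coloredGnp (2 * m) (2 * m) (p (2 * m)) {x | IsRainbowHamCycle x.1 x.2})
        atTop (nhds 1) := by
  refine ⟨1836, by norm_num, ?_⟩
  intro p hp
  have h2m : Tendsto (fun m : ℕ => 2 * m) atTop atTop :=
    tendsto_id.const_mul_atTop' (by norm_num)
  have hsq : Tendsto Nat.sqrt atTop atTop := by
    rw [tendsto_atTop]
    intro b
    filter_upwards [eventually_ge_atTop (b * b)] with a ha
    exact Nat.le_sqrt.2 ha
  have hcl : Tendsto (Nat.clog 2) atTop atTop := by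
    rw [tendsto_atTop]
    intro b
    filter_upwards [eventually_ge_atTop (2 ^ b)] with a ha
    have := Nat.clog_mono_right 2 ha
    rwa [Nat.clog_pow 2 b (by norm_num)] at this
  have hlow : Tendsto (fun m : ℕ => ENNReal.ofReal (1 - (fun m : ℕ => Real.exp (1 / (m : ℝ)) - 1
    + ((m : ℝ) + 1) ^ 2 * (1 / 2) ^ m) (Nat.sqrt (Nat.clog 2 (2 * m))))) atTop (nhds 1) := by
    have h := (rh_err_tendsto.comp (hsq.comp (hcl.comp h2m))).const_sub 1
    have := ENNReal.tendsto_ofReal h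
    simpa using this
  refine tendsto_of_tendsto_of_tendsto_of_le_of_le' hlow tendsto_const_nhds ?_ ?_
  · filter_upwards [h2m.eventually hp, h2m.eventually (eventually_ge_atTop 3)] with m hm hm3
    obtain ⟨N, hN⟩ : ∃ N, 2 * m = N + 1 := ⟨2 * m - 1, by omega⟩
    rw [hN] at hm hm3 ⊢
    have hkpos : 0 < Nat.clog 2 (N + 1) := Nat.clog_pos (by norm_num) (by omega)
    refine le_trans ?_ (rh_main N (by omega) hm.2 hkpos
      (m := Nat.sqrt (Nat.clog 2 (N + 1))) ?_ ?_)
    · apply ENNReal.ofReal_le_ofReal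
      have := rh_err_le hkpos
      linarith
    · calc N + 1 ≤ 2 ^ Nat.clog 2 (N + 1) := Nat.le_pow_clog (by norm_num) _
        _ ≤ _ := Nat.le_mul_of_pos_left _ (Nat.sqrt_pos.2 hkpos)
    · have h1 := rh_clog_le hm3
      have h2 := hm.1
      push_cast at h1 h2
      have hNp : (0 : ℝ) < (N : ℝ) + 1 := by positivity
      rw [le_div_iff₀ hNp]
      refine le_trans ?_ h2.le
      rw [le_div_iff₀ hNp]
      have : 17 * (Nat.clog 2 (N + 1) : ℝ) * (36 / ((N : ℝ) + 1) ^ 2) * ((N : ℝ) + 1)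
          * ((N : ℝ) + 1) = 612 * (Nat.clog 2 (N + 1) : ℝ) := by
        field_simp; ring
      rw [this]
      linarith
  · filter_upwards [h2m.eventually (eventually_ge_atTop 3)] with m hm3
    obtain ⟨N, hN⟩ : ∃ N, 2 * m = N + 1 := ⟨2 * m - 1, by omega⟩
    rw [hN]
    exact rh_measure_le_one _ _ _ _
end

section
/- Let ε = ε(n) and θ = θ(n) satisfy 100/√(log log n) < ε, θ ≤ 1. Set p = (1+ε)·log(n)/n and κ = ⌈(1+θ)n⌉. Then G_{n,p,κ} contains a rainbow Hamilton cycle with high probability. -/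
open MeasureTheory Filter

set_option linter.unusedSectionVars false

namespace RHC

section prob
variable {Ω : Type*} [Fintype Ω]

open Classical in
/-- Probability of `P` under the weight `W` on a finite type. -/
noncomputable def Pr (W : Ω → ℝ) (P : Ω → Prop) : ℝ := ∑ ω, if P ω then W ω else 0

theorem Pr_nonneg {W : Ω → ℝ} (hW : ∀ ω, 0 ≤ W ω) (P : Ω → Prop) : 0 ≤ Pr W P := by
  unfold Pr
  apply Finset.sum_nonneg
  intro ω _
  split_ifs
  · exact hW ω
  · exact le_rfl

theorem Pr_mono {W : Ω → ℝ} (hW : ∀ ω, 0 ≤ W ω) {P Q : Ω → Prop} (h : ∀ ω, P ω → Q ω) :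
    Pr W P ≤ Pr W Q := by
  unfold Pr
  apply Finset.sum_le_sum
  intro ω _
  by_cases hp : P ω
  · simp [hp, h ω hp]
  · simp only [hp, if_false]
    split_ifs
    · exact hW ω
    · exact le_rfl

theorem Pr_or_le {W : Ω → ℝ} (hW : ∀ ω, 0 ≤ W ω) (P Q : Ω → Prop) :
    Pr W (fun ω => P ω ∨ Q ω) ≤ Pr W P + Pr W Q := by
  unfold Pr
  rw [← Finset.sum_add_distrib]
  apply Finset.sum_le_sum
  intro ω _
  have := hW ω
  by_cases hp : P ω <;> by_cases hq : Q ω <;> simp [hp, hq, this]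

theorem Pr_false (W : Ω → ℝ) : Pr W (fun _ => False) = 0 := by simp [Pr]

theorem Pr_exists_le {β : Type*} {W : Ω → ℝ} (hW : ∀ ω, 0 ≤ W ω) (s : Finset β)
    (P : β → Ω → Prop) :
    Pr W (fun ω => ∃ b ∈ s, P b ω) ≤ ∑ b ∈ s, Pr W (P b) := by
  classical
  induction s using Finset.induction_on with
  | empty => simp [Pr_false]
  | insert a s ha ih =>
    rw [Finset.sum_insert ha]
    refine le_trans (Pr_mono hW (Q := fun ω => P a ω ∨ ∃ b ∈ s, P b ω) ?_) ?_
    · intro ω h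
      simpa using h
    · exact (Pr_or_le hW _ _).trans (by linarith)

theorem Pr_not {W : Ω → ℝ} (h1 : ∑ ω, W ω = 1) (P : Ω → Prop) :
    Pr W P = 1 - Pr W (fun ω => ¬ P ω) := by
  rw [← h1]
  unfold Pr
  rw [← Finset.sum_sub_distrib]
  apply Finset.sum_congr rfl
  intro ω _
  by_cases hp : P ω <;> simp [hp]

theorem Pr_le_one {W : Ω → ℝ} (hW : ∀ ω, 0 ≤ W ω) (h1 : ∑ ω, W ω = 1) (P : Ω → Prop) :
    Pr W P ≤ 1 := by
  rw [Pr_not h1]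
  linarith [Pr_nonneg hW (fun ω => ¬ P ω)]

end prob

section prod
variable {ι α : Type*} [Fintype ι] [DecidableEq ι] [Fintype α]

/-- Product weight. -/
noncomputable def PW (w : ι → α → ℝ) (f : ι → α) : ℝ := ∏ i, w i (f i)

theorem PW_nonneg {w : ι → α → ℝ} (hw : ∀ i a, 0 ≤ w i a) (f : ι → α) : 0 ≤ PW w f :=
  Finset.prod_nonneg fun i _ => hw i (f i)

theorem sum_PW {w : ι → α → ℝ} (h1 : ∀ i, ∑ a, w i a = 1) : ∑ f, PW w f = 1 := by
  unfold PW
  have := (Finset.prod_univ_sum (fun _ : ι => (Finset.univ : Finset α)) w).symm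
  simp only [Fintype.piFinset_univ] at this
  rw [this]
  simp [h1]

open Classical in
theorem Pr_cyl {w : ι → α → ℝ} (h1 : ∀ i, ∑ a, w i a = 1) (T : Finset ι) (A : ι → α → Prop) :
    Pr (PW w) (fun f => ∀ i ∈ T, A i (f i)) = ∏ i ∈ T, Pr (w i) (A i) := by
  have key := (Finset.prod_univ_sum (fun _ : ι => (Finset.univ : Finset α))
    (fun i a => if (i ∈ T → A i a) then w i a else 0)).symm
  simp only [Fintype.piFinset_univ] at key
  have e1 : Pr (PW w) (fun f => ∀ i ∈ T, A i (f i)) =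
      ∑ f : ι → α, ∏ i, (if (i ∈ T → A i (f i)) then w i (f i) else 0) := by
    unfold Pr PW
    apply Finset.sum_congr rfl
    intro f _
    by_cases h : ∀ i ∈ T, A i (f i)
    · rw [if_pos h]
      apply Finset.prod_congr rfl
      intro i _
      rw [if_pos (h i)]
    · rw [if_neg h]
      push Not at h
      obtain ⟨i, hi, hA⟩ := h
      symm
      apply Finset.prod_eq_zero (Finset.mem_univ i)
      rw [if_neg]
      exact fun h => hA (h hi)
  rw [e1, key]
  rw [← Finset.prod_subset (Finset.subset_univ T)]
  · apply Finset.prod_congr rfl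
    intro i hi
    unfold Pr
    apply Finset.sum_congr rfl
    intro a _
    simp [hi]
  · intro i _ hi
    simp [hi, h1]

/-- Block resampling. -/
theorem Pr_block {w : ι → α → ℝ} (hw : ∀ i a, 0 ≤ w i a) (h1 : ∀ i, ∑ a, w i a = 1)
    (T : Finset ι) (Q : (ι → α) → Prop) (β : ℝ)
    (hQ : ∀ f, Pr (PW w) (fun f' => Q (T.piecewise f' f)) ≤ β) : Pr (PW w) Q ≤ β := by
  classical
  let sw : (ι → α) × (ι → α) → (ι → α) × (ι → α) :=
    fun x => (T.piecewise x.2 x.1, T.piecewise x.1 x.2)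
  have hsw : Function.Involutive sw := by
    intro x
    apply Prod.ext <;> funext i <;> by_cases hi : i ∈ T <;> simp [sw, hi]
  have hWW : ∀ x, PW w (sw x).1 * PW w (sw x).2 = PW w x.1 * PW w x.2 := by
    intro x
    unfold PW
    rw [← Finset.prod_mul_distrib, ← Finset.prod_mul_distrib]
    apply Finset.prod_congr rfl
    intro i _
    by_cases hi : i ∈ T <;> simp [sw, hi, mul_comm]
  have e1 : ∑ x : (ι → α) × (ι → α), (if Q (sw x).1 then PW w x.1 * PW w x.2 else 0)
      = ∑ x : (ι → α) × (ι → α), (if Q x.1 then PW w x.1 * PW w x.2 else 0) := by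
    apply Fintype.sum_equiv hsw.toPerm
    intro x
    simp only [Function.Involutive.coe_toPerm]
    rw [hWW]
    by_cases hq : Q (sw x).1 <;> simp [hq]
  have e2 : ∑ x : (ι → α) × (ι → α), (if Q x.1 then PW w x.1 * PW w x.2 else 0)
      = Pr (PW w) Q := by
    rw [Fintype.sum_prod_type]
    unfold Pr
    apply Finset.sum_congr rfl
    intro f _
    by_cases hf : Q f
    · simp only [hf, if_true]
      rw [← Finset.mul_sum, sum_PW h1, mul_one]
    · simp [hf]
  rw [← e2, ← e1, Fintype.sum_prod_type]
  calc ∑ f, ∑ f', (if Q (sw (f, f')).1 then PW w f * PW w f' else 0)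
      = ∑ f, PW w f * Pr (PW w) (fun f' => Q (T.piecewise f' f)) := by
        apply Finset.sum_congr rfl
        intro f _
        unfold Pr
        rw [Finset.mul_sum]
        apply Finset.sum_congr rfl
        intro f' _
        simp only [sw]
        split_ifs <;> simp
    _ ≤ ∑ f, PW w f * β := by
        apply Finset.sum_le_sum
        intro f _
        exact mul_le_mul_of_nonneg_left (hQ f) (PW_nonneg hw f)
    _ = β := by rw [← Finset.sum_mul, sum_PW h1, one_mul]

/-- Splitting off one coordinate. -/
theorem Pr_split (w : ι → α → ℝ) (e : ι) (Q : (ι → α) → Prop) :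
    Pr (PW w) Q = ∑ h : {j // j ≠ e} → α, (∏ j, w j.1 (h j)) *
      Pr (w e) (fun a => Q ((Equiv.funSplitAt e α).symm (a, h))) := by
  classical
  unfold Pr PW
  rw [← Fintype.sum_equiv (Equiv.funSplitAt e α).symm
    (fun x => if Q ((Equiv.funSplitAt e α).symm x) then
      ∏ i, w i ((Equiv.funSplitAt e α).symm x i) else 0) _ (fun x => rfl)]
  rw [Fintype.sum_prod_type_right]
  apply Finset.sum_congr rfl
  intro h _
  rw [Finset.mul_sum]
  apply Finset.sum_congr rfl
  intro a _
  split_ifs with hq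
  · rw [Fintype.prod_eq_mul_prod_subtype_ne _ e, mul_comm]
    congr 1
    · apply Finset.prod_congr rfl
      intro j _
      simp [Equiv.funSplitAt, Equiv.piSplitAt, j.2]
    · simp [Equiv.funSplitAt, Equiv.piSplitAt]
  · simp

/-- One-coordinate-at-a-time comparison of product weights. -/
theorem Pr_compare {w w' : ι → α → ℝ} (hw : ∀ i a, 0 ≤ w i a) (hw' : ∀ i a, 0 ≤ w' i a)
    (Q : (ι → α) → Prop)
    (hQ : ∀ e f, Pr (w e) (fun a => Q (Function.update f e a)) ≤
      Pr (w' e) (fun a => Q (Function.update f e a))) :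
    Pr (PW w) Q ≤ Pr (PW w') Q := by
  classical
  have key : ∀ S : Finset ι,
      Pr (PW w) Q ≤ Pr (PW fun i => if i ∈ S then w' i else w i) Q := by
    intro S
    induction S using Finset.induction_on with
    | empty => simp
    | insert e S he ih =>
      refine ih.trans ?_
      rw [Pr_split _ e, Pr_split _ e]
      apply Finset.sum_le_sum
      intro h _
      have e1 : ∏ j : {j // j ≠ e}, (if j.1 ∈ insert e S then w' j.1 else w j.1) (h j)
          = ∏ j : {j // j ≠ e}, (if j.1 ∈ S then w' j.1 else w j.1) (h j) := by
        apply Finset.prod_congr rfl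
        intro j _
        simp [j.2]
      rw [e1]
      apply mul_le_mul_of_nonneg_left
      · simp only [he, Finset.mem_insert_self, if_true, if_false]
        by_cases hα : Nonempty α
        · obtain ⟨a0⟩ := hα
          have e2 : ∀ a, (Equiv.funSplitAt e α).symm (a, h) =
              Function.update ((Equiv.funSplitAt e α).symm (a0, h)) e a := by
            intro a
            funext j
            by_cases hj : j = e
            · subst hj
              simp [Equiv.funSplitAt, Equiv.piSplitAt]
            · simp [Equiv.funSplitAt, Equiv.piSplitAt, hj]
          have e3 : (fun a => Q ((Equiv.funSplitAt e α).symm (a, h))) = fun a =>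
              Q (Function.update ((Equiv.funSplitAt e α).symm (a0, h)) e a) :=
            funext fun a => by rw [← e2 a]
          rw [e3]
          exact hQ e _
        · have : IsEmpty α := not_nonempty_iff.mp hα
          simp [Pr]
      · apply Finset.prod_nonneg
        intro j _
        split_ifs
        · exact hw' _ _
        · exact hw _ _
  simpa using key Finset.univ

end prod
end RHC

namespace RHC

section posa
variable {n : ℕ}

open Classical in
/-- External neighbourhood. -/
noncomputable def nbr (Γ : Set (Sym2 (Fin n))) (S : Finset (Fin n)) : Finset (Fin n) :=
  Finset.univ.filter fun v => v ∉ S ∧ ∃ u ∈ S, s(u, v) ∈ Γ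

/-- `p 0, …, p k` is a path. -/
def IsPath (Γ : Set (Sym2 (Fin n))) (p : ℕ → Fin n) (k : ℕ) : Prop :=
  (∀ i ≤ k, ∀ j ≤ k, p i = p j → i = j) ∧ ∀ i < k, s(p i, p (i + 1)) ∈ Γ

/-- Hamiltonicity. -/
def Ham (Γ : Set (Sym2 (Fin n))) : Prop :=
  ∃ c : ZMod n → Fin n, Function.Bijective c ∧ ∀ i, s(c i, c (i + 1)) ∈ Γ

/-- Pósa rotation. -/
def rot (p : ℕ → Fin n) (k i : ℕ) : ℕ → Fin n := fun j => if j ≤ i then p j else p (k + i + 1 - j)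

/-- Paths reachable by rotations. -/
inductive Rot (Γ : Set (Sym2 (Fin n))) (p0 : ℕ → Fin n) (k : ℕ) : (ℕ → Fin n) → Prop
  | refl : Rot Γ p0 k p0
  | step (q : ℕ → Fin n) (i : ℕ) : Rot Γ p0 k q → i < k → s(q k, q i) ∈ Γ →
      Rot Γ p0 k (rot q k i)

/-- Adjacent along the path. -/
def Nb (p : ℕ → Fin n) (k : ℕ) (u v : Fin n) : Prop :=
  ∃ i < k, (p i = u ∧ p (i + 1) = v) ∨ (p i = v ∧ p (i + 1) = u)

theorem rot_path {Γ : Set (Sym2 (Fin n))} {q : ℕ → Fin n} {k i : ℕ} (hq : IsPath Γ q k)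
    (hi : i < k) (he : s(q k, q i) ∈ Γ) : IsPath Γ (rot q k i) k := by
  constructor
  · intro a ha b hb hab
    unfold rot at hab
    split_ifs at hab with h1 h2 h2
    · exact hq.1 a ha b hb hab
    · have := hq.1 a ha _ (by omega) hab
      omega
    · have := hq.1 _ (by omega) b hb hab
      omega
    · have := hq.1 _ (by omega) _ (by omega) hab
      omega
  · intro a ha
    unfold rot
    split_ifs with h1 h2 h2
    · exact hq.2 a ha
    · have : a = i := by omega
      subst this
      rw [show k + a + 1 - (a + 1) = k by omega, Sym2.eq_swap]
      exact he
    · omega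
    · have := hq.2 (k + i + 1 - (a + 1)) (by omega)
      rw [show k + i + 1 - (a + 1) + 1 = k + i + 1 - a by omega] at this
      rw [Sym2.eq_swap]
      exact this

theorem Rot.path {Γ : Set (Sym2 (Fin n))} {p0 q : ℕ → Fin n} {k : ℕ} (hp : IsPath Γ p0 k)
    (h : Rot Γ p0 k q) : IsPath Γ q k ∧ q 0 = p0 0 := by
  induction h with
  | refl => exact ⟨hp, rfl⟩
  | step q i _ hi he ih =>
    refine ⟨rot_path ih.1 hi he, ?_⟩
    simp [rot, ih.2]

theorem rot_last (q : ℕ → Fin n) {k i : ℕ} (hi : i < k) : rot q k i k = q (i + 1) := by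
  unfold rot
  rw [if_neg (by omega)]
  congr 1
  omega

theorem Rot.inv {Γ : Set (Sym2 (Fin n))} {p0 q : ℕ → Fin n} {k : ℕ}
    (h : Rot Γ p0 k q) {u : Fin n} (hu : ∀ q', Rot Γ p0 k q' → u ≠ q' k)
    (hv : ∀ v, Nb p0 k u v → ∀ q', Rot Γ p0 k q' → v ≠ q' k) :
    ∀ v, Nb q k u v → Nb p0 k u v := by
  induction h with
  | refl => exact fun v h => h
  | step q i hq hi he ih =>
    have hlast : ¬ Nb p0 k u (q (i + 1)) := fun hN =>
      hv _ hN _ (Rot.step q i hq hi he) (rot_last q hi).symm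
    have hui : u ≠ q i := by
      intro h
      exact hlast (ih _ ⟨i, hi, Or.inl ⟨h.symm, rfl⟩⟩)
    have huk := hu q hq
    rintro v ⟨j, hj, hjv⟩
    apply ih
    unfold rot at hjv
    rcases lt_trichotomy j i with hji | hji | hji
    · rw [if_pos (by omega), if_pos (by omega)] at hjv
      exact ⟨j, hj, hjv⟩
    · subst hji
      rw [if_pos (by omega), if_neg (by omega), show k + j + 1 - (j + 1) = k by omega] at hjv
      rcases hjv with h | h
      · exact absurd h.1.symm hui
      · exact absurd h.2.symm huk
    · rw [if_neg (by omega), if_neg (by omega),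
        show k + i + 1 - j = (k + i + 1 - (j + 1)) + 1 by omega] at hjv
      exact ⟨k + i + 1 - (j + 1), by omega, by tauto⟩

theorem path_extend {Γ : Set (Sym2 (Fin n))} {q : ℕ → Fin n} {k : ℕ} (hq : IsPath Γ q k)
    {u : Fin n} (hu : ∀ i ≤ k, q i ≠ u) (he : s(q k, u) ∈ Γ) : ∃ p, IsPath Γ p (k + 1) := by
  refine ⟨fun j => if j ≤ k then q j else u, ?_, ?_⟩
  · intro a ha b hb hab
    dsimp only at hab
    split_ifs at hab with h1 h2 h2
    · exact hq.1 a h1 b h2 hab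
    · exact absurd hab (hu a h1)
    · exact absurd hab.symm (hu b h2)
    · omega
  · intro a ha
    dsimp only
    rw [if_pos (by omega)]
    split_ifs with h
    · exact hq.2 a (by omega)
    · rw [show a = k by omega]
      exact he

/-- Pósa's lemma. -/
theorem posa {Γ : Set (Sym2 (Fin n))} {m k : ℕ}
    (hexp : ∀ S : Finset (Fin n), S.card ≤ m → 2 * S.card ≤ (nbr Γ S).card)
    {p0 : ℕ → Fin n} (hp : IsPath Γ p0 k) (hmax : ¬ ∃ p, IsPath Γ p (k + 1)) :
    ∃ B : Finset (Fin n), m < B.card ∧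
      ∀ y ∈ B, ∃ p, IsPath Γ p k ∧ p 0 = p0 0 ∧ p k = y := by
  classical
  set S : Finset (Fin n) := Finset.univ.filter fun v => ∃ q, Rot Γ p0 k q ∧ q k = v with hS
  have memS : ∀ v, v ∈ S ↔ ∃ q, Rot Γ p0 k q ∧ q k = v := by intro v; simp [hS]
  refine ⟨S, ?_, ?_⟩
  swap
  · intro y hy
    obtain ⟨q, hq, rfl⟩ := (memS y).1 hy
    exact ⟨q, (hq.path hp).1, (hq.path hp).2, rfl⟩
  by_contra hcard
  push Not at hcard
  have h2 := hexp S hcard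
  set J : Finset ℕ := (Finset.range (k + 1)).filter fun j => p0 j ∈ S with hJ
  have hJcard : J.card ≤ S.card := by
    apply Finset.card_le_card_of_injOn p0
    · intro j hj
      simp only [hJ, Finset.coe_filter, Set.mem_ofPred_eq] at hj
      exact hj.2
    · intro a ha b hb hab
      simp only [hJ, Finset.coe_filter, Set.mem_ofPred_eq, Finset.mem_range] at ha hb
      exact hp.1 a (by omega) b (by omega) hab
  have hkJ : k ∈ J := by
    simp only [hJ, Finset.mem_filter, Finset.mem_range]
    exact ⟨by omega, (memS _).2 ⟨p0, Rot.refl, rfl⟩⟩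
  have hsub : nbr Γ S ⊆ J.image (fun j => p0 (j - 1)) ∪ (J.erase k).image (fun j => p0 (j + 1)) := by
    intro u hu
    simp only [nbr, Finset.mem_filter, Finset.mem_univ, true_and] at hu
    obtain ⟨huS, s, hs, hsu⟩ := hu
    obtain ⟨q, hq, rfl⟩ := (memS s).1 hs
    have hqp := (hq.path hp).1
    have hu' : ∀ q', Rot Γ p0 k q' → u ≠ q' k := by
      intro q' hq' h
      exact huS ((memS u).2 ⟨q', hq', h.symm⟩)
    have hex : ∃ i ≤ k, q i = u := by
      by_contra hno
      push Not at hno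
      exact hmax (path_extend hqp hno hsu)
    obtain ⟨i, hik, rfl⟩ := hex
    have hik' : i < k := by
      rcases Nat.lt_or_ge i k with h | h
      · exact h
      · exfalso
        have : i = k := by omega
        subst this
        exact hu' q hq rfl
    have hr := Rot.step q i hq hik' hsu
    have : ∃ v, Nb p0 k (q i) v ∧ v ∈ S := by
      by_contra hno
      push Not at hno
      have h3 := hq.inv hu' (fun v hv q' hq' h => hno v hv ((memS v).2 ⟨q', hq', h.symm⟩))
        (q (i + 1)) ⟨i, hik', Or.inl ⟨rfl, rfl⟩⟩
      exact hno _ h3 ((memS _).2 ⟨_, hr, rot_last q hik'⟩)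
    obtain ⟨v, ⟨j, hj, h⟩, hv⟩ := this
    rw [Finset.mem_union, Finset.mem_image, Finset.mem_image]
    rcases h with ⟨ha, hb⟩ | ⟨ha, hb⟩
    · left
      refine ⟨j + 1, ?_, ha⟩
      simp only [hJ, Finset.mem_filter, Finset.mem_range]
      exact ⟨by omega, hb ▸ hv⟩
    · right
      refine ⟨j, ?_, hb⟩
      simp only [hJ, Finset.mem_erase, Finset.mem_filter, Finset.mem_range]
      exact ⟨by omega, by omega, ha ▸ hv⟩
  have hc := (Finset.card_le_card hsub).trans (Finset.card_union_le _ _)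
  have hc1 : (J.image (fun j => p0 (j - 1))).card ≤ J.card := Finset.card_image_le
  have hc2 : ((J.erase k).image (fun j => p0 (j + 1))).card ≤ (J.erase k).card :=
    Finset.card_image_le
  have hc3 := Finset.card_erase_of_mem hkJ
  have hpos : 0 < J.card := Finset.card_pos.2 ⟨k, hkJ⟩
  omega

theorem path_rev {Γ : Set (Sym2 (Fin n))} {q : ℕ → Fin n} {k : ℕ} (hq : IsPath Γ q k) :
    IsPath Γ (fun j => q (k - j)) k := by
  constructor
  · intro a ha b hb hab
    have := hq.1 _ (by omega) _ (by omega) hab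
    omega
  · intro i hi
    have := hq.2 (k - (i + 1)) (by omega)
    rw [show k - (i + 1) + 1 = k - i by omega] at this
    rw [Sym2.eq_swap]
    exact this

theorem path_mono {Γ Γ' : Set (Sym2 (Fin n))} (h : Γ ⊆ Γ') {q : ℕ → Fin n} {k : ℕ}
    (hq : IsPath Γ q k) : IsPath Γ' q k := ⟨hq.1, fun i hi => h (hq.2 i hi)⟩

theorem path_trunc {Γ : Set (Sym2 (Fin n))} {q : ℕ → Fin n} {k j : ℕ}
    (hq : IsPath Γ q k) (hj : j ≤ k) : IsPath Γ q j :=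
  ⟨fun a ha b hb => hq.1 a (by omega) b (by omega), fun i hi => hq.2 i (by omega)⟩

theorem path_len {Γ : Set (Sym2 (Fin n))} {q : ℕ → Fin n} {k : ℕ} (hq : IsPath Γ q k) :
    k < n := by
  have : (Finset.range (k + 1)).card ≤ (Finset.univ : Finset (Fin n)).card := by
    apply Finset.card_le_card_of_injOn q (fun _ _ => Finset.mem_coe.2 (Finset.mem_univ _))
    intro a ha b hb hab
    simp only [Finset.coe_range, Set.mem_Iio] at ha hb
    exact hq.1 a (by omega) b (by omega) hab
  simp at this
  omega

/-- A closed path is a Hamilton cycle, or can be opened up and extended. -/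
theorem close_path {Γ : Set (Sym2 (Fin n))} {q : ℕ → Fin n} {k : ℕ} (hq : IsPath Γ q k)
    (hc : s(q k, q 0) ∈ Γ)
    (hconn : ∀ S : Finset (Fin n), S.Nonempty → S ≠ Finset.univ → (nbr Γ S).Nonempty) :
    Ham Γ ∨ ∃ p, IsPath Γ p (k + 1) := by
  classical
  have hkn := path_len hq
  have hmod : ∀ j, s(q (j % (k + 1)), q ((j + 1) % (k + 1))) ∈ Γ := by
    intro j
    have hlt := Nat.mod_lt j (show 0 < k + 1 by omega)
    rcases Nat.lt_or_ge (j % (k + 1)) k with h | h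
    · have : (j + 1) % (k + 1) = j % (k + 1) + 1 := by
        rw [Nat.add_mod, Nat.mod_eq_of_lt]
        · rcases Nat.eq_zero_or_pos k with h0 | h0
          · omega
          · rw [Nat.mod_eq_of_lt (show 1 < k + 1 by omega)]
        · rcases Nat.eq_zero_or_pos k with h0 | h0
          · omega
          · rw [Nat.mod_eq_of_lt (show 1 < k + 1 by omega)]
            omega
      rw [this]
      exact hq.2 _ h
    · have h1 : j % (k + 1) = k := by omega
      have : (j + 1) % (k + 1) = 0 := by
        rw [← Nat.mod_add_mod, h1, Nat.mod_self]
      rw [this, h1]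
      exact hc
  rcases Nat.lt_or_ge (k + 1) n with hlt | hge
  · right
    set S : Finset (Fin n) := (Finset.range (k + 1)).image q with hS
    have hSne : S.Nonempty := ⟨q 0, Finset.mem_image.2 ⟨0, by simp, rfl⟩⟩
    have hSu : S ≠ Finset.univ := by
      intro h
      have : S.card ≤ k + 1 := Finset.card_image_le.trans (by simp)
      rw [h] at this
      simp at this
      omega
    obtain ⟨z, hz⟩ := hconn S hSne hSu
    simp only [nbr, Finset.mem_filter, Finset.mem_univ, true_and] at hz
    obtain ⟨hzS, u, hu, huz⟩ := hz
    obtain ⟨i, hi, rfl⟩ := Finset.mem_image.1 hu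
    rw [Finset.mem_range] at hi
    have hq' : IsPath Γ (fun j => q ((i + 1 + j) % (k + 1))) k := by
      constructor
      · intro a ha b hb hab
        have h1 := hq.1 _ (Nat.lt_succ_iff.1 (Nat.mod_lt _ (by omega))) _
          (Nat.lt_succ_iff.1 (Nat.mod_lt _ (by omega))) hab
        have h2 : (i + 1 + a) ≡ (i + 1 + b) [MOD (k + 1)] := h1
        have h3 : a ≡ b [MOD (k + 1)] := Nat.ModEq.add_left_cancel' _ h2
        exact Nat.ModEq.eq_of_lt_of_lt h3 (by omega) (by omega)
      · intro a _
        exact hmod (i + 1 + a)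
    refine path_extend hq' (u := z) ?_ ?_
    · intro j _ h
      apply hzS
      rw [← h]
      exact Finset.mem_image.2 ⟨_, Finset.mem_range.2 (Nat.mod_lt _ (by omega)), rfl⟩
    · have : (i + 1 + k) % (k + 1) = i := by
        rw [show i + 1 + k = i + (k + 1) by ring, Nat.add_mod_right, Nat.mod_eq_of_lt hi]
      rw [this]
      exact huz
  · left
    have hn : n = k + 1 := by omega
    subst hn
    have hbij : Function.Bijective (fun i : ZMod (k + 1) => q i.val) := by
      rw [Fintype.bijective_iff_injective_and_card]
      constructor
      · intro a b hab
        have ha := ZMod.val_lt a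
        have hb := ZMod.val_lt b
        exact ZMod.val_injective _ (hq.1 _ (by omega) _ (by omega) hab)
      · simp [ZMod.card]
    refine ⟨fun i => q i.val, hbij, ?_⟩
    intro i
    have h := hmod i.val
    rw [Nat.mod_eq_of_lt (ZMod.val_lt i)] at h
    have : (i + 1).val = (i.val + 1) % (k + 1) := by
      rw [ZMod.val_add]
      rcases Nat.eq_zero_or_pos k with h0 | h0
      · subst h0
        simp [Nat.mod_one]
      · rw [ZMod.val_one'' (by omega)]
    simp only [this]
    exact h

theorem nbr_mono {Γ Γ' : Set (Sym2 (Fin n))} (h : Γ ⊆ Γ') (S : Finset (Fin n)) :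
    nbr Γ S ⊆ nbr Γ' S := by
  classical
  intro v hv
  simp only [nbr, Finset.mem_filter, Finset.mem_univ, true_and] at hv ⊢
  obtain ⟨h1, u, hu, he⟩ := hv
  exact ⟨h1, u, hu, h he⟩

/-- Many boosters. -/
theorem boosters {Γ : Set (Sym2 (Fin n))} {m : ℕ} (hn : 0 < n)
    (hexp : ∀ S : Finset (Fin n), S.card ≤ m → 2 * S.card ≤ (nbr Γ S).card)
    (hconn : ∀ S : Finset (Fin n), S.Nonempty → S ≠ Finset.univ → (nbr Γ S).Nonempty)
    (hH : ¬ Ham Γ) :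
    ∃ B : Finset (Sym2 (Fin n)), (∀ e ∈ B, e ∉ Γ) ∧ m * m ≤ 2 * B.card ∧
      ∀ e ∈ B, ∀ j, (∃ p, IsPath Γ p j) →
        Ham (insert e Γ) ∨ ∃ p, IsPath (insert e Γ) p (j + 1) := by
  classical
  have hex : ∃ k, (∃ p, IsPath Γ p k) ∧ ¬ ∃ p, IsPath Γ p (k + 1) := by
    by_contra hno
    push Not at hno
    have : ∀ k, ∃ p, IsPath Γ p k := by
      intro k
      induction k with
      | zero => exact ⟨fun _ => ⟨0, hn⟩, fun i hi j hj _ => by omega, fun i hi => by omega⟩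
      | succ k ih =>
        obtain ⟨p, hp⟩ := ih
        exact hno k ⟨p, hp⟩
    obtain ⟨p, hp⟩ := this n
    exact absurd (path_len hp) (lt_irrefl _)
  obtain ⟨k, ⟨p0, hp0⟩, hmax⟩ := hex
  obtain ⟨A, hA, hAp⟩ := posa hexp hp0 hmax
  have hB : ∀ x ∈ A, ∃ B : Finset (Fin n), m < B.card ∧
      ∀ y ∈ B, ∃ p, IsPath Γ p k ∧ p 0 = x ∧ p k = y := by
    intro x hx
    obtain ⟨p, hp, -, hpx⟩ := hAp x hx
    obtain ⟨B, hB1, hB2⟩ := posa hexp (path_rev hp) hmax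
    refine ⟨B, hB1, fun y hy => ?_⟩
    obtain ⟨p', h1, h2, h3⟩ := hB2 y hy
    exact ⟨p', h1, by simpa [hpx] using h2, h3⟩
  choose! Bf hBf1 hBf2 using hB
  set T : Finset (Fin n × Fin n) := A.biUnion fun x => (Bf x).image fun y => (x, y) with hT
  have hTcard : m * m ≤ T.card := by
    rw [hT, Finset.card_biUnion]
    · calc m * m ≤ A.card * m := Nat.mul_le_mul_right _ hA.le
        _ = ∑ x ∈ A, m := by simp
        _ ≤ _ := by
          apply Finset.sum_le_sum
          intro x hx
          rw [Finset.card_image_of_injective _ (fun a b h => (Prod.ext_iff.1 h).2)]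
          exact (hBf1 x hx).le
    · intro x _ y _ hxy
      rw [Function.onFun, Finset.disjoint_left]
      intro z hz hz'
      obtain ⟨a, -, rfl⟩ := Finset.mem_image.1 hz
      obtain ⟨b, -, hb⟩ := Finset.mem_image.1 hz'
      exact hxy (Prod.ext_iff.1 hb).1.symm
  have hTp : ∀ z ∈ T, ∃ p, IsPath Γ p k ∧ p 0 = z.1 ∧ p k = z.2 := by
    intro z hz
    obtain ⟨x, hx, hz⟩ := Finset.mem_biUnion.1 hz
    obtain ⟨y, hy, rfl⟩ := Finset.mem_image.1 hz
    exact hBf2 x hx y hy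
  refine ⟨T.image fun z => s(z.1, z.2), ?_, ?_, ?_⟩
  · intro e he heΓ
    obtain ⟨z, hz, rfl⟩ := Finset.mem_image.1 he
    obtain ⟨p, hp, h0, hk⟩ := hTp z hz
    rcases close_path hp (by rw [h0, hk, Sym2.eq_swap]; exact heΓ) hconn with h | h
    · exact hH h
    · exact hmax h
  · refine hTcard.trans (Finset.card_le_mul_card_image _ _ ?_)
    intro e he
    obtain ⟨z, hz, rfl⟩ := Finset.mem_image.1 he
    refine (Finset.card_le_card (t := {z, (z.2, z.1)}) ?_).trans Finset.card_le_two
    intro z' hz'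
    have h := (Finset.mem_filter.1 hz').2
    rw [Sym2.eq_iff] at h
    rcases h with ⟨h1, h2⟩ | ⟨h1, h2⟩
    · simp [Prod.ext_iff, h1, h2]
    · simp [Prod.ext_iff, h1, h2]
  · intro e he j ⟨q, hq⟩
    obtain ⟨z, hz, rfl⟩ := Finset.mem_image.1 he
    obtain ⟨p, hp, h0, hk⟩ := hTp z hz
    have hjk : j ≤ k := by
      by_contra hlt
      exact hmax ⟨q, path_trunc hq (by omega)⟩
    have hsub : Γ ⊆ insert s(z.1, z.2) Γ := Set.subset_insert _ _
    rcases close_path (path_mono hsub hp)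
      (by rw [h0, hk, Sym2.eq_swap]; exact Set.mem_insert _ _)
      (fun S h1 h2 => (hconn S h1 h2).mono (nbr_mono hsub S)) with h | ⟨p', hp'⟩
    · exact Or.inl h
    · exact Or.inr ⟨p', path_trunc hp' (by omega)⟩

/-- Iterating boosters. -/
theorem ham_of_boosters {Γ : Set (Sym2 (Fin n))} (hn : 0 < n) (H : Finset (Sym2 (Fin n)))
    (hstep : ∀ Δ : Finset (Sym2 (Fin n)), Δ ⊆ H → Δ.card ≤ n → ¬ Ham (Γ ∪ Δ) →
      ∃ e ∈ H, ∀ j, (∃ p, IsPath (Γ ∪ Δ) p j) →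
        Ham (insert e (Γ ∪ Δ)) ∨ ∃ p, IsPath (insert e (Γ ∪ Δ)) p (j + 1)) :
    Ham (Γ ∪ H) := by
  classical
  have hmono : ∀ Δ : Finset (Sym2 (Fin n)), Δ ⊆ H → Ham (Γ ∪ Δ) → Ham (Γ ∪ H) := by
    rintro Δ hΔ ⟨c, hc, h⟩
    exact ⟨c, hc, fun i => Set.union_subset_union_right _ (Finset.coe_subset.2 hΔ) (h i)⟩
  by_contra hno
  have key : ∀ j ≤ n, ∃ Δ : Finset (Sym2 (Fin n)), Δ ⊆ H ∧ Δ.card ≤ j ∧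
      ∃ p, IsPath (Γ ∪ Δ) p j := by
    intro j
    induction j with
    | zero =>
      intro _
      exact ⟨∅, by simp, by simp, fun _ => ⟨0, hn⟩, fun i hi j hj _ => by omega,
        fun i hi => by omega⟩
    | succ j ih =>
      intro hj
      obtain ⟨Δ, h1, h2, h3⟩ := ih (by omega)
      obtain ⟨e, he, h⟩ := hstep Δ h1 (by omega) (fun h => hno (hmono Δ h1 h))
      have hsub : insert e Δ ⊆ H := Finset.insert_subset he h1
      have heq : insert e (Γ ∪ (Δ : Set (Sym2 (Fin n)))) = Γ ∪ (insert e Δ : Finset _) := by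
        rw [Finset.coe_insert, Set.union_insert]
      rcases h j h3 with h | h
      · rw [heq] at h
        exact absurd (hmono _ hsub h) hno
      · rw [heq] at h
        exact ⟨insert e Δ, hsub, (Finset.card_insert_le _ _).trans (by omega), h⟩
  obtain ⟨Δ, -, -, p, hp⟩ := key n le_rfl
  exact absurd (path_len hp) (lt_irrefl _)

end posa
end RHC

namespace RHC

section core
variable {n : ℕ}

/-- Any two disjoint sets of size at least `m` are joined by an edge. -/
def Joined (Γ : Set (Sym2 (Fin n))) (m : ℕ) : Prop :=
  ∀ A B : Finset (Fin n), Disjoint A B → m ≤ A.card → m ≤ B.card → ∃ a ∈ A, ∃ b ∈ B, s(a, b) ∈ Γ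

theorem mem_nbr {Γ : Set (Sym2 (Fin n))} {S : Finset (Fin n)} {v : Fin n} :
    v ∈ nbr Γ S ↔ v ∉ S ∧ ∃ u ∈ S, s(u, v) ∈ Γ := by
  classical
  simp [nbr]

theorem core_exists {Γ : Set (Sym2 (Fin n))} {m : ℕ} (hJ : Joined Γ m) (R : Finset (Fin n))
    (hR : 9 * m ≤ R.card) :
    ∃ L : Finset (Fin n), L.card ≤ m ∧ ∀ S : Finset (Fin n), Disjoint S L → S.card ≤ m →
      3 * S.card ≤ ((nbr Γ S ∩ R) \ L).card := by
  classical
  obtain ⟨X, hX, hmax⟩ := Finset.exists_max_image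
    ((Finset.univ : Finset (Finset (Fin n))).filter fun X =>
      X.card ≤ m ∧ (nbr Γ X ∩ R).card ≤ 3 * X.card) Finset.card
    ⟨∅, Finset.mem_filter.2 ⟨Finset.mem_univ _, by simp, by simp [nbr]⟩⟩
  simp only [Finset.mem_filter, Finset.mem_univ, true_and] at hX hmax
  refine ⟨X, hX.1, ?_⟩
  intro S hSX hSm
  by_contra hlt
  push Not at hlt
  have hU : (X ∪ S).card = X.card + S.card := Finset.card_union_of_disjoint hSX.symm
  have hsub : nbr Γ (X ∪ S) ∩ R ⊆ (nbr Γ X ∩ R) ∪ ((nbr Γ S ∩ R) \ X) := by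
    intro v hv
    simp only [Finset.mem_inter, mem_nbr, Finset.mem_union, Finset.mem_sdiff] at hv ⊢
    obtain ⟨⟨h1, u, hu, he⟩, hvR⟩ := hv
    rcases hu with hu | hu
    · exact Or.inl ⟨⟨fun h => h1 (Or.inl h), u, hu, he⟩, hvR⟩
    · exact Or.inr ⟨⟨⟨fun h => h1 (Or.inr h), u, hu, he⟩, hvR⟩, fun h => h1 (Or.inl h)⟩
  have hc := (Finset.card_le_card hsub).trans (Finset.card_union_le _ _)
  have hbig : m < (X ∪ S).card := by
    by_contra hle
    push Not at hle
    have := hmax (X ∪ S) ⟨hle, by omega⟩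
    omega
  have hrest : m ≤ (R \ ((X ∪ S) ∪ (nbr Γ (X ∪ S) ∩ R))).card := by
    have h1 := Finset.le_card_sdiff ((X ∪ S) ∪ (nbr Γ (X ∪ S) ∩ R)) R
    have h2 := Finset.card_union_le (X ∪ S) (nbr Γ (X ∪ S) ∩ R)
    omega
  obtain ⟨a, ha, b, hb, hab⟩ := hJ (X ∪ S) (R \ ((X ∪ S) ∪ (nbr Γ (X ∪ S) ∩ R)))
    (by
      rw [Finset.disjoint_left]
      intro a ha hb
      exact (Finset.mem_sdiff.1 hb).2 (Finset.mem_union_left _ ha)) hbig.le hrest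
  have hb1 := (Finset.mem_sdiff.1 hb).1
  have hb2 := (Finset.mem_sdiff.1 hb).2
  rw [Finset.mem_union, not_or] at hb2
  exact hb2.2 (Finset.mem_inter.2 ⟨mem_nbr.2 ⟨hb2.1, a, ha, hab⟩, hb1⟩)

/-- Edges of a system of cherries. -/
def cher (L : Finset (Fin n)) (y : Fin n → Bool → Fin n) : Set (Sym2 (Fin n)) :=
  {e | ∃ b ∈ L, ∃ i, e = s(b, y b i)}

theorem cher_expand {Γ : Set (Sym2 (Fin n))} {m : ℕ} {L R : Finset (Fin n)}
    (hL : ∀ S : Finset (Fin n), Disjoint S L → S.card ≤ m →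
      3 * S.card ≤ ((nbr Γ S ∩ R) \ L).card)
    {y : Fin n → Bool → Fin n} (hy : ∀ b ∈ L, ∀ i, y b i ∉ R ∧ y b i ∉ L)
    (hinj : ∀ b ∈ L, ∀ i, ∀ b' ∈ L, ∀ i', y b i = y b' i' → b = b' ∧ i = i')
    (S : Finset (Fin n)) (hS : S.card ≤ m) :
    2 * S.card ≤ (nbr (Γ ∪ cher L y) S).card := by
  classical
  set S1 := S ∩ L with hS1
  set S2 := S \ L with hS2
  have hcS : S1.card + S2.card = S.card := Finset.card_inter_add_card_sdiff S L
  set T1 := (S1 ×ˢ (Finset.univ : Finset Bool)).image (fun z => y z.1 z.2) with hT1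
  have hT1c : T1.card = 2 * S1.card := by
    rw [hT1, Finset.card_image_of_injOn, Finset.card_product]
    · simp [mul_comm]
    · rintro ⟨b, i⟩ hb ⟨b', i'⟩ hb' h
      simp only [hS1, Finset.coe_product, Set.mem_prod, Finset.mem_coe, Finset.mem_inter] at hb hb'
      obtain ⟨h1, h2⟩ := hinj b hb.1.2 i b' hb'.1.2 i' h
      rw [h1, h2]
  set T2 := (nbr Γ S2 ∩ R) \ L with hT2
  have hT2c : 3 * S2.card ≤ T2.card := by
    apply hL
    · rw [Finset.disjoint_left]
      intro a ha
      exact (Finset.mem_sdiff.1 ha).2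
    · omega
  have hT1m : ∀ v ∈ T1, v ∉ R ∧ v ∉ L ∧ ∃ b ∈ S1, ∃ i, v = y b i := by
    intro v hv
    obtain ⟨⟨b, i⟩, hb, rfl⟩ := Finset.mem_image.1 hv
    have hb' := (Finset.mem_product.1 hb).1
    have hbL := (Finset.mem_inter.1 hb').2
    exact ⟨(hy b hbL i).1, (hy b hbL i).2, b, hb', i, rfl⟩
  have hdis : Disjoint (T1 \ S2) T2 := by
    rw [Finset.disjoint_left]
    intro v hv hv2
    have h1 := (hT1m v (Finset.mem_sdiff.1 hv).1).1
    exact h1 (Finset.mem_inter.1 (Finset.mem_sdiff.1 hv2).1).2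
  have hsub : (T1 \ S2) ∪ T2 ⊆ nbr (Γ ∪ cher L y) S := by
    intro v hv
    rw [mem_nbr]
    rcases Finset.mem_union.1 hv with hv | hv
    · obtain ⟨hv1, hv2⟩ := Finset.mem_sdiff.1 hv
      obtain ⟨-, hvL, b, hb, i, rfl⟩ := hT1m v hv1
      refine ⟨fun h => hv2 (Finset.mem_sdiff.2 ⟨h, hvL⟩), b, (Finset.mem_inter.1 hb).1, ?_⟩
      exact Or.inr ⟨b, (Finset.mem_inter.1 hb).2, i, rfl⟩
    · obtain ⟨hv1, hvL⟩ := Finset.mem_sdiff.1 hv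
      obtain ⟨hv3, u, hu, he⟩ := mem_nbr.1 (Finset.mem_inter.1 hv1).1
      exact ⟨fun h => hv3 (Finset.mem_sdiff.2 ⟨h, hvL⟩), u, (Finset.mem_sdiff.1 hu).1, Or.inl he⟩
  have hc := Finset.card_le_card hsub
  rw [Finset.card_union_of_disjoint hdis] at hc
  have h3 := Finset.le_card_sdiff S2 T1
  omega

theorem cher_conn {Γ : Set (Sym2 (Fin n))} {m : ℕ} (hJ : Joined Γ m) {L R : Finset (Fin n)}
    (hL : ∀ S : Finset (Fin n), Disjoint S L → S.card ≤ m →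
      3 * S.card ≤ ((nbr Γ S ∩ R) \ L).card)
    {y : Fin n → Bool → Fin n} (hy : ∀ b ∈ L, ∀ i, y b i ∉ R ∧ y b i ∉ L)
    (S : Finset (Fin n)) (hS : S.Nonempty) (hSu : S ≠ Finset.univ) :
    (nbr (Γ ∪ cher L y) S).Nonempty := by
  classical
  by_contra hne
  have hno : ∀ u ∈ S, ∀ v, v ∉ S → s(u, v) ∉ Γ ∪ cher L y := by
    intro u hu v hv he
    exact hne ⟨v, mem_nbr.2 ⟨hv, u, hu, he⟩⟩
  have aux : ∀ S : Finset (Fin n), S.Nonempty →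
      (∀ u ∈ S, ∀ v, v ∉ S → s(u, v) ∉ Γ ∪ cher L y) → m < (S \ L).card := by
    intro S hS hno
    by_contra hle
    push Not at hle
    have h1 := hL (S \ L) (by
      rw [Finset.disjoint_left]
      intro a ha
      exact (Finset.mem_sdiff.1 ha).2) hle
    rcases Finset.eq_empty_or_nonempty (S \ L) with h0 | h0
    · obtain ⟨b, hb⟩ := hS
      have hbL : b ∈ L := Finset.sdiff_eq_empty_iff_subset.1 h0 hb
      refine hno b hb (y b true) ?_ (Or.inr ⟨b, hbL, true, rfl⟩)
      intro h
      exact (hy b hbL true).2 (Finset.sdiff_eq_empty_iff_subset.1 h0 h)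
    · have hpos := h0.card_pos
      have : ((nbr Γ (S \ L) ∩ R) \ L).Nonempty := Finset.card_pos.1 (by omega)
      obtain ⟨v, hv⟩ := this
      obtain ⟨hv1, hvL⟩ := Finset.mem_sdiff.1 hv
      obtain ⟨hv3, u, hu, he⟩ := mem_nbr.1 (Finset.mem_inter.1 hv1).1
      exact hno u (Finset.mem_sdiff.1 hu).1 v (fun h => hv3 (Finset.mem_sdiff.2 ⟨h, hvL⟩))
        (Or.inl he)
  have h1 := aux S hS hno
  have h2 := aux Sᶜ (by
      rw [Finset.nonempty_iff_ne_empty]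
      intro h
      exact hSu (Finset.compl_eq_empty_iff S |>.1 h)) (by
      intro u hu v hv he
      rw [Finset.mem_compl] at hu
      rw [Finset.mem_compl, not_not] at hv
      rw [Sym2.eq_swap] at he
      exact hno v hv u hu he)
  obtain ⟨a, ha, b, hb, hab⟩ := hJ (S \ L) (Sᶜ \ L) (by
    rw [Finset.disjoint_left]
    intro a ha hb
    exact Finset.mem_compl.1 (Finset.mem_sdiff.1 hb).1 (Finset.mem_sdiff.1 ha).1) h1.le h2.le
  exact hno a (Finset.mem_sdiff.1 ha).1 b (Finset.mem_compl.1 (Finset.mem_sdiff.1 hb).1)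
    (Or.inl hab)

end core
end RHC

namespace RHC

section bounds
variable {n : ℕ}

/-- Bernoulli weight. -/
noncomputable def bw (q : ℝ) : Bool → ℝ := fun b => if b then q else 1 - q

theorem bw_nonneg {q : ℝ} (h0 : 0 ≤ q) (h1 : q ≤ 1) (b : Bool) : 0 ≤ bw q b := by
  unfold bw; split_ifs <;> linarith

theorem bw_sum (q : ℝ) : ∑ b, bw q b = 1 := by simp [bw]

/-- Edge set of a Boolean configuration. -/
def eset (h : Sym2 (Fin n) → Bool) : Set (Sym2 (Fin n)) := {e | h e = true}

theorem bw_false (q : ℝ) : Pr (bw q) (fun a => a = false) = 1 - q := by simp [Pr, bw]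

theorem bw_true (q : ℝ) : Pr (bw q) (fun a => a = true) = q := by simp [Pr, bw]

theorem joined_bound {q : ℝ} (h0 : 0 ≤ q) (h1 : q ≤ 1) (m : ℕ) :
    Pr (PW fun _ : Sym2 (Fin n) => bw q) (fun h => ¬ Joined (eset h) m) ≤
      4 ^ n * (1 - q) ^ (m * m) := by
  classical
  have hW : ∀ f, 0 ≤ PW (fun _ : Sym2 (Fin n) => bw q) f := PW_nonneg fun _ => bw_nonneg h0 h1
  set I : Finset (Finset (Fin n) × Finset (Fin n)) :=
    Finset.univ.filter fun z => Disjoint z.1 z.2 ∧ m ≤ z.1.card ∧ m ≤ z.2.card with hI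
  set T : Finset (Fin n) × Finset (Fin n) → Finset (Sym2 (Fin n)) :=
    fun z => (z.1 ×ˢ z.2).image fun x => s(x.1, x.2) with hT
  have hTc : ∀ z ∈ I, m * m ≤ (T z).card := by
    intro z hz
    obtain ⟨hd, ha, hb⟩ := (Finset.mem_filter.1 hz).2
    rw [hT]
    dsimp only
    rw [Finset.card_image_of_injOn, Finset.card_product]
    · exact Nat.mul_le_mul ha hb
    · rintro ⟨a, b⟩ hab ⟨a', b'⟩ hab' h
      simp only [Finset.coe_product, Set.mem_prod, Finset.mem_coe] at hab hab'
      simp only [Sym2.eq_iff] at h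
      rcases h with ⟨h1, h2⟩ | ⟨h1, h2⟩
      · rw [h1, h2]
      · exfalso
        exact Finset.disjoint_left.1 hd hab.1 (h1 ▸ hab'.2)
  have step : ∀ h : Sym2 (Fin n) → Bool, ¬ Joined (eset h) m →
      ∃ z ∈ I, ∀ e ∈ T z, h e = false := by
    intro h hJ
    unfold Joined at hJ
    push Not at hJ
    obtain ⟨A, B, hd, ha, hb, hno⟩ := hJ
    refine ⟨(A, B), Finset.mem_filter.2 ⟨Finset.mem_univ _, hd, ha, hb⟩, ?_⟩
    intro e he
    obtain ⟨⟨a, b⟩, hab, rfl⟩ := Finset.mem_image.1 he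
    have h2 := hno a (Finset.mem_product.1 hab).1 b (Finset.mem_product.1 hab).2
    simpa [eset] using h2
  refine (Pr_mono hW step).trans ((Pr_exists_le hW I _).trans ?_)
  have hterm : ∀ z ∈ I, Pr (PW fun _ : Sym2 (Fin n) => bw q) (fun h => ∀ e ∈ T z, h e = false)
      ≤ (1 - q) ^ (m * m) := by
    intro z hz
    rw [Pr_cyl (fun _ => bw_sum q) (T z) (fun _ a => a = false)]
    simp only [bw_false, Finset.prod_const]
    exact pow_le_pow_of_le_one (by linarith) (by linarith) (hTc z hz)
  refine (Finset.sum_le_sum hterm).trans ?_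
  rw [Finset.sum_const, nsmul_eq_mul]
  apply mul_le_mul_of_nonneg_right _ (pow_nonneg (by linarith) _)
  have : I.card ≤ 4 ^ n := by
    refine (Finset.card_filter_le _ _).trans ?_
    rw [Finset.card_univ, Fintype.card_prod, Fintype.card_finset, Fintype.card_fin, ← mul_pow]
    exact le_of_eq (by norm_num)
  exact_mod_cast this

theorem booster_bound {q D : ℝ} (hn : 0 < n) (hD : 1 ≤ D) (hq : q = D / n) (h1 : q ≤ 1) (M : ℕ)
    (B : Finset (Sym2 (Fin n)) → Finset (Sym2 (Fin n))) :
    Pr (PW fun _ : Sym2 (Fin n) => bw q) (fun h => ∃ Δ : Finset (Sym2 (Fin n)),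
      (Δ.card ≤ n ∧ Disjoint Δ (B Δ) ∧ M ≤ (B Δ).card) ∧ (∀ e ∈ Δ, h e = true) ∧
        ∀ e ∈ B Δ, h e = false) ≤ D ^ n * Real.exp n * (1 - q) ^ M := by
  classical
  have hn' : (0 : ℝ) < n := by exact_mod_cast hn
  have h0 : 0 ≤ q := by rw [hq]; positivity
  have hW : ∀ f, 0 ≤ PW (fun _ : Sym2 (Fin n) => bw q) f := PW_nonneg fun _ => bw_nonneg h0 h1
  set I : Finset (Finset (Sym2 (Fin n))) :=
    Finset.univ.filter fun Δ => Δ.card ≤ n ∧ Disjoint Δ (B Δ) ∧ M ≤ (B Δ).card with hI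
  have step : ∀ h : Sym2 (Fin n) → Bool, (∃ Δ : Finset (Sym2 (Fin n)),
      (Δ.card ≤ n ∧ Disjoint Δ (B Δ) ∧ M ≤ (B Δ).card) ∧ (∀ e ∈ Δ, h e = true) ∧
        ∀ e ∈ B Δ, h e = false) →
      ∃ Δ ∈ I, ∀ e ∈ Δ ∪ B Δ, (if e ∈ Δ then h e = true else h e = false) := by
    rintro h ⟨Δ, hΔ, ha, hb⟩
    refine ⟨Δ, Finset.mem_filter.2 ⟨Finset.mem_univ _, hΔ⟩, ?_⟩
    intro e he
    split_ifs with hd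
    · exact ha e hd
    · exact hb e ((Finset.mem_union.1 he).resolve_left hd)
  refine (Pr_mono hW step).trans ((Pr_exists_le hW I _).trans ?_)
  have hterm : ∀ Δ ∈ I, Pr (PW fun _ : Sym2 (Fin n) => bw q)
      (fun h => ∀ e ∈ Δ ∪ B Δ, (if e ∈ Δ then h e = true else h e = false))
      ≤ D ^ n * (1 - q) ^ M * (1 / n : ℝ) ^ Δ.card := by
    intro Δ hΔ
    obtain ⟨hc, hd, hM⟩ := (Finset.mem_filter.1 hΔ).2
    rw [Pr_cyl (fun _ => bw_sum q) (Δ ∪ B Δ) (fun e a => if e ∈ Δ then a = true else a = false)]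
    rw [Finset.prod_union hd]
    have e1 : ∏ e ∈ Δ, Pr (bw q) (fun a => if e ∈ Δ then a = true else a = false)
        = q ^ Δ.card := by
      rw [← Finset.prod_const]
      apply Finset.prod_congr rfl
      intro e he
      simp only [he, if_true]
      exact bw_true q
    have e2 : ∏ e ∈ B Δ, Pr (bw q) (fun a => if e ∈ Δ then a = true else a = false)
        = (1 - q) ^ (B Δ).card := by
      rw [← Finset.prod_const]
      apply Finset.prod_congr rfl
      intro e he
      have : e ∉ Δ := fun h => Finset.disjoint_left.1 hd h he
      simp only [this, if_false]
      exact bw_false q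
    rw [e1, e2]
    have e3 : q ^ Δ.card ≤ D ^ n * (1 / n : ℝ) ^ Δ.card := by
      rw [hq, div_eq_mul_one_div, mul_pow]
      apply mul_le_mul_of_nonneg_right _ (by positivity)
      exact pow_le_pow_right₀ hD hc
    have e4 : (1 - q) ^ (B Δ).card ≤ (1 - q) ^ M :=
      pow_le_pow_of_le_one (by linarith) (by linarith) hM
    calc q ^ Δ.card * (1 - q) ^ (B Δ).card
        ≤ (D ^ n * (1 / n : ℝ) ^ Δ.card) * (1 - q) ^ M :=
          mul_le_mul e3 e4 (pow_nonneg (by linarith) _) (by positivity)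
      _ = _ := by ring
  refine (Finset.sum_le_sum hterm).trans ?_
  rw [← Finset.mul_sum]
  have hsum : ∑ Δ ∈ I, (1 / n : ℝ) ^ Δ.card ≤ Real.exp n := by
    calc ∑ Δ ∈ I, (1 / n : ℝ) ^ Δ.card
        ≤ ∑ Δ : Finset (Sym2 (Fin n)), (1 / n : ℝ) ^ Δ.card :=
          Finset.sum_le_sum_of_subset_of_nonneg (Finset.subset_univ _)
            (fun _ _ _ => by positivity)
      _ = (1 / n + 1 : ℝ) ^ (Fintype.card (Sym2 (Fin n))) := by
          have := Finset.sum_pow_mul_eq_add_pow (1 / n : ℝ) 1 (Finset.univ : Finset (Sym2 (Fin n)))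
          simp only [one_pow, mul_one, Finset.powerset_univ, Finset.card_univ] at this
          exact this
      _ ≤ (Real.exp (1 / n)) ^ (Fintype.card (Sym2 (Fin n))) := by
          apply pow_le_pow_left₀ (by positivity)
          exact Real.add_one_le_exp _
      _ = Real.exp ((Fintype.card (Sym2 (Fin n))) * (1 / n)) := by
          rw [← Real.exp_nat_mul]
      _ ≤ Real.exp n := by
          apply Real.exp_le_exp.2
          have hc : Fintype.card (Sym2 (Fin n)) ≤ n * n := by
            rw [Sym2.card, Fintype.card_fin, Nat.choose_two_right]
            apply Nat.div_le_of_le_mul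
            simp only [Nat.add_sub_cancel]
            nlinarith
          have hc' : (Fintype.card (Sym2 (Fin n)) : ℝ) ≤ n * n := by exact_mod_cast hc
          rw [mul_one_div, div_le_iff₀ hn']
          exact hc'
  calc D ^ n * (1 - q) ^ M * ∑ Δ ∈ I, (1 / n : ℝ) ^ Δ.card
      ≤ D ^ n * (1 - q) ^ M * Real.exp n :=
        mul_le_mul_of_nonneg_left hsum (mul_nonneg (by positivity) (pow_nonneg (by linarith) _))
    _ = _ := by ring

end bounds
end RHC

namespace RHC

section cherries
variable {n κ : ℕ}

/-- Weight of a coloured present/absent edge. -/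
noncomputable def kw (p : ℝ) (κ : ℕ) : Bool × Fin κ → ℝ := fun a => bw p a.1 / κ

theorem kw_nonneg {p : ℝ} (h0 : 0 ≤ p) (h1 : p ≤ 1) (a : Bool × Fin κ) : 0 ≤ kw p κ a :=
  div_nonneg (bw_nonneg h0 h1 _) (Nat.cast_nonneg _)

theorem kw_sum (p : ℝ) (hκ : 0 < κ) : ∑ a, kw p κ a = 1 := by
  have : (κ : ℝ) ≠ 0 := by positivity
  rw [Fintype.sum_prod_type]
  simp [kw, bw]
  field_simp
  ring

theorem kw_hit (p : ℝ) (hκ : 0 < κ) (C : Finset (Fin κ)) :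
    Pr (kw p κ) (fun a => a.1 = true ∧ a.2 ∉ C) = p * (1 - C.card / κ) := by
  classical
  have hk : (κ : ℝ) ≠ 0 := by positivity
  unfold Pr
  rw [Fintype.sum_prod_type]
  simp only [Fintype.sum_bool, kw, bw]
  simp only [true_and, if_true, Bool.false_eq_true, false_and, if_false, Finset.sum_const_zero,
    add_zero]
  rw [← Finset.sum_filter, Finset.sum_const, nsmul_eq_mul]
  have : (Finset.univ.filter fun a : Fin κ => a ∉ C) = Cᶜ := by ext; simp
  rw [this, Finset.card_compl, Fintype.card_fin, Nat.cast_sub]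
  · field_simp
  · simpa using Finset.card_le_univ C

theorem kw_miss (p : ℝ) (hκ : 0 < κ) (C : Finset (Fin κ)) :
    Pr (kw p κ) (fun a => ¬ (a.1 = true ∧ a.2 ∉ C)) = 1 - p * (1 - C.card / κ) := by
  rw [← kw_hit p hκ C, Pr_not (kw_sum p hκ) (fun a => a.1 = true ∧ a.2 ∉ C)]
  ring

theorem kw_eq (p : ℝ) (c : Fin κ) : Pr (kw p κ) (fun a => a = (true, c)) = p / κ := by
  classical
  unfold Pr
  rw [Finset.sum_eq_single (true, c)]
  · simp [kw, bw]
  · intro a _ ha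
    simp [ha]
  · simp

theorem one_fail {p : ℝ} (h0 : 0 ≤ p) (h1 : p ≤ 1) (hκ : 0 < κ) (b : Fin n) (A : Finset (Fin n))
    (C : Finset (Fin κ)) (K : ℕ) (hC : C.card ≤ K) (hK : K + 1 ≤ κ) :
    Pr (PW fun _ : Sym2 (Fin n) => kw p κ) (fun k => ¬ ∃ y1 ∈ A, ∃ y2 ∈ A, y1 ≠ y2 ∧
      (k s(b, y1)).1 = true ∧ (k s(b, y2)).1 = true ∧ (k s(b, y1)).2 ≠ (k s(b, y2)).2 ∧
      (k s(b, y1)).2 ∉ C ∧ (k s(b, y2)).2 ∉ C) ≤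
      (1 + A.card * p) * (1 - p * (1 - (K + 1) / κ)) ^ (A.card - 1) := by
  classical
  have hκ' : (0 : ℝ) < κ := by positivity
  have hW : ∀ f, 0 ≤ PW (fun _ : Sym2 (Fin n) => kw p κ) f :=
    PW_nonneg fun _ => kw_nonneg h0 h1
  set ρ : ℝ := 1 - p * (1 - (K + 1) / κ) with hρ
  have hKκ : ((K : ℝ) + 1) / κ ≤ 1 := by
    rw [div_le_one hκ']
    exact_mod_cast hK
  have hKκ0 : 0 ≤ ((K : ℝ) + 1) / κ := by positivity
  have hρ0 : 0 ≤ ρ := by nlinarith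
  have hρ1 : ρ ≤ 1 := by nlinarith
  have hmiss : ∀ C' : Finset (Fin κ), C'.card ≤ K + 1 →
      Pr (kw p κ) (fun a => ¬ (a.1 = true ∧ a.2 ∉ C')) ≤ ρ := by
    intro C' hC'
    rw [kw_miss p hκ, hρ]
    have : (C'.card : ℝ) / κ ≤ (K + 1) / κ := by
      gcongr
      exact_mod_cast hC'
    nlinarith
  have hinj : ∀ B : Finset (Fin n), Set.InjOn (fun y => s(b, y)) (B : Set (Fin n)) := by
    intro B x _ y _ h
    exact Sym2.congr_right.1 h
  have step : ∀ k : Sym2 (Fin n) → Bool × Fin κ, (¬ ∃ y1 ∈ A, ∃ y2 ∈ A, y1 ≠ y2 ∧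
      (k s(b, y1)).1 = true ∧ (k s(b, y2)).1 = true ∧ (k s(b, y1)).2 ≠ (k s(b, y2)).2 ∧
      (k s(b, y1)).2 ∉ C ∧ (k s(b, y2)).2 ∉ C) →
      (∀ e ∈ A.image (fun y => s(b, y)), ¬ ((k e).1 = true ∧ (k e).2 ∉ C)) ∨
      (∃ z ∈ A ×ˢ (Finset.univ : Finset (Fin κ)), ∀ e ∈ A.image (fun y => s(b, y)),
        if e = s(b, z.1) then k e = (true, z.2) else
          ¬ ((k e).1 = true ∧ (k e).2 ∉ insert z.2 C)) := by
    intro k hk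
    by_cases hno : ∀ e ∈ A.image (fun y => s(b, y)), ¬ ((k e).1 = true ∧ (k e).2 ∉ C)
    · exact Or.inl hno
    · right
      push Not at hno
      obtain ⟨e, he, hp, hc⟩ := hno
      obtain ⟨y1, hy1, rfl⟩ := Finset.mem_image.1 he
      refine ⟨(y1, (k s(b, y1)).2), Finset.mem_product.2 ⟨hy1, Finset.mem_univ _⟩, ?_⟩
      intro e he
      obtain ⟨y2, hy2, rfl⟩ := Finset.mem_image.1 he
      split_ifs with heq
      · simp only at heq
        rw [heq]
        exact Prod.ext hp rfl
      · rintro ⟨hp2, hc2⟩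
        simp only [Finset.mem_insert, not_or] at hc2
        exact hk ⟨y1, hy1, y2, hy2, fun h => heq (by rw [h]), hp, hp2, fun h => hc2.1 h.symm,
          hc, hc2.2⟩
  refine (Pr_mono hW step).trans ((Pr_or_le hW _ _).trans ?_)
  have b1 : Pr (PW fun _ : Sym2 (Fin n) => kw p κ) (fun k =>
      ∀ e ∈ A.image (fun y => s(b, y)), ¬ ((k e).1 = true ∧ (k e).2 ∉ C)) ≤ ρ ^ (A.card - 1) := by
    rw [Pr_cyl (fun _ => kw_sum p hκ) _ (fun _ a => ¬ (a.1 = true ∧ a.2 ∉ C)),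
      Finset.prod_const, Finset.card_image_of_injOn (hinj A)]
    refine (pow_le_pow_left₀ (Pr_nonneg (kw_nonneg h0 h1) _) (hmiss C (by omega)) _).trans ?_
    exact pow_le_pow_of_le_one hρ0 hρ1 (Nat.sub_le _ _)
  have b2 : ∀ z ∈ A ×ˢ (Finset.univ : Finset (Fin κ)),
      Pr (PW fun _ : Sym2 (Fin n) => kw p κ) (fun k => ∀ e ∈ A.image (fun y => s(b, y)),
        if e = s(b, z.1) then k e = (true, z.2) else
          ¬ ((k e).1 = true ∧ (k e).2 ∉ insert z.2 C)) ≤ p / κ * ρ ^ (A.card - 1) := by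
    intro z hz
    have hzA := (Finset.mem_product.1 hz).1
    rw [Pr_cyl (fun _ => kw_sum p hκ) _ (fun e a => if e = s(b, z.1) then a = (true, z.2) else
          ¬ (a.1 = true ∧ a.2 ∉ insert z.2 C)), Finset.prod_image (hinj A),
      ← Finset.mul_prod_erase A _ hzA]
    simp only [if_true]
    rw [kw_eq]
    apply mul_le_mul_of_nonneg_left _ (by positivity)
    rw [← Finset.card_erase_of_mem hzA, ← Finset.prod_const]
    apply Finset.prod_le_prod
    · intro i _
      exact Pr_nonneg (kw_nonneg h0 h1) _
    · intro i hi
      have hne : s(b, i) ≠ s(b, z.1) := by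
        intro h
        exact (Finset.mem_erase.1 hi).1 (Sym2.congr_right.1 h)
      simp only [hne, if_false]
      exact hmiss _ ((Finset.card_insert_le _ _).trans (by omega))
  have b3 := (Pr_exists_le hW (A ×ˢ (Finset.univ : Finset (Fin κ))) (fun z k =>
    ∀ e ∈ A.image (fun y => s(b, y)), if e = s(b, z.1) then k e = (true, z.2) else
          ¬ ((k e).1 = true ∧ (k e).2 ∉ insert z.2 C))).trans (Finset.sum_le_sum b2)
  rw [Finset.sum_const, Finset.card_product, Finset.card_univ, Fintype.card_fin, nsmul_eq_mul,
    Nat.cast_mul] at b3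
  refine (add_le_add b1 b3).trans (le_of_eq ?_)
  field_simp

/-- A rainbow system of cherries from `L` into `A`. -/
def CherGood (L A : Finset (Fin n)) (k : Sym2 (Fin n) → Bool × Fin κ) : Prop :=
  ∃ y : Fin n → Bool → Fin n, (∀ b ∈ L, ∀ i, y b i ∈ A ∧ (k s(b, y b i)).1 = true) ∧
    (∀ b ∈ L, ∀ i, ∀ b' ∈ L, ∀ i', y b i = y b' i' → b = b' ∧ i = i') ∧
    (∀ b ∈ L, ∀ i, ∀ b' ∈ L, ∀ i', (k s(b, y b i)).2 = (k s(b', y b' i')).2 → b = b' ∧ i = i')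

theorem cher_bound {p : ℝ} (h0 : 0 ≤ p) (h1 : p ≤ 1) (hκ : 0 < κ) (A : Finset (Fin n)) (m N : ℕ)
    (hA : N + 2 * m ≤ A.card) (hK : 2 * m + 1 ≤ κ) (L : Finset (Fin n)) (hLA : Disjoint L A)
    (hLm : L.card ≤ m) :
    Pr (PW fun _ : Sym2 (Fin n) => kw p κ) (fun k => ¬ CherGood L A k) ≤
      L.card * ((1 + n * p) * (1 - p * (1 - (2 * m + 1) / κ)) ^ (N - 1)) := by
  classical
  have hκ' : (0 : ℝ) < κ := by positivity
  have hW : ∀ f, 0 ≤ PW (fun _ : Sym2 (Fin n) => kw p κ) f :=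
    PW_nonneg fun _ => kw_nonneg h0 h1
  have hKκ : (2 * (m : ℝ) + 1) / κ ≤ 1 := by
    rw [div_le_one hκ']
    exact_mod_cast hK
  have hKκ0 : 0 ≤ (2 * (m : ℝ) + 1) / κ := by positivity
  have hρ0 : 0 ≤ 1 - p * (1 - (2 * m + 1) / κ) := by nlinarith
  have hρ1 : 1 - p * (1 - (2 * (m : ℝ) + 1) / κ) ≤ 1 := by nlinarith
  induction L using Finset.induction_on with
  | empty =>
    have : ∀ k : Sym2 (Fin n) → Bool × Fin κ, ¬ CherGood ∅ A k → False := by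
      intro k hk
      exact hk ⟨fun b _ => b, by simp, by simp, by simp⟩
    refine (Pr_mono hW this).trans ?_
    simp [Pr_false]
  | insert b L hb ih =>
    have hLA' : Disjoint L A := Finset.disjoint_of_subset_left (Finset.subset_insert _ _) hLA
    have hbA : b ∉ A := Finset.disjoint_left.1 hLA (Finset.mem_insert_self _ _)
    have hcard : (insert b L).card = L.card + 1 := Finset.card_insert_of_notMem hb
    have ih' := ih hLA' (by omega)
    set β : ℝ := (1 + n * p) * (1 - p * (1 - (2 * m + 1) / κ)) ^ (N - 1) with hβ
    have hβ0 : 0 ≤ β := by positivity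
    have step : ∀ k : Sym2 (Fin n) → Bool × Fin κ, ¬ CherGood (insert b L) A k →
        ¬ CherGood L A k ∨ (CherGood L A k ∧ ¬ CherGood (insert b L) A k) := by
      intro k hk
      by_cases h : CherGood L A k
      · exact Or.inr ⟨h, hk⟩
      · exact Or.inl h
    refine (Pr_mono hW step).trans ((Pr_or_le hW _ _).trans ?_)
    have main : Pr (PW fun _ : Sym2 (Fin n) => kw p κ)
        (fun k => CherGood L A k ∧ ¬ CherGood (insert b L) A k) ≤ β := by
      set T := A.image (fun y => s(b, y)) with hT
      apply Pr_block (fun _ => kw_nonneg h0 h1) (fun _ => kw_sum p hκ) T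
      intro f
      have hout : ∀ b' ∈ L, ∀ y ∈ A, s(b', y) ∉ T := by
        intro b' hb' y hy h
        obtain ⟨a, ha, he⟩ := Finset.mem_image.1 h
        rw [Sym2.eq_iff] at he
        rcases he with ⟨h1, h2⟩ | ⟨h1, h2⟩
        · exact hb (h1 ▸ hb')
        · exact hbA (h1 ▸ hy)
      have hin : ∀ y ∈ A, s(b, y) ∈ T := fun y hy => Finset.mem_image_of_mem _ hy
      by_cases hf : ∃ f', CherGood L A (T.piecewise f' f)
      · obtain ⟨f0, y, hy, hyi, hyc⟩ := hf
        set U := (L ×ˢ (Finset.univ : Finset Bool)).image (fun z => y z.1 z.2) with hU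
        set C := (L ×ˢ (Finset.univ : Finset Bool)).image
          (fun z => (f s(z.1, y z.1 z.2)).2) with hC
        have hUc : U.card ≤ 2 * L.card := by
          refine Finset.card_image_le.trans ?_
          simp [Finset.card_product, mul_comm]
        have hCc : C.card ≤ 2 * m := by
          refine Finset.card_image_le.trans ?_
          simp only [Finset.card_product, Finset.card_univ, Fintype.card_bool]
          omega
        have hpw : ∀ f', ∀ b' ∈ L, ∀ i, T.piecewise f' f s(b', y b' i) = f s(b', y b' i) := by
          intro f' b' hb' i
          exact Finset.piecewise_eq_of_notMem _ _ _ (hout b' hb' _ (hy b' hb' i).1)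
        have hone := one_fail h0 h1 hκ b (A \ U) C (2 * m) hCc hK
        refine (Pr_mono hW (Q := fun k => ¬ ∃ y1 ∈ A \ U, ∃ y2 ∈ A \ U, y1 ≠ y2 ∧
          (k s(b, y1)).1 = true ∧ (k s(b, y2)).1 = true ∧ (k s(b, y1)).2 ≠ (k s(b, y2)).2 ∧
          (k s(b, y1)).2 ∉ C ∧ (k s(b, y2)).2 ∉ C) ?_).trans (hone.trans ?_)
        · rintro k ⟨-, hng⟩ ⟨y1, hy1, y2, hy2, hne, hp1, hp2, hcne, hc1, hc2⟩
          apply hng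
          obtain ⟨hy1A, hy1U⟩ := Finset.mem_sdiff.1 hy1
          obtain ⟨hy2A, hy2U⟩ := Finset.mem_sdiff.1 hy2
          set z : Bool → Fin n := fun i => if i then y1 else y2 with hz
          have hzA : ∀ i, z i ∈ A := by intro i; cases i <;> simp [hz, hy1A, hy2A]
          have hzU : ∀ i, z i ∉ U := by intro i; cases i <;> simp only [hz, if_true, Bool.false_eq_true, if_false] <;> assumption
          have hzp : ∀ i, (k s(b, z i)).1 = true := by intro i; cases i <;> simp [hz, hp1, hp2]
          have hzc : ∀ i, (k s(b, z i)).2 ∉ C := by intro i; cases i <;> simp only [hz, if_true, Bool.false_eq_true, if_false] <;> assumption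
          have hzi : ∀ i i', z i = z i' → i = i' := by
            intro i i'; cases i <;> cases i' <;> simp [hz, hne, hne.symm]
          have hzci : ∀ i i', (k s(b, z i)).2 = (k s(b, z i')).2 → i = i' := by
            intro i i'; cases i <;> cases i' <;> simp [hz, hcne, hcne.symm]
          have hzpw : ∀ i, T.piecewise k f s(b, z i) = k s(b, z i) := fun i =>
            Finset.piecewise_eq_of_mem _ _ _ (hin _ (hzA i))
          have hyU : ∀ b' ∈ L, ∀ i, y b' i ∈ U := fun b' hb' i =>
            Finset.mem_image.2 ⟨(b', i), Finset.mem_product.2 ⟨hb', Finset.mem_univ _⟩, rfl⟩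
          have hyC : ∀ b' ∈ L, ∀ i, (f s(b', y b' i)).2 ∈ C := fun b' hb' i =>
            Finset.mem_image.2 ⟨(b', i), Finset.mem_product.2 ⟨hb', Finset.mem_univ _⟩, rfl⟩
          have hnb : ∀ b' ∈ L, b' ≠ b := fun b' hb' h => hb (h ▸ hb')
          obtain ⟨y', hus, huo⟩ : ∃ y' : Fin n → Bool → Fin n, (∀ i, y' b i = z i) ∧
              ∀ b' ∈ L, ∀ i, y' b' i = y b' i :=
            ⟨Function.update y b z, fun i => by rw [Function.update_self],
              fun b' hb' i => by rw [Function.update_of_ne (hnb b' hb')]⟩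
          refine ⟨y', ?_, ?_, ?_⟩
          · intro b' hb' i
            rcases Finset.mem_insert.1 hb' with he | hb'
            · rw [he, hus, hzpw]
              exact ⟨hzA i, hzp i⟩
            · rw [huo b' hb', hpw k b' hb' i, ← hpw f0 b' hb' i]
              exact hy b' hb' i
          · intro b1 hb1 i1 b2 hb2 i2
            rcases Finset.mem_insert.1 hb1 with he1 | hb1 <;>
            rcases Finset.mem_insert.1 hb2 with he2 | hb2
            · rw [he1, he2, hus, hus]
              exact fun h => ⟨rfl, hzi _ _ h⟩
            · rw [he1, hus, huo _ hb2]
              intro h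
              exact absurd (hyU _ hb2 i2) (h ▸ hzU i1)
            · rw [he2, hus, huo _ hb1]
              intro h
              exact absurd (hyU _ hb1 i1) (h ▸ hzU i2)
            · rw [huo _ hb1, huo _ hb2]
              exact hyi b1 hb1 i1 b2 hb2 i2
          · intro b1 hb1 i1 b2 hb2 i2
            rcases Finset.mem_insert.1 hb1 with he1 | hb1 <;>
            rcases Finset.mem_insert.1 hb2 with he2 | hb2
            · rw [he1, he2, hus, hus, hzpw, hzpw]
              exact fun h => ⟨rfl, hzci _ _ h⟩
            · rw [he1, hus, huo _ hb2, hzpw, hpw k _ hb2]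
              intro h
              exact absurd (hyC _ hb2 i2) (h ▸ hzc i1)
            · rw [he2, hus, huo _ hb1, hzpw, hpw k _ hb1]
              intro h
              exact absurd (hyC _ hb1 i1) (h ▸ hzc i2)
            · rw [huo _ hb1, huo _ hb2, hpw k _ hb1, hpw k _ hb2, ← hpw f0 _ hb1, ← hpw f0 _ hb2]
              exact hyc b1 hb1 i1 b2 hb2 i2
        · have hc1 : (A \ U).card ≤ n := by simpa using Finset.card_le_univ (A \ U)
          have hc2 : N ≤ (A \ U).card := by
            have := Finset.le_card_sdiff U A
            omega
          have hc1' : ((A \ U).card : ℝ) ≤ n := by exact_mod_cast hc1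
          rw [hβ]
          push_cast
          apply mul_le_mul
          · have := mul_le_mul_of_nonneg_right hc1' h0
            linarith
          · exact pow_le_pow_of_le_one hρ0 hρ1 (by omega)
          · exact pow_nonneg hρ0 _
          · positivity
      · push Not at hf
        refine (Pr_mono hW (Q := fun _ => False) ?_).trans ?_
        · rintro f' ⟨h, -⟩
          exact hf f' h
        · rw [Pr_false]
          exact hβ0
    rw [hcard]
    push_cast
    linarith

end cherries
end RHC

namespace RHC

section model
variable {n κ : ℕ}

/-- State of a pair in the auxiliary model. -/
abbrev St (κ : ℕ) := Bool × (Bool × Fin κ) × Bool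

/-- The pair may be used without paying for a colour. -/
def Free (a : St κ) : Prop := a.1 = true ∨ a.2.2 = true

/-- There is a Hamilton cycle whose non-free edges are rainbow. -/
def Good (f : Sym2 (Fin n) → St κ) : Prop :=
  ∃ c : ZMod n → Fin n, Function.Bijective c ∧
    (∀ i, Free (f s(c i, c (i + 1))) ∨ (f s(c i, c (i + 1))).2.1.1 = true) ∧
    ∀ i j, ¬ Free (f s(c i, c (i + 1))) → ¬ Free (f s(c j, c (j + 1))) →
      (f s(c i, c (i + 1))).2.1.2 = (f s(c j, c (j + 1))).2.1.2 → i = j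

/-- Weights of the auxiliary model. -/
noncomputable def yw (q p : ℝ) (κ : ℕ) : St κ → ℝ := fun a => bw q a.1 * (kw p κ a.2.1 * bw q a.2.2)

/-- Weights of the original model. -/
noncomputable def xw (p : ℝ) (κ : ℕ) : St κ → ℝ := fun a =>
  (if a.1 = true then 0 else 1) * (kw p κ a.2.1 * (if a.2.2 = true then 0 else 1))

theorem edge_inj (hn : 3 ≤ n) {c : ZMod n → Fin n} (hc : Function.Injective c) {i j : ZMod n}
    (h : s(c i, c (i + 1)) = s(c j, c (j + 1))) : i = j := by
  rw [Sym2.eq_iff] at h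
  rcases h with ⟨h1, -⟩ | ⟨h1, h2⟩
  · exact hc h1
  · exfalso
    have h1 := hc h1
    have h2 := hc h2
    have h3 : ((2 : ℕ) : ZMod n) = 0 := by
      rw [h1] at h2
      push_cast
      linear_combination h2
    rw [ZMod.natCast_eq_zero_iff] at h3
    have := Nat.le_of_dvd (by norm_num) h3
    omega

theorem weight_compare {q pb p : ℝ} (hq0 : 0 ≤ q) (hq1 : q ≤ 1) (hb0 : 0 ≤ pb) (hbp : pb ≤ p)
    (hp1 : p ≤ 1) (hκ : 0 < κ) (t : ℕ) (hyp : 2 * q ≤ (p - pb) * (t / κ)) (Q : St κ → Prop)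
    (h1 : ∀ a, ¬ Free a → a.2.1.1 = false → Q a → ∀ b, Q b)
    (h2 : ∀ a, ¬ Free a → Q a → ∀ b, Free b → Q b)
    (h3 : ∀ a, Free a → Q a → (∀ b, Q b) ∨
      ∃ A : Finset (Fin κ), t ≤ A.card ∧ ∀ c ∈ A, Q (false, (true, c), false)) :
    Pr (yw q pb κ) Q ≤ Pr (xw p κ) Q := by
  classical
  have hp0 : 0 ≤ p := hb0.trans hbp
  have hκ' : (0 : ℝ) < κ := by positivity
  have hy : ∀ a, 0 ≤ yw q pb κ a := fun a => mul_nonneg (bw_nonneg hq0 hq1 _)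
    (mul_nonneg (kw_nonneg hb0 (hbp.trans hp1) _) (bw_nonneg hq0 hq1 _))
  have hx : ∀ a, 0 ≤ xw p κ a := fun a => mul_nonneg (by split_ifs <;> norm_num)
    (mul_nonneg (kw_nonneg hp0 hp1 _) (by split_ifs <;> norm_num))
  by_cases hall : ∀ b, Q b
  · have e1 : Pr (yw q pb κ) Q = 1 := by
      unfold Pr
      simp only [hall, if_true]
      rw [Fintype.sum_prod_type]
      simp only [yw, Fintype.sum_prod_type, Fintype.sum_bool]
      simp [kw, bw]
      field_simp
      ring
    have e2 : Pr (xw p κ) Q = 1 := by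
      unfold Pr
      simp only [hall, if_true]
      simp only [xw, Fintype.sum_prod_type, Fintype.sum_bool]
      simp [kw, bw]
      field_simp
      ring
    rw [e1, e2]
  by_cases hfree : ∃ a, Free a ∧ Q a
  swap
  · have : ∀ a, Q a → False := by
      intro a ha
      by_cases hf : Free a
      · exact hfree ⟨a, hf, ha⟩
      · exact hfree ⟨(true, a.2), Or.inl rfl, h2 a hf ha _ (Or.inl rfl)⟩
    refine (Pr_mono hy this).trans ?_
    rw [Pr_false]
    exact Pr_nonneg hx _
  obtain ⟨a0, ha0, hQ0⟩ := hfree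
  obtain ⟨A', hA't, hA'⟩ := (h3 a0 ha0 hQ0).resolve_left hall
  set A := Finset.univ.filter fun c : Fin κ => Q (false, (true, c), false) with hA
  have ht : t ≤ A.card := hA't.trans (Finset.card_le_card fun c hc =>
    Finset.mem_filter.2 ⟨Finset.mem_univ _, hA' c hc⟩)
  have hno : ∀ c, ¬ Q (false, (false, c), false) := by
    intro c h
    exact hall (h1 (false, (false, c), false) (by simp [Free]) rfl h)
  have cnt : ∀ r : ℝ, (∑ c : Fin κ, if Q (false, (true, c), false) then r else 0) = A.card * r := by
    intro r
    rw [← Finset.sum_filter, Finset.sum_const, nsmul_eq_mul]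
  have ex : Pr (xw p κ) Q ≥ A.card * (p / κ) := by
    unfold Pr
    rw [← cnt]
    simp only [xw, Fintype.sum_prod_type, Fintype.sum_bool]
    simp [kw, bw, hno]
  have ey : Pr (yw q pb κ) Q ≤ 2 * q + A.card * (pb / κ) := by
    refine (Pr_mono hy (Q := fun a => (a.1 = true ∨ a.2.2 = true) ∨
      (a.1 = false ∧ a.2.2 = false ∧ a.2.1.1 = true ∧ Q a)) ?_).trans ?_
    · rintro ⟨x, ⟨k, c⟩, z⟩ h
      cases x <;> cases z <;> cases k <;> simp
      · exact hno c h
      · exact h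
    refine (Pr_or_le hy _ _).trans (add_le_add ((Pr_or_le hy _ _).trans ?_) ?_)
    · unfold Pr
      simp only [yw, Fintype.sum_prod_type, Fintype.sum_bool]
      simp [kw, bw]
      field_simp
      nlinarith
    · rw [← cnt]
      unfold Pr
      simp only [yw, Fintype.sum_prod_type, Fintype.sum_bool]
      simp [kw, bw]
      apply Finset.sum_le_sum
      intro c _
      split_ifs
      · have : 0 ≤ pb / κ := by positivity
        have h5 : (1 - q) * (1 - q) ≤ 1 := by nlinarith
        nlinarith
      · exact le_rfl
  refine ey.trans (le_trans ?_ ex)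
  have h6 : (p - pb) * (t / κ) ≤ (p - pb) * (A.card / κ) := by
    apply mul_le_mul_of_nonneg_left _ (by linarith)
    gcongr
  have : (p - pb) * (A.card / κ) = A.card * (p / κ) - A.card * (pb / κ) := by
    field_simp
  linarith

theorem compare_models (hn : 3 ≤ n) {q pb p : ℝ} (hq0 : 0 ≤ q) (hq1 : q ≤ 1) (hb0 : 0 ≤ pb)
    (hbp : pb ≤ p) (hp1 : p ≤ 1) (hκ : 0 < κ) (t : ℕ) (ht : t + n ≤ κ)
    (hyp : 2 * q ≤ (p - pb) * (t / κ)) :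
    Pr (PW fun _ : Sym2 (Fin n) => yw q pb κ) Good ≤
      Pr (PW fun _ : Sym2 (Fin n) => xw p κ) Good := by
  classical
  have hp0 : 0 ≤ p := hb0.trans hbp
  have hy : ∀ a, 0 ≤ yw q pb κ a := fun a => mul_nonneg (bw_nonneg hq0 hq1 _)
    (mul_nonneg (kw_nonneg hb0 (hbp.trans hp1) _) (bw_nonneg hq0 hq1 _))
  have hx : ∀ a, 0 ≤ xw p κ a := fun a => mul_nonneg (by split_ifs <;> norm_num)
    (mul_nonneg (kw_nonneg hp0 hp1 _) (by split_ifs <;> norm_num))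
  have : NeZero n := ⟨by omega⟩
  refine Pr_compare (fun _ => hy) (fun _ => hx) _ ?_
  intro e f
  refine weight_compare hq0 hq1 hb0 hbp hp1 hκ t hyp _ ?_ ?_ ?_
  · rintro a hfa hka ⟨c, hc, hpres, hcol⟩ b
    have hne : ∀ i, s(c i, c (i + 1)) ≠ e := by
      intro i h
      have := hpres i
      rw [h, Function.update_self] at this
      rcases this with h | h
      · exact hfa h
      · rw [hka] at h
        exact Bool.false_ne_true h
    refine ⟨c, hc, ?_, ?_⟩
    · intro i
      have := hpres i
      rw [Function.update_of_ne (hne i)] at this ⊢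
      exact this
    · intro i j
      have := hcol i j
      rw [Function.update_of_ne (hne i), Function.update_of_ne (hne j)] at this ⊢
      exact this
  · rintro a hfa ⟨c, hc, hpres, hcol⟩ b hb
    refine ⟨c, hc, ?_, ?_⟩
    · intro i
      by_cases hi : s(c i, c (i + 1)) = e
      · rw [hi, Function.update_self]
        exact Or.inl hb
      · have := hpres i
        rw [Function.update_of_ne hi] at this ⊢
        exact this
    · intro i j h1 h2
      have hi : s(c i, c (i + 1)) ≠ e := by
        intro h
        rw [h, Function.update_self] at h1
        exact h1 hb
      have hj : s(c j, c (j + 1)) ≠ e := by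
        intro h
        rw [h, Function.update_self] at h2
        exact h2 hb
      have := hcol i j
      rw [Function.update_of_ne hi] at h1
      rw [Function.update_of_ne hj] at h2
      rw [Function.update_of_ne hi, Function.update_of_ne hj] at this ⊢
      exact this h1 h2
  · rintro a hfa ⟨c, hc, hpres, hcol⟩
    by_cases hex : ∃ i0, s(c i0, c (i0 + 1)) = e
    · right
      obtain ⟨i0, hi0⟩ := hex
      have hne : ∀ i, i ≠ i0 → s(c i, c (i + 1)) ≠ e := by
        intro i hi h
        exact hi (edge_inj hn hc.1 (h.trans hi0.symm))
      set C : Finset (Fin κ) := (Finset.univ : Finset (ZMod n)).image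
        (fun i => (f s(c i, c (i + 1))).2.1.2) with hC
      have hCc : C.card ≤ n := Finset.card_image_le.trans (by simp [ZMod.card])
      refine ⟨Cᶜ, ?_, ?_⟩
      · rw [Finset.card_compl, Fintype.card_fin]
        omega
      · intro d hd
        have hd' : ∀ i, (f s(c i, c (i + 1))).2.1.2 ≠ d := by
          intro i h
          exact (Finset.mem_compl.1 hd) (Finset.mem_image.2 ⟨i, Finset.mem_univ _, h⟩)
        refine ⟨c, hc, ?_, ?_⟩
        · intro i
          by_cases hi : i = i0
          · rw [hi, hi0, Function.update_self]
            exact Or.inr rfl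
          · have := hpres i
            rw [Function.update_of_ne (hne i hi)] at this ⊢
            exact this
        · intro i j h1 h2 h3
          by_cases hi : i = i0 <;> by_cases hj : j = i0
          · rw [hi, hj]
          · rw [hi, hi0, Function.update_self, Function.update_of_ne (hne j hj)] at h3
            exact absurd h3.symm (hd' j)
          · rw [hj, hi0, Function.update_self, Function.update_of_ne (hne i hi)] at h3
            exact absurd h3 (hd' i)
          · have := hcol i j
            rw [Function.update_of_ne (hne i hi)] at h1 h3 this
            rw [Function.update_of_ne (hne j hj)] at h2 h3 this
            exact this h1 h2 h3
    · left
      push Not at hex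
      intro b
      refine ⟨c, hc, ?_, ?_⟩
      · intro i
        have := hpres i
        rw [Function.update_of_ne (hex i)] at this ⊢
        exact this
      · intro i j
        have := hcol i j
        rw [Function.update_of_ne (hex i), Function.update_of_ne (hex j)] at this ⊢
        exact this

theorem Pr_cond {ι α β : Type*} [Fintype ι] [DecidableEq ι] [Fintype α] [Fintype β]
    {u : ι → α → ℝ} {v : ι → β → ℝ} (hu : ∀ i a, 0 ≤ u i a) (hv : ∀ i a, 0 ≤ v i a)
    (hu1 : ∀ i, ∑ a, u i a = 1) (hv1 : ∀ i, ∑ a, v i a = 1) (Q : (ι → α × β) → Prop)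
    (S : (ι → α) → Prop) (r : ℝ) (hr : 0 ≤ r)
    (h : ∀ g, ¬ S g → Pr (PW v) (fun h => Q (fun i => (g i, h i))) ≤ r) :
    Pr (PW fun i (a : α × β) => u i a.1 * v i a.2) Q ≤ Pr (PW u) S + r := by
  classical
  have e1 : Pr (PW fun i (a : α × β) => u i a.1 * v i a.2) Q =
      ∑ g, PW u g * Pr (PW v) (fun h => Q (fun i => (g i, h i))) := by
    unfold Pr
    rw [← Fintype.sum_equiv (Equiv.arrowProdEquivProdArrow ι (fun _ => α) (fun _ => β)).symm
      (fun x => if Q (fun i => (x.1 i, x.2 i)) then PW u x.1 * PW v x.2 else 0)]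
    · rw [Fintype.sum_prod_type]
      apply Finset.sum_congr rfl
      intro g _
      rw [Finset.mul_sum]
      apply Finset.sum_congr rfl
      intro k _
      simp only
      split_ifs <;> simp
    · intro x
      simp only [PW, ← Finset.prod_mul_distrib]
      rfl
  rw [e1]
  calc ∑ g, PW u g * Pr (PW v) (fun h => Q (fun i => (g i, h i)))
      ≤ ∑ g, ((if S g then PW u g else 0) + PW u g * r) := by
        apply Finset.sum_le_sum
        intro g _
        have hg := PW_nonneg hu g
        by_cases hS : S g
        · simp only [hS, if_true]
          have := Pr_le_one (PW_nonneg hv) (sum_PW hv1) (fun h => Q (fun i => (g i, h i)))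
          nlinarith [mul_nonneg hg hr]
        · simp only [hS, if_false, zero_add]
          exact mul_le_mul_of_nonneg_left (h g hS) hg
    _ = Pr (PW u) S + r := by
        rw [Finset.sum_add_distrib, ← Finset.sum_mul, sum_PW hu1, one_mul]
        rfl

theorem fail_bound (hn : 3 ≤ n) {q pb D : ℝ} (hD : 1 ≤ D) (hq : q = D / n) (hq1 : q ≤ 1)
    (hb0 : 0 ≤ pb) (hb1 : pb ≤ 1) (m : ℕ) (hm : 12 * m ≤ n) (hκ : n < κ) :
    Pr (PW fun _ : Sym2 (Fin n) => yw q pb κ) (fun f => ¬ Good f) ≤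
      4 ^ n * (1 - q) ^ (m * m) +
      (n * ((1 + n * pb) * (1 - pb * (1 - (2 * m + 1) / κ)) ^ (n - 12 * m - 1)) +
        D ^ n * Real.exp n * (1 - q) ^ (m * m / 2)) := by
  classical
  have hn' : (0 : ℝ) < n := by
    have : 0 < n := by omega
    exact_mod_cast this
  have hκ0 : 0 < κ := by omega
  have hκ' : (0 : ℝ) < κ := by exact_mod_cast hκ0
  have hq0 : 0 ≤ q := by rw [hq]; positivity
  have hKκ : (2 * (m : ℝ) + 1) / κ ≤ 1 := by
    rw [div_le_one hκ']
    have : 2 * m + 1 ≤ κ := by omega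
    exact_mod_cast this
  have hKκ0 : 0 ≤ (2 * (m : ℝ) + 1) / κ := by positivity
  have hρ0 : 0 ≤ 1 - pb * (1 - (2 * m + 1) / κ) := by nlinarith
  have hβ3 : 0 ≤ (1 + n * pb) * (1 - pb * (1 - (2 * m + 1) / κ)) ^ (n - 12 * m - 1) := by
    positivity
  have hβ4 : 0 ≤ D ^ n * Real.exp n * (1 - q) ^ (m * m / 2) :=
    mul_nonneg (by positivity) (pow_nonneg (by linarith) _)
  have hbw : ∀ a, 0 ≤ bw q a := bw_nonneg hq0 hq1
  have hkw : ∀ a, 0 ≤ kw pb κ a := kw_nonneg hb0 hb1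
  obtain ⟨R, -, hR⟩ := Finset.exists_subset_card_eq
    (s := (Finset.univ : Finset (Fin n))) (n := 9 * m) (by simp; omega)
  refine (Pr_cond (u := fun _ : Sym2 (Fin n) => bw q)
    (v := fun _ (a : (Bool × Fin κ) × Bool) => kw pb κ a.1 * bw q a.2)
    (fun _ => hbw) (fun _ a => mul_nonneg (hkw _) (hbw _)) (fun _ => bw_sum q) ?_
    (fun f => ¬ Good f) (fun h => ¬ Joined (eset h) m) _ (by positivity) ?_).trans
    (add_le_add_left (joined_bound hq0 hq1 m) _)
  · intro _
    rw [Fintype.sum_prod_type]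
    simp only [← Finset.mul_sum, bw_sum, mul_one, kw_sum pb hκ0]
  intro h1 hJ
  rw [not_not] at hJ
  obtain ⟨L, hLm, hL⟩ := core_exists hJ R hR.ge
  set A := Rᶜ \ L with hA
  have hAc : (n - 12 * m) + 2 * m ≤ A.card := by
    have h3 := Finset.le_card_sdiff L Rᶜ
    rw [Finset.card_compl, Fintype.card_fin, hR, ← hA] at h3
    omega
  have hLA : Disjoint L A := by
    rw [Finset.disjoint_left]
    intro a ha hb
    exact (Finset.mem_sdiff.1 hb).2 ha
  have hcb := cher_bound hb0 hb1 hκ0 A m (n - 12 * m) hAc (by omega) L hLA hLm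
  have hcb2 : Pr (PW fun _ : Sym2 (Fin n) => kw pb κ) (fun k => ¬ CherGood L A k) ≤
      n * ((1 + n * pb) * (1 - pb * (1 - (2 * m + 1) / κ)) ^ (n - 12 * m - 1)) := by
    refine hcb.trans (mul_le_mul_of_nonneg_right ?_ hβ3)
    have : L.card ≤ n := by omega
    exact_mod_cast this
  refine (Pr_cond (u := fun _ : Sym2 (Fin n) => kw pb κ) (v := fun _ => bw q)
    (fun _ => hkw) (fun _ => hbw) (fun _ => kw_sum pb hκ0) (fun _ => bw_sum q)
    (fun g => ¬ Good fun i => (h1 i, g i)) (fun k => ¬ CherGood L A k) _ hβ4 ?_).trans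
    (add_le_add_left hcb2 _)
  intro k hk
  rw [not_not] at hk
  obtain ⟨y, hy, hyi, hyc⟩ := hk
  have hy' : ∀ b ∈ L, ∀ i, y b i ∉ R ∧ y b i ∉ L := by
    intro b hb i
    have := Finset.mem_sdiff.1 (hy b hb i).1
    exact ⟨Finset.mem_compl.1 this.1, this.2⟩
  set Γ := eset h1 ∪ cher L y with hΓ
  have hboost : ∀ Δ : Finset (Sym2 (Fin n)), ∃ B : Finset (Sym2 (Fin n)), ¬ Ham (Γ ∪ Δ) →
      (∀ e ∈ B, e ∉ Γ ∪ Δ) ∧ m * m ≤ 2 * B.card ∧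
      ∀ e ∈ B, ∀ j, (∃ p, IsPath (Γ ∪ Δ) p j) →
        Ham (insert e (Γ ∪ Δ)) ∨ ∃ p, IsPath (insert e (Γ ∪ Δ)) p (j + 1) := by
    intro Δ
    by_cases hH : Ham (Γ ∪ Δ)
    · exact ⟨∅, fun h => absurd hH h⟩
    · have hsub : Γ ⊆ Γ ∪ Δ := Set.subset_union_left
      obtain ⟨B, hB⟩ := boosters (m := m) (by omega)
        (fun S hS => (cher_expand hL hy' hyi S hS).trans (Finset.card_le_card (nbr_mono hsub S)))
        (fun S hS hSu => (cher_conn hJ hL hy' S hS hSu).mono (nbr_mono hsub S)) hH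
      exact ⟨B, fun _ => hB⟩
  choose B hB using hboost
  refine (Pr_mono (PW_nonneg fun _ => hbw) ?_).trans
    (booster_bound (by omega) hD hq hq1 (m * m / 2) B)
  intro h2 hng
  by_contra hev
  apply hng
  set H : Finset (Sym2 (Fin n)) := Finset.univ.filter fun e => h2 e = true with hH
  have hham : Ham (Γ ∪ H) := by
    apply ham_of_boosters (by omega)
    intro Δ hΔ hΔc hnH
    obtain ⟨hb1, hb2, hb3⟩ := hB Δ hnH
    by_contra hno
    push Not at hno
    apply hev
    refine ⟨Δ, ⟨hΔc, ?_, by omega⟩, ?_, ?_⟩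
    · rw [Finset.disjoint_left]
      intro e he he2
      exact hb1 e he2 (Or.inr he)
    · intro e he
      exact (Finset.mem_filter.1 (hΔ he)).2
    · intro e he
      by_contra hne
      have heH : e ∈ H := Finset.mem_filter.2 ⟨Finset.mem_univ _, by simpa using hne⟩
      obtain ⟨j, hj, hj1, hj2⟩ := hno e heH
      rcases hb3 e he j hj with h | ⟨p, h⟩
      · exact hj1 h
      · exact hj2 p h
  obtain ⟨c, hc, hce⟩ := hham
  refine ⟨c, hc, ?_, ?_⟩
  · intro i
    rcases hce i with (h | ⟨b, hb, j, h⟩) | h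
    · exact Or.inl (Or.inl h)
    · right
      simp only
      rw [h]
      exact (hy b hb j).2
    · exact Or.inl (Or.inr (Finset.mem_filter.1 h).2)
  · have hcher : ∀ i, ¬ Free (κ := κ) (h1 s(c i, c (i + 1)), k s(c i, c (i + 1)),
        h2 s(c i, c (i + 1))) → s(c i, c (i + 1)) ∈ cher L y := by
      intro i hi
      rcases hce i with (h | h) | h
      · exact absurd (Or.inl h) hi
      · exact h
      · exact absurd (Or.inr (Finset.mem_filter.1 h).2) hi
    intro i j hi hj hcol
    obtain ⟨b, hb, x, h⟩ := hcher i hi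
    obtain ⟨b', hb', x', h'⟩ := hcher j hj
    simp only at hcol
    rw [h, h'] at hcol
    obtain ⟨e1, e2⟩ := hyc b hb x b' hb' x' hcol
    apply edge_inj hn hc.1
    rw [h, h', e1, e2]

end model
end RHC

namespace RHC

section meas
variable {n κ : ℕ}

theorem bern_singleton {p : ℝ} (h0 : 0 ≤ p) (h1 : p ≤ 1) (b : Bool) :
    bernoulliM p {b} = ENNReal.ofReal (bw p b) := by
  unfold bernoulliM
  rw [PMF.toMeasure_apply_singleton _ _ (MeasurableSet.singleton _), PMF.bernoulli_apply]
  have hm : min (Real.toNNReal p) 1 = Real.toNNReal p := min_eq_left (by simpa using h1)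
  cases b
  · simp [bw, hm, ENNReal.ofReal_sub _ h0]
    rfl
  · simp [bw, hm]
    rfl

theorem unif_singleton (hκ : 0 < κ) (c : Fin κ) :
    uniformOn (Finset.univ : Finset (Fin κ)) {c} = ENNReal.ofReal (1 / κ) := by
  unfold uniformOn
  have hne : (Finset.univ : Finset (Fin κ)).Nonempty := ⟨c, Finset.mem_univ _⟩
  rw [dif_pos hne, PMF.toMeasure_apply_singleton _ _ (MeasurableSet.singleton _),
    PMF.uniformOfFinset_apply]
  have : (0 : ℝ) < κ := by exact_mod_cast hκ
  simp [ENNReal.ofReal_inv_of_pos this]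

theorem gnp_singleton {p : ℝ} (h0 : 0 ≤ p) (h1 : p ≤ 1) (hκ : 0 < κ) (x : Sym2 (Fin n) → Bool)
    (c : Sym2 (Fin n) → Fin κ) :
    coloredGnp n κ p {(x, c)} = ENNReal.ofReal (∏ e, kw p κ (x e, c e)) := by
  unfold coloredGnp gnp colorM
  rw [← Set.singleton_prod_singleton, Measure.prod_prod, Measure.pi_singleton,
    Measure.pi_singleton, ← Finset.prod_mul_distrib, ENNReal.ofReal_prod_of_nonneg]
  · apply Finset.prod_congr rfl
    intro e _
    rw [bern_singleton h0 h1, unif_singleton hκ, ← ENNReal.ofReal_mul (bw_nonneg h0 h1 _)]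
    congr 1
    simp [kw, div_eq_mul_inv]
  · intro e _
    exact kw_nonneg h0 h1 _

theorem good_le_measure {p : ℝ} (h0 : 0 ≤ p) (h1 : p ≤ 1) (hκ : 0 < κ) :
    ENNReal.ofReal (Pr (PW fun _ : Sym2 (Fin n) => xw p κ) Good) ≤
      coloredGnp n κ p {x | IsRainbowHamCycle x.1 x.2} := by
  classical
  set φ : (Sym2 (Fin n) → Bool) × (Sym2 (Fin n) → Fin κ) → (Sym2 (Fin n) → St κ) :=
    fun z e => (false, (z.1 e, z.2 e), false) with hφ
  have hinj : Function.Injective φ := by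
    rintro ⟨x, c⟩ ⟨x', c'⟩ h
    have h' : ∀ e, x e = x' e ∧ c e = c' e := by
      intro e
      have := congrFun h e
      simpa [hφ] using this
    exact Prod.ext (funext fun e => (h' e).1) (funext fun e => (h' e).2)
  have hgood : ∀ z, Good (φ z) → IsRainbowHamCycle z.1 z.2 := by
    rintro z ⟨f, hf, hp, hc⟩
    have hnf : ∀ e, ¬ Free (φ z e) := by
      intro e
      simp [Free, hφ]
    refine ⟨f, hf, fun i => ?_, fun i j h => hc i j (hnf _) (hnf _) h⟩
    exact (hp i).resolve_left (hnf _)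
  have e1 : Pr (PW fun _ : Sym2 (Fin n) => xw p κ) Good =
      ∑ z, if Good (φ z) then ∏ e, kw p κ (z.1 e, z.2 e) else 0 := by
    unfold Pr
    symm
    apply Fintype.sum_of_injective φ hinj
    · intro f hf
      have : ∃ e, (f e).1 = true ∨ (f e).2.2 = true := by
        by_contra hno
        push Not at hno
        apply hf
        refine ⟨(fun e => (f e).2.1.1, fun e => (f e).2.1.2), ?_⟩
        funext e
        have := hno e
        simp only [hφ]
        ext <;> simp_all
      obtain ⟨e, he⟩ := this
      have : PW (fun _ : Sym2 (Fin n) => xw p κ) f = 0 := by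
        unfold PW
        apply Finset.prod_eq_zero (Finset.mem_univ e)
        unfold xw
        rcases he with he | he <;> simp [he]
      simp [this]
    · intro z
      simp [PW, xw, hφ]
  have hpos : ∀ z : (Sym2 (Fin n) → Bool) × (Sym2 (Fin n) → Fin κ),
      0 ≤ ∏ e, kw p κ (z.1 e, z.2 e) := fun z =>
    Finset.prod_nonneg fun e _ => kw_nonneg h0 h1 _
  rw [e1, ← Finset.sum_filter, ENNReal.ofReal_sum_of_nonneg (fun z _ => hpos z)]
  have e2 : ∀ z ∈ Finset.univ.filter (fun z => Good (φ z)),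
      ENNReal.ofReal (∏ e, kw p κ (z.1 e, z.2 e)) = coloredGnp n κ p {z} := by
    rintro ⟨x, c⟩ _
    rw [gnp_singleton h0 h1 hκ]
  rw [Finset.sum_congr rfl e2, sum_measure_singleton]
  apply measure_mono
  intro z hz
  exact hgood z (Finset.mem_filter.1 (Finset.mem_coe.1 hz)).2

theorem measure_le_one {p : ℝ} (hκ : 0 < κ) (S : Set _) : coloredGnp n κ p S ≤ 1 := by
  have : IsProbabilityMeasure (uniformOn (Finset.univ : Finset (Fin κ))) := by
    unfold uniformOn
    rw [dif_pos ⟨⟨0, hκ⟩, Finset.mem_univ _⟩]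
    infer_instance
  unfold coloredGnp gnp colorM
  exact prob_le_one

end meas
end RHC

namespace RHC

section asym

theorem pow_one_sub_le {q : ℝ} (h1 : q ≤ 1) (k : ℕ) : (1 - q) ^ k ≤ Real.exp (-(q * k)) := by
  calc (1 - q) ^ k ≤ (Real.exp (-q)) ^ k := by
        apply pow_le_pow_left₀ (by linarith)
        linarith [Real.add_one_le_exp (-q)]
    _ = Real.exp (-(q * k)) := by
        rw [← Real.exp_nat_mul]
        congr 1
        ring

theorem beta1 {n m : ℕ} {x l q : ℝ} (hn : 0 < (n : ℝ)) (hl : 100 ≤ l) (h5 : l ^ 5 ≤ x)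
    (hq : q = x / (n * l)) (hq1 : q ≤ 1) (hm : n / l ≤ m) :
    (4 : ℝ) ^ n * (1 - q) ^ (m * m) ≤ Real.exp (-n) := by
  have hl0 : 0 < l := by linarith
  have hx0 : 0 < x := lt_of_lt_of_le (by positivity) h5
  have h4 : (4 : ℝ) ≤ Real.exp 2 := by
    have := Real.quadratic_le_exp_of_nonneg (x := 2) (by norm_num)
    linarith
  have h4n : (4 : ℝ) ^ n ≤ Real.exp (2 * n) := by
    calc (4 : ℝ) ^ n ≤ (Real.exp 2) ^ n := pow_le_pow_left₀ (by norm_num) h4 n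
      _ = _ := by rw [← Real.exp_nat_mul]; congr 1; ring
  have hmm : (n / l) * (n / l) ≤ (m : ℝ) * m := by
    apply mul_le_mul hm hm (by positivity) (by positivity)
  have hqm : 3 * (n : ℝ) ≤ q * ((m * m : ℕ) : ℝ) := by
    have h6 : q * ((n / l) * (n / l)) = n * (x / l ^ 3) := by
      rw [hq]; field_simp
    have h7 : 3 ≤ x / l ^ 3 := by
      rw [le_div_iff₀ (by positivity)]
      have : 3 * l ^ 3 ≤ l ^ 5 := by
        have : 3 ≤ l ^ 2 := by nlinarith
        calc 3 * l ^ 3 ≤ l ^ 2 * l ^ 3 := by gcongr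
          _ = l ^ 5 := by ring
      linarith
    have h8 : q * ((n / l) * (n / l)) ≤ q * ((m : ℝ) * m) :=
      mul_le_mul_of_nonneg_left hmm (by rw [hq]; positivity)
    push_cast
    nlinarith
  calc (4 : ℝ) ^ n * (1 - q) ^ (m * m)
      ≤ Real.exp (2 * n) * Real.exp (-(q * ((m * m : ℕ) : ℝ))) :=
        mul_le_mul h4n (pow_one_sub_le hq1 _) (pow_nonneg (by linarith) _) (Real.exp_nonneg _)
    _ = Real.exp (2 * n + -(q * ((m * m : ℕ) : ℝ))) := by rw [Real.exp_add]
    _ ≤ Real.exp (-n) := Real.exp_le_exp.2 (by linarith)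

theorem beta4 {n m : ℕ} {x l q : ℝ} (hn : 1 ≤ (n : ℝ)) (hl : 100 ≤ l) (h5 : l ^ 5 ≤ x)
    (hxl : x = Real.exp l)
    (hq : q = x / (n * l)) (hq1 : q ≤ 1) (hm : n / l ≤ m) :
    (x / l) ^ n * Real.exp n * (1 - q) ^ (m * m / 2) ≤ Real.exp (-n) := by
  have hl0 : 0 < l := by linarith
  have hn0 : 0 < (n : ℝ) := by linarith
  have hx0 : 0 < x := lt_of_lt_of_le (by positivity) h5
  have hD : x / l ≤ Real.exp l := by
    rw [← hxl]
    exact div_le_self hx0.le (by linarith)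
  have hDn : (x / l) ^ n ≤ Real.exp (n * l) := by
    calc (x / l) ^ n ≤ (Real.exp l) ^ n := pow_le_pow_left₀ (by positivity) hD n
      _ = _ := by rw [← Real.exp_nat_mul]
  have hmm : (n / l) * (n / l) ≤ (m : ℝ) * m := by
    apply mul_le_mul hm hm (by positivity) (by positivity)
  have hq0 : 0 ≤ q := by rw [hq]; positivity
  have hhalf : ((m : ℝ) * m - 1) / 2 ≤ ((m * m / 2 : ℕ) : ℝ) := by
    have : m * m ≤ 2 * (m * m / 2) + 1 := by omega
    have h : ((m * m : ℕ) : ℝ) ≤ ((2 * (m * m / 2) + 1 : ℕ) : ℝ) := by exact_mod_cast this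
    push_cast at h
    have e : ((m * m / 2 : ℕ) : ℝ) = ((m * m / 2 : ℕ) : ℝ) := rfl
    linarith
  have hqm : n * (l + 3) ≤ q * ((m * m / 2 : ℕ) : ℝ) := by
    have h6 : q * ((n / l) * (n / l)) = n * (x / l ^ 3) := by
      rw [hq]; field_simp
    have h7 : 2 * l + 8 ≤ x / l ^ 3 := by
      rw [le_div_iff₀ (by positivity)]
      have : (2 * l + 8) * l ^ 3 ≤ l ^ 5 := by
        have : 2 * l + 8 ≤ l ^ 2 := by nlinarith
        calc (2 * l + 8) * l ^ 3 ≤ l ^ 2 * l ^ 3 := by gcongr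
          _ = l ^ 5 := by ring
      linarith
    have h8 : q * ((n / l) * (n / l)) ≤ q * ((m : ℝ) * m) :=
      mul_le_mul_of_nonneg_left hmm hq0
    have h9 := mul_le_mul_of_nonneg_left hhalf hq0
    have h10 : n * (2 * l + 8) ≤ n * (x / l ^ 3) := mul_le_mul_of_nonneg_left h7 hn0.le
    nlinarith
  calc (x / l) ^ n * Real.exp n * (1 - q) ^ (m * m / 2)
      ≤ Real.exp (n * l) * Real.exp n * Real.exp (-(q * ((m * m / 2 : ℕ) : ℝ))) :=
        mul_le_mul (mul_le_mul_of_nonneg_right hDn (Real.exp_nonneg _)) (pow_one_sub_le hq1 _)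
          (pow_nonneg (by linarith) _) (by positivity)
    _ = Real.exp (n * l + n + -(q * ((m * m / 2 : ℕ) : ℝ))) := by
        rw [Real.exp_add, Real.exp_add]
    _ ≤ Real.exp (-n) := Real.exp_le_exp.2 (by nlinarith)

set_option maxHeartbeats 1000000 in
theorem beta3 {n m κ : ℕ} {x l s pb : ℝ} (hl : 100 ≤ l) (h5 : l ^ 5 ≤ x) (hxn : 2 * x ≤ n)
    (hs : 0 < s) (hsl : s ^ 2 = l) (hxe : (n : ℝ) = Real.exp x) (hxl : x = Real.exp l)
    (hpb : pb = (1 + 50 / s) * x / n) (hpb1 : pb ≤ 1) (hm : (m : ℝ) ≤ n / l + 1)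
    (hm12 : 12 * m + 1 ≤ n) (hκ : n ≤ κ) :
    n * ((1 + n * pb) * (1 - pb * (1 - (2 * m + 1) / κ)) ^ (n - 12 * m - 1)) ≤ 52 / x := by
  have hl0 : 0 < l := by linarith
  have hl5 : 100 * l ≤ l ^ 5 := by
    have : 100 ≤ l ^ 4 := hl.trans (le_self_pow₀ (by linarith) (by norm_num))
    calc 100 * l ≤ l ^ 4 * l := by gcongr
      _ = l ^ 5 := by ring
  have hx0 : 0 < x := by linarith
  have hn0 : 0 < (n : ℝ) := by linarith
  have hκ' : (n : ℝ) ≤ κ := by exact_mod_cast hκ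
  have hκ0 : 0 < (κ : ℝ) := by linarith
  have hs10 : 10 ≤ s := by
    by_contra h
    push Not at h
    nlinarith only [hsl, hl, h, hs]
  set u := 1 / s with hu
  have hu0 : 0 < u := by positivity
  have hu1 : u ≤ 1 / 10 := by
    rw [hu]
    exact one_div_le_one_div_of_le (by norm_num) hs10
  have hul : 1 / l = u ^ 2 := by
    rw [← hsl, hu]; field_simp
  have hpbn : n * pb = (1 + 50 * u) * x := by
    rw [hpb, hu]; field_simp
  have hpb0 : 0 ≤ pb := by rw [hpb]; positivity
  have hnl : 13 * l ≤ n := by linarith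
  have hdiv : (m : ℝ) / n ≤ u ^ 2 + 1 / n := by
    rw [← hul, div_le_iff₀ hn0]
    have : (1 / l + 1 / n) * n = n / l + 1 := by field_simp
    linarith
  have h1n : 13 * (1 / (n : ℝ)) ≤ u ^ 2 := by
    rw [← hul]
    rw [mul_one_div, div_le_div_iff₀ hn0 hl0]
    linarith
  have hKκ : (2 * (m : ℝ) + 1) / κ ≤ 3 * u ^ 2 := by
    calc (2 * (m : ℝ) + 1) / κ ≤ (2 * m + 1) / n := by
          apply div_le_div_of_nonneg_left (by positivity) hn0 hκ'
      _ = 2 * (m / n) + 1 / n := by ring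
      _ ≤ 3 * u ^ 2 := by
        have : 0 < 1 / (n : ℝ) := by positivity
        linarith
  have hu2 : u ^ 2 ≤ 1 / 100 := by nlinarith only [hu0, hu1]
  set k := n - 12 * m - 1 with hk
  have hkn : n * (1 - 13 * u ^ 2) ≤ (k : ℝ) := by
    have : (k : ℝ) = n - 12 * m - 1 := by
      rw [hk, Nat.cast_sub (by omega), Nat.cast_sub (by omega)]
      push_cast
      ring
    rw [this]
    have e : (n : ℝ) - 12 * m - 1 = n * (1 - 12 * (m / n) - 1 / n) := by field_simp
    rw [e]
    apply mul_le_mul_of_nonneg_left _ hn0.le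
    linarith
  set q := pb * (1 - (2 * m + 1) / κ) with hq
  have hKκ0 : 0 ≤ (2 * (m : ℝ) + 1) / κ := by positivity
  have hq1 : q ≤ 1 := by rw [hq]; nlinarith only [hpb0, hpb1, hKκ0]
  have hexp : x + 2 * l ≤ q * k := by
    have a1 : pb * (1 - 3 * u ^ 2) ≤ q := by
      rw [hq]
      apply mul_le_mul_of_nonneg_left _ hpb0
      linarith
    have a2 : pb * (1 - 3 * u ^ 2) * (n * (1 - 13 * u ^ 2)) ≤ q * k := by
      apply mul_le_mul a1 hkn
      · apply mul_nonneg hn0.le; linarith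
      · exact le_trans (mul_nonneg hpb0 (by linarith)) a1
    have a3 : pb * (1 - 3 * u ^ 2) * (n * (1 - 13 * u ^ 2)) =
        x * ((1 + 50 * u) * ((1 - 3 * u ^ 2) * (1 - 13 * u ^ 2))) := by
      calc pb * (1 - 3 * u ^ 2) * (n * (1 - 13 * u ^ 2))
          = (n * pb) * ((1 - 3 * u ^ 2) * (1 - 13 * u ^ 2)) := by ring
        _ = _ := by rw [hpbn]; ring
    have a4 : 1 + u ≤ (1 + 50 * u) * ((1 - 3 * u ^ 2) * (1 - 13 * u ^ 2)) := by
      have b1 : 1 - 16 * u ^ 2 ≤ (1 - 3 * u ^ 2) * (1 - 13 * u ^ 2) := by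
        nlinarith only [sq_nonneg (u ^ 2)]
      have b2 : 1 + u ≤ (1 + 50 * u) * (1 - 16 * u ^ 2) := by
        have : (1 + 50 * u) * (1 - 16 * u ^ 2) = 1 + u + u * (49 - 16 * u - 800 * u ^ 2) := by ring
        rw [this]
        have : 0 ≤ u * (49 - 16 * u - 800 * u ^ 2) := mul_nonneg hu0.le (by linarith)
        linarith
      exact b2.trans (mul_le_mul_of_nonneg_left b1 (by positivity))
    have a5 : 2 * l ≤ x * u := by
      rw [hu, mul_one_div, le_div_iff₀ hs]
      have : s ≤ l := by
        rw [← hsl]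
        exact le_self_pow₀ (by linarith) (by norm_num)
      have h6 : 2 * l * s ≤ 2 * l * l := by gcongr
      have h7 : 2 * l * l ≤ l ^ 5 := by
        have : 2 ≤ l ^ 3 := (by linarith : (2 : ℝ) ≤ l).trans
          (le_self_pow₀ (by linarith) (by norm_num))
        calc 2 * l * l = 2 * l ^ 2 := by ring
          _ ≤ l ^ 3 * l ^ 2 := by gcongr
          _ = l ^ 5 := by ring
      linarith
    have a6 := mul_le_mul_of_nonneg_left a4 hx0.le
    rw [← a3] at a6
    linarith
  have hfin : (1 - q) ^ k ≤ 1 / (n * x ^ 2) := by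
    refine (pow_one_sub_le hq1 k).trans ?_
    calc Real.exp (-(q * k)) ≤ Real.exp (-(x + 2 * l)) := Real.exp_le_exp.2 (by linarith)
      _ = 1 / (n * x ^ 2) := by
        rw [Real.exp_neg, Real.exp_add, ← hxe, two_mul, Real.exp_add, ← hxl, one_div]
        ring_nf
  calc n * ((1 + n * pb) * (1 - q) ^ k) ≤ n * ((52 * x) * (1 / (n * x ^ 2))) := by
        apply mul_le_mul_of_nonneg_left _ hn0.le
        apply mul_le_mul _ hfin (pow_nonneg (by linarith) _) (by positivity)
        rw [hpbn]
        have : u * x ≤ 1 / 10 * x := mul_le_mul_of_nonneg_right hu1 hx0.le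
        linarith
    _ = 52 / x := by field_simp

end asym
end RHC

namespace RHC

section final

set_option maxHeartbeats 4000000 in
theorem single_n {n : ℕ} {ε θ : ℝ} (hl : 100 ≤ Real.log (Real.log n))
    (h5 : Real.log (Real.log n) ^ 5 ≤ Real.log n)
    (hε : 100 / Real.sqrt (Real.log (Real.log n)) < ε) (hε1 : ε ≤ 1)
    (hθ : 100 / Real.sqrt (Real.log (Real.log n)) < θ) (hθ1 : θ ≤ 1) :
    ENNReal.ofReal (1 - 54 / Real.log n) ≤
      coloredGnp n ⌈(1 + θ) * n⌉₊ ((1 + ε) * Real.log n / n) {x | IsRainbowHamCycle x.1 x.2} ∧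
    coloredGnp n ⌈(1 + θ) * n⌉₊ ((1 + ε) * Real.log n / n) {x | IsRainbowHamCycle x.1 x.2} ≤ 1 := by
  set x := Real.log n with hx
  set l := Real.log x with hldef
  set s := Real.sqrt l with hs
  have hl0 : 0 < l := by linarith
  have hs0 : 0 < s := Real.sqrt_pos.2 hl0
  have hsl : s ^ 2 = l := Real.sq_sqrt hl0.le
  have hl5 : 100 * l ≤ l ^ 5 := by
    have : 100 ≤ l ^ 4 := hl.trans (le_self_pow₀ (by linarith) (by norm_num))
    calc 100 * l ≤ l ^ 4 * l := by gcongr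
      _ = l ^ 5 := by ring
  have hx0 : 0 < x := by linarith
  have hx100 : 10000 ≤ x := by linarith
  have hn0 : 0 < (n : ℝ) := by
    rcases Nat.eq_zero_or_pos n with h | h
    · rw [h] at hx
      simp at hx
      linarith
    · exact_mod_cast h
  have hxe : (n : ℝ) = Real.exp x := (Real.exp_log hn0).symm
  have hxl : x = Real.exp l := (Real.exp_log hx0).symm
  have hxn : 2 * x ≤ n := by
    rw [hxe]
    have := Real.quadratic_le_exp_of_nonneg hx0.le
    nlinarith
  have hn3 : 3 ≤ n := by
    have : (3 : ℝ) ≤ n := by linarith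
    exact_mod_cast this
  have hs10 : 10 ≤ s := by
    by_contra h
    push Not at h
    nlinarith only [hsl, hl, h, hs0]
  set κ := ⌈(1 + θ) * n⌉₊ with hκdef
  have hinv : 0 < 100 / s := by positivity
  have hθ0 : 0 < θ := by linarith
  have hε0 : 0 < ε := by linarith
  have hκ1 : (1 + θ) * n ≤ κ := Nat.le_ceil _
  have hκ2 : (κ : ℝ) < (1 + θ) * n + 1 := Nat.ceil_lt_add_one (by positivity)
  have hκn : n < κ := by
    have : (n : ℝ) < κ := by nlinarith
    exact_mod_cast this
  have hκ0 : 0 < κ := by omega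
  have hκ0' : (0 : ℝ) < κ := by exact_mod_cast hκ0
  have hκ3 : (κ : ℝ) ≤ 3 * n := by nlinarith
  set q := x / (n * l) with hq
  set D := x / l with hD
  set pb := (1 + 50 / s) * x / n with hpb
  set p := (1 + ε) * x / n with hp
  set m := ⌈(n : ℝ) / l⌉₊ with hm
  have hm1 : n / l ≤ (m : ℝ) := Nat.le_ceil _
  have hm2 : (m : ℝ) ≤ n / l + 1 := (Nat.ceil_lt_add_one (by positivity)).le
  have hm12 : 12 * m + 1 ≤ n := by
    have h1 : (n : ℝ) / l ≤ n / 100 := div_le_div_of_nonneg_left hn0.le (by norm_num) hl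
    have : (12 * (m : ℝ) + 1) ≤ n := by linarith
    exact_mod_cast this
  have hD1 : 1 ≤ D := by
    rw [hD, le_div_iff₀ hl0]
    linarith
  have hqD : q = D / n := by
    rw [hq, hD]; field_simp
  have hq0 : 0 ≤ q := by positivity
  have hq1 : q ≤ 1 := by
    rw [hq, div_le_one (by positivity)]
    nlinarith
  have hpb0 : 0 ≤ pb := by positivity
  have h50 : 50 / s = 100 / s / 2 := by ring
  have hbp : pb ≤ p := by
    rw [hpb, hp]
    gcongr
    linarith
  have hp0 : 0 ≤ p := hpb0.trans hbp
  have hp1 : p ≤ 1 := by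
    rw [hp, div_le_one hn0]
    nlinarith
  have hyp : 2 * q ≤ (p - pb) * (((κ - n : ℕ) : ℝ) / κ) := by
    have e1 : (50 / s) * x / n ≤ p - pb := by
      have : p - pb = (ε - 50 / s) * x / n := by rw [hp, hpb]; ring
      rw [this]
      gcongr
      linarith
    have e2 : (100 / s) / 3 ≤ (((κ - n : ℕ) : ℝ) / κ) := by
      rw [Nat.cast_sub hκn.le, div_le_div_iff₀ (by norm_num) hκ0']
      have h1 : 100 / s * κ ≤ 100 / s * (3 * n) := mul_le_mul_of_nonneg_left hκ3 hinv.le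
      have h2 : 100 / s * n ≤ θ * n := mul_le_mul_of_nonneg_right hθ.le hn0.le
      nlinarith
    calc 2 * q ≤ ((50 / s) * x / n) * ((100 / s) / 3) := by
          have : ((50 / s) * x / n) * ((100 / s) / 3) = 5000 / 3 * q := by
            rw [hq, ← hsl]; field_simp; norm_num
          rw [this]
          linarith
      _ ≤ _ := mul_le_mul e1 e2 (by positivity) (by linarith)
  have hcmp := compare_models hn3 hq0 hq1 hpb0 hbp hp1 hκ0 (κ - n) (by omega) hyp
  have hfail := fail_bound hn3 hD1 hqD hq1 hpb0 (hbp.trans hp1) m (by omega) hκn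
  have hb1 := beta1 hn0 hl h5 hq hq1 hm1
  have hb3 := beta3 hl h5 hxn hs0 hsl hxe hxl hpb (hbp.trans hp1) hm2 hm12 hκn.le
  have hb4 := beta4 (by linarith) hl h5 hxl hq hq1 hm1
  have hexp : Real.exp (-n) ≤ 1 / x := by
    rw [Real.exp_neg, ← one_div]
    apply one_div_le_one_div_of_le hx0
    linarith [Real.add_one_le_exp (n : ℝ)]
  have hysum : ∑ a, yw q pb κ a = 1 := by
    have h1 : ∑ i : (Bool × Fin κ) × Bool, kw pb κ i.1 * bw q i.2 = 1 := by
      rw [Fintype.sum_prod_type]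
      simp only [← Finset.mul_sum, bw_sum, mul_one]
      exact kw_sum pb hκ0
    unfold yw
    rw [Fintype.sum_prod_type]
    simp only [← Finset.mul_sum]
    rw [h1]
    simp only [mul_one]
    exact bw_sum _
  have hnot := Pr_not (sum_PW fun _ : Sym2 (Fin n) => hysum) Good
  have htot : 1 - 54 / x ≤ Pr (PW fun _ : Sym2 (Fin n) => xw p κ) Good := by
    have : 54 / x = 1 / x + (52 / x + 1 / x) := by ring
    linarith
  exact ⟨(ENNReal.ofReal_le_ofReal htot).trans (good_le_measure hp0 hp1 hκ0), measure_le_one hκ0 _⟩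

end final
end RHC

/-- If `100/√(log log n) < ε, θ ≤ 1`, `p = (1+ε)·log n / n` and
`κ = ⌈(1+θ)n⌉`, then `G_{n,p,κ}` contains a rainbow Hamilton cycle whp. -/
theorem rainbow_ham_first_order (ε θ : ℕ → ℝ)
    (hε : ∀ᶠ n : ℕ in atTop,
      100 / Real.sqrt (Real.log (Real.log n)) < ε n ∧ ε n ≤ 1)
    (hθ : ∀ᶠ n : ℕ in atTop,
      100 / Real.sqrt (Real.log (Real.log n)) < θ n ∧ θ n ≤ 1) :
    Tendsto
      (fun n : ℕ =>
        coloredGnp n ⌈(1 + θ n) * n⌉₊ ((1 + ε n) * Real.log n / n)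
          {x | IsRainbowHamCycle x.1 x.2})
      atTop (nhds 1) := by
  have hlog : Tendsto (fun n : ℕ => Real.log n) atTop atTop :=
    Real.tendsto_log_atTop.comp tendsto_natCast_atTop_atTop
  have hll : Tendsto (fun n : ℕ => Real.log (Real.log n)) atTop atTop :=
    Real.tendsto_log_atTop.comp hlog
  have h5 : ∀ᶠ x : ℝ in atTop, Real.log x ^ 5 ≤ x := by
    have h := (Real.isLittleO_pow_log_id_atTop (n := 5)).bound (c := 1) one_pos
    filter_upwards [h, eventually_ge_atTop 0] with x hx hx0
    simp only [id, Real.norm_eq_abs, one_mul, abs_of_nonneg hx0] at hx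
    exact (le_abs_self _).trans hx
  have hlim : Tendsto (fun n : ℕ => ENNReal.ofReal (1 - 54 / Real.log n)) atTop (nhds 1) := by
    have : Tendsto (fun n : ℕ => 1 - 54 / Real.log n) atTop (nhds (1 - 0)) :=
      tendsto_const_nhds.sub (hlog.const_div_atTop 54)
    have h := ENNReal.tendsto_ofReal this
    simpa using h
  have hall := (hlog.eventually h5).and ((hll.eventually_ge_atTop 100).and (hε.and hθ))
  refine tendsto_of_tendsto_of_tendsto_of_le_of_le' hlim tendsto_const_nhds ?_ ?_
  · filter_upwards [hall] with n hn
    exact (RHC.single_n hn.2.1 hn.1 hn.2.2.1.1 hn.2.2.1.2 hn.2.2.2.1 hn.2.2.2.2).1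
  · filter_upwards [hall] with n hn
    exact (RHC.single_n hn.2.1 hn.1 hn.2.2.1.1 hn.2.2.1.2 hn.2.2.2.1 hn.2.2.2.2).2
end
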